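/- arXiv:2407.08438 — 9 statements merged into one kernel-verified Lean document; each statement's English description precedes it below -/
import Mathlib

section
/- Let K and L be number fields, let k, l ≥ 1 be integers, and let A : 𝓞_K → 𝓞_L be a ℤ-linear map such that for every prime number p the induced map 𝓞_K/p^k𝓞_K → 𝓞_L/p^l𝓞_L satisfies A(V_{K,k,p}) ⊆ V_{L,l,p} (equivalently: for every x ∈ 𝓞_K with x ∉ 𝔭^k for all primes 𝔭 ∣ p of K, one has A(x) ∉ 𝔮^l for all primes 𝔮 ∣ p of L). Then there exist a field embedding τ : K → L and an element ε ∈ 𝓞_L such that A(x) = ε·τ(x) for all x ∈ 𝓞_K. If moreover A is bijective, then τ is a field isomorphism and ε ∈ 𝓞_L^× is a unit. -/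
open NumberField

/-!
Let `M ⊇ L` be a number field containing all conjugates of `K`. By linear independence of
embeddings, `A = ∑ σ, ε σ * σ` with `σ` running over the embeddings `K → M`. It suffices that at
most one `ε σ` is nonzero: evaluating at `1` then gives `A x = A 1 * σ x`, so `σ` takes values
in `L`.

Suppose that `ε σ` and `ε τ` are nonzero for some `σ ≠ τ`. A polynomial over `ℤ` has roots modulo
infinitely many primes (Schur), so by Hensel's lemma there are infinitely many `p` with a ring
homomorphism `φ : 𝓞 M → ℤ_[p]` under which any given nonzero element becomes a unit. Take that
element divisible by the two coefficients, by a common denominator of all coefficients, by the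
differences separating the embeddings, and by `2`, so that every element of `ℤ_[p]` is a sum of
two units. The Chinese remainder theorem then prescribes all `φ (σ x)` modulo `p ^ n`
independently, and they can be chosen to be units with `∑ σ, φ (ε σ) * φ (σ x)` divisible by
`p ^ n`. Such an `x` is prime to `p` because its norm is, while `A x` lies in `Q ^ n` for the
prime `Q` of `𝓞 L` above `p` cut out by `φ`.
-/

section PolynomialRoots

open Polynomial

theorem exists_prime_dvd_eval_and_not_dvd {f : ℤ[X]} (hf : 0 < f.natDegree) {b : ℤ} (hb : b ≠ 0) :
    ∃ p : ℕ, p.Prime ∧ ¬ (p : ℤ) ∣ b ∧ ∃ n : ℤ, (p : ℤ) ∣ f.eval n := by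
  have hf0 : f ≠ 0 := ne_zero_of_natDegree_gt hf
  obtain ⟨n₀, hn₀⟩ : ∃ n₀, f.eval n₀ ≠ 0 := exists_eval_ne_zero_of_natDegree_lt_card f hf0 (by simp)
  set c := f.eval n₀
  -- Excluding the roots of `f ^ 2 - c ^ 2` keeps the cofactor of `c = f(n₀)` away from `±1`.
  have hsq : f ^ 2 - C (c ^ 2) ≠ 0 := ne_zero_of_natDegree_gt (n := 0) <| by
    rw [natDegree_sub_C, natDegree_pow]; positivity
  have hinj : Function.Injective fun m : ℤ ↦ n₀ + c * b * m := fun x y hxy ↦ by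
    simpa [hn₀, hb] using hxy
  obtain ⟨_, ⟨m, rfl⟩, hm⟩ := (Set.infinite_range_of_injective hinj).exists_notMem_finite
    (finite_setOfPred_isRoot hsq)
  obtain ⟨t, ht⟩ := sub_dvd_eval_sub (n₀ + c * b * m) n₀ f
  have hval : f.eval (n₀ + c * b * m) = c * (1 + b * m * t) := by linear_combination ht
  have hu : (1 + b * m * t).natAbs ≠ 1 := fun h ↦ hm <| by
    have : (1 + b * m * t) ^ 2 = 1 ^ 2 := Int.natAbs_eq_iff_sq_eq.mp h
    simp [hval, mul_pow, this]
  obtain ⟨p, hp, hpu⟩ := Nat.exists_prime_and_dvd hu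
  rw [← Int.natCast_dvd] at hpu
  refine ⟨p, hp, fun hpb ↦ ?_, _, hval ▸ hpu.mul_left c⟩
  rw [dvd_add_left ((hpb.mul_right m).mul_right t)] at hpu
  exact (Nat.prime_iff_prime_int.mp hp).not_dvd_one hpu

theorem resultant_ne_zero_of_isCoprime_map {R K : Type*} [CommRing R] [Field K] {φ : R →+* K}
    (hφ : Function.Injective φ) {f g : R[X]} (h : IsCoprime (f.map φ) (g.map φ)) :
    resultant f g ≠ 0 := by
  have := resultant_ne_zero _ _ h
  rw [natDegree_map_eq_of_injective hφ, natDegree_map_eq_of_injective hφ, resultant_map_map] at this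
  exact fun h0 ↦ this (by rw [h0, map_zero])

theorem isUnit_padicInt_intCast_iff {p : ℕ} [Fact p.Prime] {z : ℤ} :
    IsUnit (z : ℤ_[p]) ↔ ¬ (p : ℤ) ∣ z := by
  rw [← PadicInt.norm_int_lt_one_iff_dvd, ← PadicInt.not_isUnit_iff, not_not]

theorem exists_padicInt_root {f : ℤ[X]} (hf : 0 < f.natDegree)
    (hsep : (f.map (algebraMap ℤ ℚ)).Separable) {b : ℤ} (hb : b ≠ 0) :
    ∃ (p : ℕ) (_ : Fact p.Prime), ¬ (p : ℤ) ∣ b ∧ ∃ z : ℤ_[p], aeval z f = 0 := by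
  rw [separable_def, derivative_map] at hsep
  have hres : resultant f (derivative f) ≠ 0 :=
    resultant_ne_zero_of_isCoprime_map (algebraMap ℤ ℚ).injective_int hsep
  obtain ⟨u, v, -, -, huv⟩ :=
    exists_mul_add_mul_eq_C_resultant f (derivative f) le_rfl le_rfl (.inl hf.ne')
  obtain ⟨p, hp, hpb, n, hpn⟩ := exists_prime_dvd_eval_and_not_dvd hf (mul_ne_zero hb hres)
  have : Fact p.Prime := ⟨hp⟩
  have hder : ¬ (p : ℤ) ∣ (derivative f).eval n := fun h ↦ hpb <| by
    have heval := congrArg (eval n) huv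
    simp only [eval_add, eval_mul, eval_C] at heval
    exact heval ▸ ((hpn.mul_right _).add (h.mul_right _)).mul_left b
  have haeval (q : ℤ[X]) : aeval (n : ℤ_[p]) q = (q.eval n : ℤ) := by
    simpa using aeval_algebraMap_apply ℤ_[p] n q
  obtain ⟨z, hz, -⟩ := hensels_lemma (F := f) (a := (n : ℤ_[p])) <| by
    rw [haeval, haeval, PadicInt.isUnit_iff.mp (isUnit_padicInt_intCast_iff.mpr hder), one_pow]
    exact (PadicInt.norm_int_lt_one_iff_dvd _).mpr hpn
  exact ⟨p, this, fun h ↦ hpb (h.mul_right _), z, hz⟩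

end PolynomialRoots

section PadicEmbeddings

open Polynomial

theorem exists_ringHom_padic (M : Type*) [Field M] [NumberField M] {b : ℤ} (hb : b ≠ 0) :
    ∃ (p : ℕ) (_ : Fact p.Prime), ¬ (p : ℤ) ∣ b ∧ Nonempty (M →+* ℚ_[p]) := by
  let pb := Field.powerBasisOfFiniteOfSeparable ℚ M
  obtain ⟨e, he, hfe⟩ :=
    IsLocalization.integerNormalization_spec (nonZeroDivisors ℤ) (minpoly ℚ pb.gen)
  set f := IsLocalization.integerNormalization (nonZeroDivisors ℤ) (minpoly ℚ pb.gen)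
  have he0 : (e : ℚ) ≠ 0 := Int.cast_ne_zero.mpr (nonZeroDivisors.ne_zero he)
  rw [← Int.cast_smul_eq_zsmul ℚ, smul_eq_C_mul] at hfe
  have hdeg : 0 < f.natDegree := by
    rw [← natDegree_map_eq_of_injective (algebraMap ℤ ℚ).injective_int, hfe, natDegree_C_mul he0]
    exact minpoly.natDegree_pos (Algebra.IsIntegral.isIntegral _)
  have hsep : (f.map (algebraMap ℤ ℚ)).Separable :=
    hfe ▸ (Algebra.IsSeparable.isSeparable ℚ pb.gen).unit_mul (isUnit_C.mpr he0.isUnit)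
  obtain ⟨p, hp, hpb, z, hz⟩ := exists_padicInt_root hdeg hsep hb
  have hroot : aeval (z : ℚ_[p]) (minpoly ℚ pb.gen) = 0 := by
    have hz' : aeval (algebraMap ℤ_[p] ℚ_[p] z) (f.map (algebraMap ℤ ℚ)) = 0 := by
      rw [aeval_map_algebraMap, aeval_algebraMap_apply, hz, map_zero]
    rw [hfe, map_mul, aeval_C, mul_eq_zero] at hz'
    exact hz'.resolve_left (by simpa using he0)
  exact ⟨p, hp, hpb, ⟨(pb.lift (z : ℚ_[p]) hroot).toRingHom⟩⟩

theorem norm_le_one_of_isIntegral_int {p : ℕ} [Fact p.Prime] {x : ℚ_[p]} (hx : IsIntegral ℤ x) :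
    ‖x‖ ≤ 1 := by
  obtain ⟨y, rfl⟩ := IsIntegrallyClosed.isIntegral_iff.mp (hx.tower_top (A := ℤ_[p]))
  exact y.2

theorem dvd_algebraMap_norm {A B : Type*} [CommRing A] [IsDomain A] [IsIntegrallyClosed A]
    [CommRing B] [IsDomain B] [IsIntegrallyClosed B] [Algebra A B] [Module.Free A B]
    [Module.Finite A B] (x : B) : x ∣ algebraMap A B (Algebra.norm A x) := by
  rw [← Algebra.intNorm_eq_norm]
  exact Algebra.dvd_algebraMap_intNorm_self A B x

theorem exists_ringHom_padicInt_isUnit {M : Type*} [Field M] [NumberField M] {β : 𝓞 M}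
    (hβ : β ≠ 0) : ∃ (p : ℕ) (_ : Fact p.Prime) (φ : 𝓞 M →+* ℤ_[p]), IsUnit (φ β) := by
  have hnorm : Algebra.norm ℤ β ≠ 0 := Algebra.norm_ne_zero_iff.mpr hβ
  obtain ⟨p, hp, hpβ, ⟨Φ⟩⟩ := exists_ringHom_padic M hnorm
  let φ : 𝓞 M →+* ℤ_[p] := (Φ.comp (algebraMap (𝓞 M) M)).codRestrict (PadicInt.subring p)
    fun x ↦ norm_le_one_of_isIntegral_int (x.isIntegral_coe.map Φ.toIntAlgHom)
  have hdvd : φ β ∣ (Algebra.norm ℤ β : ℤ) := by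
    simpa using map_dvd φ (dvd_algebraMap_norm (A := ℤ) β)
  exact ⟨p, hp, φ, isUnit_of_dvd_unit hdvd (isUnit_padicInt_intCast_iff.mpr hpβ)⟩

theorem absNorm_comap_span_prime_pow {S : Type*} [CommRing S] [IsDedekindDomain S]
    [Module.Free ℤ S] {p : ℕ} [Fact p.Prime] (φ : S →+* ℤ_[p]) (n : ℕ) :
    Ideal.absNorm ((Ideal.span {(p : ℤ_[p]) ^ n}).comap φ) = p ^ n := by
  rw [← PadicInt.ker_toZModPow, RingHom.comap_ker, Ideal.absNorm_apply, Submodule.cardQuot_apply,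
    Nat.card_congr (RingHom.quotientKerEquivOfSurjective (ZMod.ringHom_surjective _)).toEquiv,
    Nat.card_zmod]

theorem comap_span_prime_pow {S : Type*} [CommRing S] [IsDedekindDomain S]
    [Module.Free ℤ S] {p : ℕ} [hp : Fact p.Prime] (φ : S →+* ℤ_[p]) (n : ℕ) :
    (Ideal.span {(p : ℤ_[p]) ^ n}).comap φ = (Ideal.span {(p : ℤ_[p])}).comap φ ^ n := by
  -- One inclusion is formal; the two ideals agree because both have absolute norm `p ^ n`.
  have hle := Ideal.le_comap_pow φ (K := Ideal.span {(p : ℤ_[p])}) n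
  rw [Ideal.span_singleton_pow] at hle
  obtain ⟨J, hJ⟩ := Ideal.dvd_iff_le.mpr hle
  have hnorm := congrArg Ideal.absNorm hJ
  have h1 := absNorm_comap_span_prime_pow φ 1
  rw [pow_one, pow_one] at h1
  rw [map_mul, map_pow, absNorm_comap_span_prime_pow, h1] at hnorm
  have hJ1 : J = ⊤ := Ideal.absNorm_eq_one_iff.mp <|
    (Nat.mul_eq_left (pow_pos hp.out.pos n).ne').mp hnorm.symm
  rw [hJ, hJ1, Ideal.mul_top]

end PadicEmbeddings

section Approximation

theorem exists_forall_algHom_eq {Z R T ι : Type*} [CommRing Z] [CommRing R] [CommRing T]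
    [Algebra Z R] [Algebra Z T] [Finite ι] (hT : Function.Surjective (algebraMap Z T))
    {ψ : ι → R →ₐ[Z] T} (hψ : Pairwise fun i j ↦ ∃ x, IsUnit (ψ i x - ψ j x)) (c : ι → T) :
    ∃ x, ∀ i, ψ i x = c i := by
  have hcop : Pairwise fun i j ↦ IsCoprime (RingHom.ker (ψ i)) (RingHom.ker (ψ j)) := by
    intro i j hij
    obtain ⟨x, u, hu⟩ := hψ hij
    obtain ⟨a, ha⟩ := hT (ψ j x)
    obtain ⟨w, hw⟩ := hT ↑u⁻¹
    rw [Ideal.isCoprime_iff_exists]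
    refine ⟨1 - algebraMap Z R w * (x - algebraMap Z R a), ?_,
      algebraMap Z R w * (x - algebraMap Z R a), ?_, sub_add_cancel _ _⟩
    · simp [RingHom.mem_ker, ha, hw, ← hu]
    · simp [RingHom.mem_ker, ha]
  choose d hd using fun i ↦ hT (c i)
  obtain ⟨x, hx⟩ := Ideal.pi_quotient_surjective hcop fun i ↦ algebraMap Z _ (d i)
  refine ⟨x, fun i ↦ ?_⟩
  have hmem : x - algebraMap Z R (d i) ∈ RingHom.ker (ψ i) := Ideal.Quotient.eq.mp (hx i)
  rwa [RingHom.mem_ker, map_sub, AlgHom.commutes, hd, sub_eq_zero] at hmem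

theorem exists_isUnit_add_eq {T : Type*} [CommRing T] [IsLocalRing T] (h2 : IsUnit (2 : T))
    (d : T) : ∃ y z : T, IsUnit y ∧ IsUnit z ∧ y + z = d := by
  have hsum : IsUnit ((1 + d) + (1 - d)) := by convert! h2 using 1; ring
  rcases IsLocalRing.isUnit_or_isUnit_of_isUnit_add hsum with h | h
  · exact ⟨-1, 1 + d, isUnit_one.neg, h, by ring⟩
  · exact ⟨1, -(1 - d), isUnit_one, h.neg, by ring⟩

theorem exists_isUnit_sum_mul_eq_zero {T ι : Type*} [CommRing T] [IsLocalRing T] [Fintype ι]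
    (h2 : IsUnit (2 : T)) (a : ι → T) {i j : ι} (hij : i ≠ j) (hi : IsUnit (a i))
    (hj : IsUnit (a j)) : ∃ u : ι → T, (∀ k, IsUnit (u k)) ∧ ∑ k, a k * u k = 0 := by
  classical
  obtain ⟨v, hv⟩ := hi
  obtain ⟨w, hw⟩ := hj
  obtain ⟨y, z, hy, hz, hyz⟩ := exists_isUnit_add_eq h2 (a i + a j - ∑ k, a k)
  -- All `u k` are `1` except at `i` and `j`, where they absorb the sum of the other `a k`.
  let u : ι → T := Function.update (Function.update 1 i (↑v⁻¹ * y)) j (↑w⁻¹ * z)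
  have hui : u i = ↑v⁻¹ * y := by simp [u, hij]
  have huj : u j = ↑w⁻¹ * z := by simp [u]
  have hu {k : ι} (hki : k ≠ i) (hkj : k ≠ j) : u k = 1 := by simp [u, hki, hkj]
  refine ⟨u, fun k ↦ ?_, ?_⟩
  · rcases eq_or_ne k i with rfl | hki
    · exact hui ▸ v⁻¹.isUnit.mul hy
    rcases eq_or_ne k j with rfl | hkj
    · exact huj ▸ w⁻¹.isUnit.mul hz
    · exact hu hki hkj ▸ isUnit_one
  · have hdiff : ∑ k, (a k * u k - a k) = (a i * u i - a i) + (a j * u j - a j) :=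
      Fintype.sum_eq_add i j hij fun k hk ↦ by rw [hu hk.1 hk.2, mul_one, sub_self]
    rw [Finset.sum_sub_distrib, hui, huj, ← hv, ← hw, Units.mul_inv_cancel_left,
      Units.mul_inv_cancel_left, hv, hw] at hdiff
    linear_combination hdiff + hyz

variable {R ι : Type*} [CommRing R] {p : ℕ} [Fact p.Prime] {ψ : ι → R →+* ℤ_[p]}

theorem exists_forall_pow_dvd_sub [Finite ι]
    (hψ : Pairwise fun i j ↦ ∃ x, IsUnit (ψ i x - ψ j x)) (c : ι → ℤ_[p]) (n : ℕ) :
    ∃ x, ∀ i, (p : ℤ_[p]) ^ n ∣ ψ i x - c i := by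
  let π : ℤ_[p] →+* ZMod (p ^ n) := PadicInt.toZModPow n
  obtain ⟨x, hx⟩ := exists_forall_algHom_eq (ψ := fun i ↦ (π.comp (ψ i)).toIntAlgHom)
    ZMod.intCast_surjective
    (fun i j hij ↦ (hψ hij).imp fun x hx ↦ by simpa using hx.map π) (fun i ↦ π (c i))
  refine ⟨x, fun i ↦ ?_⟩
  rw [← Ideal.mem_span_singleton, ← PadicInt.ker_toZModPow, RingHom.mem_ker, map_sub, sub_eq_zero]
  exact hx i

theorem exists_isUnit_and_pow_dvd_sum [Fintype ι] (h2 : IsUnit (2 : ℤ_[p]))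
    (hψ : Pairwise fun i j ↦ ∃ x, IsUnit (ψ i x - ψ j x)) (a : ι → ℤ_[p]) {i j : ι}
    (hij : i ≠ j) (hi : IsUnit (a i)) (hj : IsUnit (a j)) (n : ℕ) :
    ∃ x, (∀ k, IsUnit (ψ k x)) ∧ (p : ℤ_[p]) ^ n ∣ ∑ k, a k * ψ k x := by
  obtain ⟨u, hu, hsum⟩ := exists_isUnit_sum_mul_eq_zero h2 a hij hi hj
  obtain ⟨x, hx⟩ := exists_forall_pow_dvd_sub hψ u (n + 1)
  refine ⟨x, fun k ↦ ?_, ?_⟩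
  · have hnonunit : ¬ IsUnit (ψ k x - u k) := fun h ↦
      PadicInt.prime_p.not_isUnit <|
        isUnit_of_dvd_unit ((dvd_pow_self _ n.succ_ne_zero).trans (hx k)) h
    refine (IsLocalRing.isUnit_or_isUnit_of_isUnit_add (a := ψ k x) (b := -(ψ k x - u k))
      (by simpa using hu k)).resolve_right fun h ↦ hnonunit (by simpa using h.neg)
  · have hsum' : ∑ k, a k * ψ k x = ∑ k, a k * (ψ k x - u k) := by
      simp only [mul_sub, Finset.sum_sub_distrib, hsum, sub_zero]
    rw [hsum']
    exact Finset.dvd_sum fun k _ ↦ ((pow_dvd_pow _ n.le_succ).trans (hx k)).mul_left _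

theorem exists_ne_zero_forall_sub_dvd {R S ι : Type*} [CommRing R] [CommRing S] [IsDomain S]
    [Finite ι] {s : ι → R →+* S} (hs : Function.Injective s) :
    ∃ δ ≠ 0, Pairwise fun i j ↦ ∃ x, s i x - s j x ∣ δ := by
  classical
  have := Fintype.ofFinite ι
  have hne (i j : ι) (hij : i ≠ j) : ∃ x, s i x ≠ s j x := DFunLike.exists_ne (hs.ne hij)
  choose! x hx using hne
  refine ⟨∏ q ∈ Finset.univ.offDiag, (s q.1 (x q.1 q.2) - s q.2 (x q.1 q.2)),
    Finset.prod_ne_zero_iff.mpr fun q hq ↦ sub_ne_zero.mpr (hx _ _ (Finset.mem_offDiag.mp hq).2.2),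
    fun i j hij ↦ ⟨x i j, ?_⟩⟩
  exact Finset.dvd_prod_of_mem (fun q : ι × ι ↦ s q.1 (x q.1 q.2) - s q.2 (x q.1 q.2))
    (a := (i, j)) (by simpa using hij)

end Approximation

section AlgHoms

variable {F K M : Type*} [Field F] [Field K] [Field M] [Algebra F K] [Algebra F M]
  [FiniteDimensional F K]

theorem algebraMap_norm_eq_prod_algHom [Algebra.IsSeparable F K]
    (h : Fintype.card (K →ₐ[F] M) = Module.finrank F K) (x : K) :
    algebraMap F M (Algebra.norm F x) = ∏ σ : K →ₐ[F] M, σ x := by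
  let j : M →ₐ[F] AlgebraicClosure M := IsScalarTower.toAlgHom F M (AlgebraicClosure M)
  have hbij : Function.Bijective (j.comp : (K →ₐ[F] M) → K →ₐ[F] AlgebraicClosure M) :=
    (Fintype.bijective_iff_injective_and_card _).mpr
      ⟨fun _ _ ↦ (AlgHom.cancel_left j.injective).mp, by rw [h, AlgHom.card]⟩
  apply (j : M →+* AlgebraicClosure M).injective
  rw [AlgHom.coe_toRingHom, AlgHom.commutes, map_prod,
    Algebra.norm_eq_prod_embeddings F (AlgebraicClosure M)]
  exact (Fintype.prod_bijective _ hbij _ _ fun _ ↦ rfl).symm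

theorem exists_eq_sum_mul_algHom (h : Fintype.card (K →ₐ[F] M) = Module.finrank F K)
    (B : K →ₗ[F] M) : ∃ ε : (K →ₐ[F] M) → M, ∀ x, B x = ∑ σ, ε σ * σ x := by
  have hspan := (linearIndependent_toLinearMap F K M).span_eq_top_of_card_eq_finrank' <| by
    rw [h, Module.finrank_linearMap_self]
  have hB : B ∈ Submodule.span M (Set.range AlgHom.toLinearMap) := hspan ▸ Submodule.mem_top
  obtain ⟨ε, hε⟩ := (Submodule.mem_span_range_iff_exists_fun M).mp hB
  exact ⟨ε, fun x ↦ by simp [← hε, LinearMap.sum_apply]⟩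

end AlgHoms

section NumberFieldEmbeddings

theorem exists_numberField_card_algHom_eq_finrank.{u, v} (K : Type u) (L : Type v) [Field K]
    [NumberField K] [Field L] [NumberField L] :
    ∃ (M : Type v) (_ : Field M) (_ : NumberField M) (_ : Algebra L M),
      Fintype.card (K →ₐ[ℚ] M) = Module.finrank ℚ K := by
  let pb := Field.powerBasisOfFiniteOfSeparable ℚ K
  let f := (minpoly ℚ pb.gen).map (algebraMap ℚ L)
  have : NumberField f.SplittingField := .of_module_finite L _
  refine ⟨f.SplittingField, inferInstance, this, inferInstance, ?_⟩
  have hsplits : ((minpoly ℚ pb.gen).map (algebraMap ℚ f.SplittingField)).Splits := by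
    rw [Subsingleton.elim (algebraMap ℚ _) ((algebraMap L f.SplittingField).comp (algebraMap ℚ L)),
      ← Polynomial.map_map]
    exact Polynomial.SplittingField.splits f
  rw [Fintype.card_eq_nat_card, pb.finrank]
  exact AlgHom.natCard_of_powerBasis pb (Algebra.IsSeparable.isSeparable _ _) hsplits

variable {K M : Type*} [Field K] [NumberField K] [Field M]

theorem mapRingHom_algHom_injective [CharZero M] :
    Function.Injective fun σ : K →ₐ[ℚ] M ↦ RingOfIntegers.mapRingHom (σ : K →+* M) := by
  intro σ τ h
  have hcomp : (σ : K →+* M).comp (algebraMap (𝓞 K) K) = (τ : K →+* M).comp (algebraMap _ K) :=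
    RingHom.ext fun x ↦ congrArg (algebraMap (𝓞 M) M) (DFunLike.congr_fun h x)
  exact AlgHom.coe_ringHom_injective (IsLocalization.ringHom_ext (nonZeroDivisors (𝓞 K)) hcomp)

theorem intCast_norm_eq_prod_mapRingHom [CharZero M]
    (h : Fintype.card (K →ₐ[ℚ] M) = Module.finrank ℚ K) (x : 𝓞 K) : ((Algebra.norm ℤ x : ℤ) : 𝓞 M) =
      ∏ σ : K →ₐ[ℚ] M, RingOfIntegers.mapRingHom (σ : K →+* M) x := by
  apply RingOfIntegers.coe_injective
  have hnorm := algebraMap_norm_eq_prod_algHom h (x : K)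
  rw [← Algebra.coe_norm_int] at hnorm
  simpa using hnorm

theorem isCoprime_natCast_of_forall_isUnit [CharZero M]
    (h : Fintype.card (K →ₐ[ℚ] M) = Module.finrank ℚ K) {p : ℕ} [hp : Fact p.Prime]
    (φ : 𝓞 M →+* ℤ_[p]) {x : 𝓞 K}
    (hx : ∀ σ : K →ₐ[ℚ] M, IsUnit (φ (RingOfIntegers.mapRingHom (σ : K →+* M) x))) :
    IsCoprime (p : 𝓞 K) x := by
  have hunit : IsUnit ((Algebra.norm ℤ x : ℤ) : ℤ_[p]) := by
    rw [← map_intCast φ, intCast_norm_eq_prod_mapRingHom h, map_prod]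
    exact IsUnit.prod_univ_iff.mpr hx
  have hcop : IsCoprime (p : ℤ) (Algebra.norm ℤ x) :=
    (Nat.prime_iff_prime_int.mp hp.out).coprime_iff_not_dvd.mpr
      (isUnit_padicInt_intCast_iff.mp hunit)
  have hcop' : IsCoprime (p : 𝓞 K) ((Algebra.norm ℤ x : ℤ) : 𝓞 K) := by
    simpa using hcop.map (Int.castRingHom (𝓞 K))
  exact hcop'.of_isCoprime_of_dvd_right (by simpa using dvd_algebraMap_norm (A := ℤ) x)

theorem exists_mul_eq_sum_mul_mapRingHom [NumberField M]
    (h : Fintype.card (K →ₐ[ℚ] M) = Module.finrank ℚ K) (A : 𝓞 K →ₗ[ℤ] 𝓞 M) :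
    ∃ b : 𝓞 M, b ≠ 0 ∧ ∃ α : (K →ₐ[ℚ] M) → 𝓞 M,
      ∀ x, b * A x = ∑ σ, α σ * RingOfIntegers.mapRingHom (σ : K →+* M) x := by
  let j : 𝓞 M →ₗ[ℤ] M := (algebraMap (𝓞 M) M).toAddMonoidHom.toIntLinearMap
  let B : K →ₗ[ℚ] M := (integralBasis K).constr ℚ fun i ↦ j (A (RingOfIntegers.basis K i))
  have hB : B.restrictScalars ℤ ∘ₗ (Algebra.linearMap (𝓞 K) K).restrictScalars ℤ = j ∘ₗ A :=
    (RingOfIntegers.basis K).ext fun i ↦ by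
      simp only [B, LinearMap.comp_apply, LinearMap.restrictScalars_apply,
        Algebra.linearMap_apply, ← integralBasis_apply, Module.Basis.constr_basis]
  obtain ⟨ε, hε⟩ := exists_eq_sum_mul_algHom h B
  obtain ⟨b, hb⟩ := IsLocalization.exist_integer_multiples_of_finite (nonZeroDivisors (𝓞 M)) ε
  choose α hα using hb
  refine ⟨b, nonZeroDivisors.ne_zero b.2, α, fun x ↦ RingOfIntegers.coe_injective ?_⟩
  have hAx : algebraMap (𝓞 M) M (A x) = ∑ σ, ε σ * σ x :=
    (DFunLike.congr_fun hB x).symm.trans (hε x)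
  rw [map_mul, hAx, Finset.mul_sum, map_sum]
  refine Finset.sum_congr rfl fun σ _ ↦ ?_
  rw [map_mul, hα, Algebra.smul_def, mul_assoc]
  rfl

end NumberFieldEmbeddings

section Descent

theorem exists_ringHom_comp_eq_of_forall_mem_fieldRange {R K L M : Type*} [CommRing R] [Field K]
    [Algebra R K] [IsFractionRing R K] [Field L] [Field M] (i : L →+* M) (σ : K →+* M)
    (h : ∀ x : R, σ (algebraMap R K x) ∈ i.fieldRange) : ∃ τ : K →+* L, i.comp τ = σ := by
  have hσ : σ.fieldRange ≤ i.fieldRange := by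
    rw [IsFractionRing.ringHom_fieldRange_eq_of_comp_eq (rfl : σ.comp (algebraMap R K) = _),
      Subfield.closure_le]
    rintro _ ⟨x, rfl⟩
    exact h x
  let e : L ≃+* i.fieldRange := i.rangeRestrictFieldEquiv
  exact ⟨(e.symm : i.fieldRange →+* L).comp (σ.codRestrict i.fieldRange fun x ↦ hσ ⟨x, rfl⟩),
    RingHom.ext fun x ↦ congrArg Subtype.val (e.apply_symm_apply _)⟩

theorem surjective_of_forall_algebraMap_mem_fieldRange {S K L : Type*} [CommRing S] [Field L]
    [Algebra S L] [IsFractionRing S L] [Field K] (τ : K →+* L)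
    (h : ∀ y : S, algebraMap S L y ∈ τ.fieldRange) : Function.Surjective τ := by
  rw [← RingHom.fieldRange_eq_top_iff, ← top_le_iff, ← IsFractionRing.closure_range_algebraMap S L,
    Subfield.closure_le]
  exact Set.range_subset_iff.mpr h

end Descent

section LocalObstruction

open Filter

theorem frequently_exists_ringHom_padicInt_isUnit {M : Type*} [Field M] [NumberField M] {β : 𝓞 M}
    (hβ : β ≠ 0) :
    ∃ᶠ p : ℕ in atTop, ∃ (_ : Fact p.Prime) (φ : 𝓞 M →+* ℤ_[p]), IsUnit (φ β) := by
  refine frequently_atTop.mpr fun n ↦ ?_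
  have hfact : (n.factorial : 𝓞 M) ≠ 0 := Nat.cast_ne_zero.mpr n.factorial_ne_zero
  obtain ⟨p, hp, φ, hφ⟩ := exists_ringHom_padicInt_isUnit (mul_ne_zero hβ hfact)
  rw [map_mul, map_natCast, IsUnit.mul_iff, ← Int.cast_natCast, isUnit_padicInt_intCast_iff,
    Int.natCast_dvd_natCast, hp.out.dvd_factorial, not_le] at hφ
  exact ⟨p, hφ.2.le, hp, φ, hφ.1⟩

variable {K L M : Type*} [Field K] [NumberField K] [Field L] [NumberField L] [Field M]
  [Algebra L M]

theorem exists_isCoprime_and_mem_comap_pow [CharZero M]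
    (h : Fintype.card (K →ₐ[ℚ] M) = Module.finrank ℚ K) {A : 𝓞 K → 𝓞 L} {b : 𝓞 M}
    {α : (K →ₐ[ℚ] M) → 𝓞 M}
    (hA : ∀ x, b * algebraMap (𝓞 L) (𝓞 M) (A x) =
      ∑ σ, α σ * RingOfIntegers.mapRingHom (σ : K →+* M) x)
    {p : ℕ} [Fact p.Prime] (h2 : IsUnit (2 : ℤ_[p])) (φ : 𝓞 M →+* ℤ_[p]) (hb : IsUnit (φ b))
    (hsep : Pairwise fun σ τ : K →ₐ[ℚ] M ↦ ∃ x, IsUnit (φ (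
      RingOfIntegers.mapRingHom (σ : K →+* M) x - RingOfIntegers.mapRingHom (τ : K →+* M) x)))
    {σ τ : K →ₐ[ℚ] M} (hστ : σ ≠ τ) (hσ : IsUnit (φ (α σ))) (hτ : IsUnit (φ (α τ))) (n : ℕ) :
    ∃ x, IsCoprime (p : 𝓞 K) x ∧
      A x ∈ (Ideal.span {(p : ℤ_[p])}).comap (φ.comp (algebraMap (𝓞 L) (𝓞 M))) ^ n := by
  obtain ⟨x, hx, hdvd⟩ := exists_isUnit_and_pow_dvd_sum
    (ψ := fun σ : K →ₐ[ℚ] M ↦ φ.comp (RingOfIntegers.mapRingHom (σ : K →+* M))) h2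
    (fun i j hij ↦ by simpa using hsep hij) (fun σ ↦ φ (α σ)) hστ hσ hτ n
  refine ⟨x, isCoprime_natCast_of_forall_isUnit h φ hx, ?_⟩
  have hφA : φ b * φ (algebraMap (𝓞 L) (𝓞 M) (A x)) =
      ∑ σ, φ (α σ) * φ (RingOfIntegers.mapRingHom (σ : K →+* M) x) := by
    simp only [← map_mul, hA, map_sum]
  rw [← comap_span_prime_pow, Ideal.mem_comap, Ideal.mem_span_singleton]
  exact hb.dvd_mul_left.mp (hφA ▸ hdvd)

theorem frequently_exists_isCoprime_and_mem_pow [NumberField M]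
    (h : Fintype.card (K →ₐ[ℚ] M) = Module.finrank ℚ K) {A : 𝓞 K → 𝓞 L} {b : 𝓞 M} (hb : b ≠ 0)
    {α : (K →ₐ[ℚ] M) → 𝓞 M}
    (hA : ∀ x, b * algebraMap (𝓞 L) (𝓞 M) (A x) =
      ∑ σ, α σ * RingOfIntegers.mapRingHom (σ : K →+* M) x)
    {σ τ : K →ₐ[ℚ] M} (hστ : σ ≠ τ) (hσ : α σ ≠ 0) (hτ : α τ ≠ 0) :
    ∃ᶠ p : ℕ in atTop, p.Prime ∧ ∃ Q : Ideal (𝓞 L), Q.IsPrime ∧ (p : 𝓞 L) ∈ Q ∧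
      ∀ n, ∃ x, IsCoprime (p : 𝓞 K) x ∧ A x ∈ Q ^ n := by
  obtain ⟨δ, hδ, hsep⟩ :=
    exists_ne_zero_forall_sub_dvd (mapRingHom_algHom_injective (K := K) (M := M))
  have hβ : 2 * b * α σ * α τ * δ ≠ 0 := by simp [hb, hσ, hτ, hδ]
  refine (frequently_exists_ringHom_padicInt_isUnit hβ).mono ?_
  rintro p ⟨hp, φ, hφ⟩
  simp only [map_mul, map_ofNat, IsUnit.mul_iff] at hφ
  obtain ⟨⟨⟨⟨h2, hb⟩, hσ⟩, hτ⟩, hδ⟩ := hφ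
  have hprime : (Ideal.span {(p : ℤ_[p])}).IsPrime :=
    (Ideal.span_singleton_prime PadicInt.prime_p.ne_zero).mpr PadicInt.prime_p
  refine ⟨hp.out, _, hprime.comap (φ.comp (algebraMap (𝓞 L) (𝓞 M))), ?_,
    exists_isCoprime_and_mem_comap_pow h hA h2 φ hb
      (fun i j hij ↦ (hsep hij).imp fun x hx ↦ isUnit_of_dvd_unit (map_dvd φ hx) hδ) hστ hσ hτ⟩
  rw [Ideal.mem_comap, map_natCast]
  exact Ideal.mem_span_singleton_self _

end LocalObstruction

section Conclusion

open Filter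

variable {K L : Type*} [Field K] [Field L]

theorem exists_isPrime_natCast_mem {S : Type*} [CommRing S] [FaithfulSMul ℤ S]
    [Algebra.IsIntegral ℤ S] {p : ℕ} (hp : p.Prime) :
    ∃ Q : Ideal S, Q.IsPrime ∧ (p : S) ∈ Q := by
  have hp' : Prime (p : ℤ) := Nat.prime_iff_prime_int.mp hp
  have : (Ideal.span {(p : ℤ)}).IsMaximal :=
    PrincipalIdealRing.isMaximal_of_irreducible hp'.irreducible
  obtain ⟨Q, hQ, _⟩ :=
    Ideal.exists_maximal_ideal_liesOver_of_isIntegral (S := S) (Ideal.span {(p : ℤ)})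
  refine ⟨Q, hQ.isPrime, ?_⟩
  simpa using (Ideal.mem_of_liesOver Q (Ideal.span {(p : ℤ)}) (p : ℤ)).mp
    (Ideal.mem_span_singleton_self _)

theorem exists_ringHom_forall_eq_mul [NumberField K] {M : Type*} [Field M] [CharZero M]
    [Algebra L M] {A : 𝓞 K → 𝓞 L} (h1 : A 1 ≠ 0) {b : 𝓞 M} (hb : b ≠ 0)
    {α : (K →ₐ[ℚ] M) → 𝓞 M}
    (hA : ∀ x, b * algebraMap (𝓞 L) (𝓞 M) (A x) =
      ∑ σ, α σ * RingOfIntegers.mapRingHom (σ : K →+* M) x)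
    (hα : Pairwise fun σ τ ↦ α σ = 0 ∨ α τ = 0) :
    ∃ τ : K →+* L, ∀ x : 𝓞 K, (A x : L) = A 1 * τ x := by
  have hA1 : b * algebraMap (𝓞 L) (𝓞 M) (A 1) ≠ 0 := by simpa [hb] using h1
  obtain ⟨σ, -, hσ⟩ := Finset.exists_ne_zero_of_sum_ne_zero (hA 1 ▸ hA1)
  have hAσ (x : 𝓞 K) : b * algebraMap (𝓞 L) (𝓞 M) (A x) =
      α σ * RingOfIntegers.mapRingHom (σ : K →+* M) x := by
    rw [hA]
    refine Fintype.sum_eq_single σ fun τ hτ ↦ ?_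
    rw [(hα hτ).resolve_right (left_ne_zero_of_mul hσ), zero_mul]
  have hmul (x : 𝓞 K) : algebraMap L M (A x) = algebraMap L M (A 1) * σ x := by
    have hx : algebraMap (𝓞 L) (𝓞 M) (A x) =
        algebraMap (𝓞 L) (𝓞 M) (A 1) * RingOfIntegers.mapRingHom (σ : K →+* M) x := by
      apply mul_left_cancel₀ hb
      rw [← mul_assoc, hAσ, hAσ 1, map_one, mul_one]
    exact congrArg (algebraMap (𝓞 M) M) hx
  have hA1' : algebraMap L M (A 1) ≠ 0 := by simpa using h1
  obtain ⟨τ, hτ⟩ := exists_ringHom_comp_eq_of_forall_mem_fieldRange (R := 𝓞 K) (algebraMap L M)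
    (σ : K →+* M) fun x ↦ ⟨A x / A 1, by rw [map_div₀, hmul, mul_div_cancel_left₀ _ hA1']; rfl⟩
  refine ⟨τ, fun x ↦ (algebraMap L M).injective ?_⟩
  rw [hmul, map_mul]
  exact congrArg _ (DFunLike.congr_fun hτ (x : K)).symm

theorem exists_ringEquiv_forall_eq_mul [NumberField L] {A : 𝓞 K → 𝓞 L} (hA : Function.Surjective A)
    {τ : K →+* L} {ε : 𝓞 L} (h : ∀ x : 𝓞 K, (A x : L) = ε * τ x) :
    ∃ (τ : K ≃+* L) (ε : (𝓞 L)ˣ), ∀ x : 𝓞 K, (A x : L) = (ε : 𝓞 L) * τ x := by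
  have h' (x : 𝓞 K) : A x = ε * RingOfIntegers.mapRingHom τ x := RingOfIntegers.ext (h x)
  obtain ⟨x₁, hx₁⟩ := hA 1
  have hε : IsUnit ε := .of_mul_eq_one _ ((h' x₁).symm.trans hx₁)
  have hτ : Function.Surjective τ :=
    surjective_of_forall_algebraMap_mem_fieldRange (S := 𝓞 L) τ fun y ↦ by
      obtain ⟨x, hx⟩ := hA (ε * y)
      exact ⟨x, congrArg (algebraMap (𝓞 L) L) (hε.mul_left_cancel ((h' x).symm.trans hx))⟩
  exact ⟨.ofBijective τ ⟨τ.injective, hτ⟩, hε.unit, h⟩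

theorem linear_map_local_kfree_general [NumberField K] [NumberField L] (A : 𝓞 K →ₗ[ℤ] 𝓞 L)
    (hA : ∀ᶠ p : ℕ in atTop, p.Prime → ∃ l : ℕ, ∀ x : 𝓞 K, IsCoprime (p : 𝓞 K) x →
      ∀ Q : Ideal (𝓞 L), Q.IsPrime → (p : 𝓞 L) ∈ Q → A x ∉ Q ^ l) :
    (∃ (τ : K →+* L) (ε : 𝓞 L), ∀ x : 𝓞 K, (A x : L) = ε * τ x) ∧
    (Function.Surjective A →
      ∃ (τ : K ≃+* L) (ε : (𝓞 L)ˣ), ∀ x : 𝓞 K, (A x : L) = (ε : 𝓞 L) * τ x) := by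
  have h1 : A 1 ≠ 0 := fun h0 ↦ by
    have hprimes := Nat.frequently_atTop_iff_infinite.mpr Nat.infinite_setOfPred_prime
    obtain ⟨p, hp, hAp⟩ := (hprimes.and_eventually hA).exists
    obtain ⟨l, hl⟩ := hAp hp
    obtain ⟨Q, hQ, hpQ⟩ := exists_isPrime_natCast_mem (S := 𝓞 L) hp
    exact hl 1 isCoprime_one_right Q hQ hpQ (h0 ▸ zero_mem _)
  obtain ⟨M, _, _, _, hM⟩ := exists_numberField_card_algHom_eq_finrank K L
  obtain ⟨b, hb, α, hα⟩ := exists_mul_eq_sum_mul_mapRingHom hM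
    ((Algebra.linearMap (𝓞 L) (𝓞 M)).restrictScalars ℤ ∘ₗ A)
  have hα0 : Pairwise fun σ τ ↦ α σ = 0 ∨ α τ = 0 := fun σ τ hστ ↦ by
    by_contra! hne
    obtain ⟨p, ⟨hp, Q, hQ, hpQ, hmem⟩, hAp⟩ :=
      ((frequently_exists_isCoprime_and_mem_pow hM hb hα hστ hne.1 hne.2).and_eventually hA).exists
    obtain ⟨l, hl⟩ := hAp hp
    obtain ⟨x, hpx, hx⟩ := hmem l
    exact hl x hpx Q hQ hpQ hx
  obtain ⟨τ, hτ⟩ := exists_ringHom_forall_eq_mul h1 hb hα hα0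
  exact ⟨⟨τ, A 1, hτ⟩, fun hsurj ↦ exists_ringEquiv_forall_eq_mul hsurj hτ⟩

end Conclusion

/-- A ℤ-linear map `A : 𝓞 K → 𝓞 L` between rings of integers of number fields that,
for every prime number `p`, maps locally `k`-free elements at `p` to locally `l`-free
elements at `p`, is of the form `x ↦ ε·τ(x)` for a field embedding `τ : K → L` and some
`ε ∈ 𝓞 L`; if moreover `A` is bijective, `τ` can be taken to be a field isomorphism and
`ε` a unit. -/
theorem linear_map_local_kfree {K L : Type*} [Field K] [NumberField K]
    [Field L] [NumberField L] (k l : ℕ) (hk : 1 ≤ k) (hl : 1 ≤ l)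
    (A : 𝓞 K →ₗ[ℤ] 𝓞 L)
    (hA : ∀ p : ℕ, p.Prime → ∀ x : 𝓞 K,
      (∀ P : Ideal (𝓞 K), P.IsPrime → (p : 𝓞 K) ∈ P → x ∉ P ^ k) →
      ∀ Q : Ideal (𝓞 L), Q.IsPrime → (p : 𝓞 L) ∈ Q → A x ∉ Q ^ l) :
    (∃ (τ : K →+* L) (ε : 𝓞 L),
        ∀ x : 𝓞 K, (A x : L) = (ε : L) * τ (x : K)) ∧
    (Function.Bijective A →
      ∃ (τ : K ≃+* L) (ε : (𝓞 L)ˣ),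
        ∀ x : 𝓞 K, (A x : L) = ((ε : 𝓞 L) : L) * τ (x : K)) := by
  have h := linear_map_local_kfree_general A <| .of_forall fun p hp ↦ ⟨l, fun x hx ↦ hA p hp x
    fun P hP hpP hxP ↦ hP.notMem_of_isCoprime_of_mem hx hpP (Ideal.pow_le_self (by lia) hxP)⟩
  exact ⟨h.1, fun hbij ↦ h.2 hbij.2⟩
end

section
/- Let K and L be number fields, let k ≥ 2 and l ≥ 1 be integers, and let A : 𝓞_K → 𝓞_L be a ℤ-linear map. Then the following are equivalent: (a) A(V_{K,k}) ⊆ V_{L,l}; (b) for every prime number p, the induced map 𝓞_K/p^k𝓞_K → 𝓞_L/p^l𝓞_L satisfies A(V_{K,k,p}) ⊆ V_{L,l,p}. -/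
open NumberField

/-- The set of `k`-free integers of a number field `K`: elements of the ring of
integers not lying in `𝔭^k` for any nonzero prime ideal `𝔭`. -/
def kfreeSet (K : Type*) [Field K] [NumberField K] (k : ℕ) : Set (𝓞 K) :=
  {x | ∀ P : Ideal (𝓞 K), P.IsPrime → P ≠ ⊥ → x ∉ P ^ k}

/-! Being `k`-free is a condition at each rational prime, so the local condition implies the global
one prime by prime. Conversely, an element that is `k`-free at `p` is lifted modulo a high power of
`p` to a globally `k`-free element, whose image decides the condition at `p`. The lift is
`y + M * c` with `M = p ^ N * m`, where `m` is divisible by the primes `q ≤ T`, `q ≠ p`, and `y` is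
congruent to the given element modulo `p ^ N` and to `1` modulo `m`.

For the primes `q > T`, let `c` run over the box of side `B` of the lattice `R` of rank `n`. Nonzero
elements of `P ^ 2`, with `P` above `q`, have norm divisible by `q ^ 2`. Hence the `c` with
`y + M * c ∈ P ^ 2` are pairwise far apart, and there are only `O(B ^ n / q ^ 2 + 1)` of them; the
same norm bound gives `q = O(B ^ (n / 2))` if there are any, as `y + M * c ≠ 0`. Summing over `q`,
at most `B ^ n / 2 + O(B ^ (n / 2))` points are excluded, so for large `B` some `c` survives. -/

open Module

section CoordHeight

variable {ι M : Type*} [Fintype ι] [AddCommGroup M] (b : Basis ι ℤ M)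

/-- The sup-norm of the coordinates of `z` in the `ℤ`-basis `b`. -/
noncomputable def coordHeight (z : M) : ℕ :=
  Finset.univ.sup fun i ↦ (b.repr z i).natAbs

/-- The points of the lattice `M` all of whose coordinates in the basis `b` lie in `[0, B)`. -/
noncomputable def coordBox [DecidableEq ι] (B : ℕ) : Finset M :=
  (Fintype.piFinset fun _ ↦ Finset.Ico (0 : ℤ) B).map b.equivFun.symm.toEquiv.toEmbedding

lemma coordHeight_le_iff {z : M} {y : ℕ} :
    coordHeight b z ≤ y ↔ ∀ i, (b.repr z i).natAbs ≤ y := by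
  simp [coordHeight]

lemma coordHeight_pos {z : M} (hz : z ≠ 0) : 0 < coordHeight b z := by
  contrapose! hz
  have hcoord := (coordHeight_le_iff b).1 hz
  exact b.ext_elem fun i ↦ by simpa using hcoord i

lemma coordHeight_add_nsmul_le (x z : M) (n : ℕ) :
    coordHeight b (x + n • z) ≤ coordHeight b x + n * coordHeight b z := by
  refine (coordHeight_le_iff b).2 fun i ↦ ?_
  have hx := (coordHeight_le_iff b).1 (le_refl (coordHeight b x)) i
  have hz := (coordHeight_le_iff b).1 (le_refl (coordHeight b z)) i
  calc (b.repr (x + n • z) i).natAbs = (b.repr x i + n * b.repr z i).natAbs := by simp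
    _ ≤ (b.repr x i).natAbs + n * (b.repr z i).natAbs := by
      simpa [Int.natAbs_mul] using Int.natAbs_add_le (b.repr x i) (n * b.repr z i)
    _ ≤ coordHeight b x + n * coordHeight b z := by gcongr

variable [DecidableEq ι] {b} {B : ℕ}

lemma mem_coordBox {z : M} : z ∈ coordBox b B ↔ ∀ i, 0 ≤ b.repr z i ∧ b.repr z i < B := by
  simp [coordBox, Finset.mem_map_equiv]

lemma card_coordBox : (coordBox b B).card = B ^ Fintype.card ι := by
  simp [coordBox]

lemma coordHeight_le_of_mem_coordBox {z : M} (hz : z ∈ coordBox b B) : coordHeight b z ≤ B := by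
  refine (coordHeight_le_iff b).2 fun i ↦ ?_
  have := mem_coordBox.1 hz i
  omega

lemma coordHeight_sub_le {x y : M} (hx : x ∈ coordBox b B) (hy : y ∈ coordBox b B) :
    coordHeight b (x - y) ≤ B := by
  refine (coordHeight_le_iff b).2 fun i ↦ ?_
  have hxi := mem_coordBox.1 hx i
  have hyi := mem_coordBox.1 hy i
  simp only [map_sub, Finsupp.sub_apply]
  omega

/-- The box is cut into cubes of side `d`, each of which contains at most one point of `s`. -/
lemma card_le_of_le_coordHeight_sub {s : Finset M} {d : ℕ} (hd : 0 < d) (hs : s ⊆ coordBox b B)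
    (hsep : ∀ x ∈ s, ∀ y ∈ s, x ≠ y → d ≤ coordHeight b (x - y)) :
    s.card ≤ (B / d + 1) ^ Fintype.card ι := by
  let cube : M → ι → ℤ := fun x i ↦ b.repr x i / d
  have hcube : Set.MapsTo cube s
      (Fintype.piFinset fun _ : ι ↦ Finset.Ico (0 : ℤ) (B / d + 1 : ℕ)) := by
    intro x hx
    refine Finset.mem_coe.2 (Fintype.mem_piFinset.2 fun i ↦ Finset.mem_Ico.2 ?_)
    obtain ⟨h0, hB⟩ := mem_coordBox.1 (hs hx) i
    refine ⟨Int.ediv_nonneg h0 d.cast_nonneg, ?_⟩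
    push_cast
    exact Int.lt_add_one_of_le (Int.ediv_le_ediv (by exact_mod_cast hd) hB.le)
  have hinj : Set.InjOn cube s := by
    intro x hx y hy hxy
    by_contra hne
    refine (hsep x hx y hy hne).not_gt (Nat.lt_of_le_pred hd ((coordHeight_le_iff b).2 fun i ↦ ?_))
    have hdiv : b.repr x i / d = b.repr y i / d := congrFun hxy i
    have hx' := Int.mul_ediv_add_emod (b.repr x i) d
    have hy' := Int.mul_ediv_add_emod (b.repr y i) d
    have hxlt := Int.emod_lt_of_pos (b.repr x i) (Int.natCast_pos.2 hd)
    have hylt := Int.emod_lt_of_pos (b.repr y i) (Int.natCast_pos.2 hd)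
    have hx0 := Int.emod_nonneg (b.repr x i) (Int.natCast_pos.2 hd).ne'
    have hy0 := Int.emod_nonneg (b.repr y i) (Int.natCast_pos.2 hd).ne'
    rw [hdiv] at hx'
    simp only [map_sub, Finsupp.sub_apply, Nat.pred_eq_sub_one]
    omega
  exact (Finset.card_le_card_of_injOn cube hcube hinj).trans_eq
    (by simp only [Fintype.card_piFinset, Int.card_Ico, sub_zero, Int.toNat_natCast,
      Finset.prod_const, Finset.card_univ])

lemma card_mul_le_of_le_mul_coordHeight_sub_pow {s : Finset M} {C m : ℕ} (hs : s ⊆ coordBox b B)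
    (hsep : ∀ x ∈ s, ∀ y ∈ s, x ≠ y → m ≤ C * coordHeight b (x - y) ^ Fintype.card ι) :
    s.card * m ≤ C * (2 * B) ^ Fintype.card ι + m := by
  rcases le_or_gt s.card 1 with hcard | hcard
  · calc s.card * m ≤ 1 * m := Nat.mul_le_mul_right m hcard
      _ ≤ C * (2 * B) ^ Fintype.card ι + m := by omega
  have hne : s.offDiag.Nonempty := by
    obtain ⟨x, hx, y, hy, hxy⟩ := Finset.one_lt_card.1 hcard
    exact ⟨(x, y), Finset.mem_offDiag.2 ⟨hx, hy, hxy⟩⟩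
  obtain ⟨⟨x, y⟩, hxy, hmin⟩ := s.offDiag.exists_min_image (fun z ↦ coordHeight b (z.1 - z.2)) hne
  obtain ⟨hx, hy, hxy⟩ := Finset.mem_offDiag.1 hxy
  set d := coordHeight b (x - y)
  have hd : 0 < d := coordHeight_pos b (sub_ne_zero.2 hxy)
  have hdB : d ≤ B := coordHeight_sub_le (hs hx) (hs hy)
  have hcard : s.card ≤ (B / d + 1) ^ Fintype.card ι :=
    card_le_of_le_coordHeight_sub hd hs fun u hu v hv huv ↦
      hmin (u, v) (Finset.mem_offDiag.2 ⟨hu, hv, huv⟩)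
  have hcover : (B / d + 1) * d ≤ 2 * B := by
    have := Nat.div_mul_le_self B d
    linarith
  calc s.card * m ≤ (B / d + 1) ^ Fintype.card ι * (C * d ^ Fintype.card ι) :=
        Nat.mul_le_mul hcard (hsep x hx y hy hxy)
    _ = C * ((B / d + 1) * d) ^ Fintype.card ι := by rw [mul_pow]; ring
    _ ≤ C * (2 * B) ^ Fintype.card ι := by gcongr
    _ ≤ C * (2 * B) ^ Fintype.card ι + m := Nat.le_add_right _ _

end CoordHeight

lemma sum_Ioc_inv_sq_le_inv {T : ℕ} (hT : T ≠ 0) (X : ℕ) :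
    ∑ q ∈ Finset.Ioc T X, ((q : ℝ) ^ 2)⁻¹ ≤ (T : ℝ)⁻¹ := by
  rcases le_total T X with h | h
  · exact (sum_Ioc_inv_sq_le_sub hT h).trans (sub_le_self _ (by positivity))
  · simp [Finset.Ioc_eq_empty_of_le h]

section UnionBound

variable {α : Type*} {s : Finset α} {bad : ℕ → Finset α} {T D g : ℕ}

lemma card_le_of_subset_biUnion_Ioc [DecidableEq α] {X : ℕ} (hT : 2 * D < T)
    (hcover : s ⊆ (Finset.Ioc T X).biUnion bad)
    (hbad : ∀ q, T < q → (bad q).card * q ^ 2 ≤ D * s.card + g * q ^ 2) :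
    s.card ≤ 2 * g * X := by
  have hterm : ∀ q ∈ Finset.Ioc T X, ((bad q).card : ℝ) ≤ D * s.card * ((q : ℝ) ^ 2)⁻¹ + g := by
    intro q hq
    have hTq := (Finset.mem_Ioc.1 hq).1
    have hq0 : (0 : ℝ) < (q : ℝ) ^ 2 := by
      have : 0 < q := by omega
      positivity
    have hcard : ((bad q).card : ℝ) * q ^ 2 ≤ D * s.card + g * q ^ 2 := by
      exact_mod_cast hbad q hTq
    rw [← div_eq_mul_inv, ← sub_le_iff_le_add, le_div_iff₀ hq0]
    linarith
  have hhalf : (D : ℝ) * (T : ℝ)⁻¹ ≤ 1 / 2 := by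
    have hT' : 2 * (D : ℝ) < T := by exact_mod_cast hT
    rw [← div_eq_mul_inv, div_le_iff₀ (by linarith [(D.cast_nonneg : (0 : ℝ) ≤ D)])]
    linarith
  have hcount : (s.card : ℝ) ≤ s.card / 2 + g * X :=
    calc (s.card : ℝ) ≤ ∑ q ∈ Finset.Ioc T X, ((bad q).card : ℝ) := by
          exact_mod_cast (Finset.card_le_card hcover).trans Finset.card_biUnion_le
      _ ≤ ∑ q ∈ Finset.Ioc T X, (D * s.card * ((q : ℝ) ^ 2)⁻¹ + g) := Finset.sum_le_sum hterm
      _ = s.card * (D * ∑ q ∈ Finset.Ioc T X, ((q : ℝ) ^ 2)⁻¹) + g * (X - T : ℕ) := by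
        rw [Finset.sum_add_distrib, ← Finset.mul_sum, Finset.sum_const, Nat.card_Ioc, nsmul_eq_mul]
        ring
      _ ≤ s.card * (D * (T : ℝ)⁻¹) + g * X := by
        gcongr
        · exact sum_Ioc_inv_sq_le_inv (by omega) X
        · exact Nat.sub_le _ _
      _ ≤ s.card * (1 / 2) + g * X := by gcongr
      _ = s.card / 2 + g * X := by ring
  have : (s.card : ℝ) ≤ 2 * g * X := by linarith
  exact_mod_cast this

lemma card_le_of_forall_exists_sq_le_mul_card {E : ℕ} (hT : 2 * D < T)
    (hcover : ∀ x ∈ s, ∃ q, T < q ∧ q ^ 2 ≤ E * s.card ∧ x ∈ bad q)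
    (hbad : ∀ q, T < q → (bad q).card * q ^ 2 ≤ D * s.card + g * q ^ 2) :
    s.card ≤ 4 * g ^ 2 * E := by
  classical
  set X := Nat.sqrt (E * s.card)
  have hsub : s ⊆ (Finset.Ioc T X).biUnion bad := by
    intro x hx
    obtain ⟨q, hTq, hqE, hxq⟩ := hcover x hx
    exact Finset.mem_biUnion.2 ⟨q, Finset.mem_Ioc.2 ⟨hTq, Nat.le_sqrt'.2 hqE⟩, hxq⟩
  have hlin : s.card ≤ 2 * g * X := card_le_of_subset_biUnion_Ioc hT hsub hbad
  rcases s.card.eq_zero_or_pos with h0 | hpos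
  · simp [h0]
  refine Nat.le_of_mul_le_mul_right ?_ hpos
  calc s.card * s.card ≤ (2 * g * X) * (2 * g * X) := Nat.mul_le_mul hlin hlin
    _ = 4 * g ^ 2 * (X * X) := by ring
    _ ≤ 4 * g ^ 2 * (E * s.card) := Nat.mul_le_mul_left _ (Nat.sqrt_le _)
    _ = 4 * g ^ 2 * E * s.card := by ring

end UnionBound

/-- `x` lies in no `k`-th power of a nonzero prime ideal: the `k`-free elements of `R`, which for
`R = 𝓞 K` form the set `kfreeSet K k`. -/
def IsKFree {R : Type*} [CommRing R] (k : ℕ) (x : R) : Prop :=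
  ∀ P : Ideal R, P.IsPrime → P ≠ ⊥ → x ∉ P ^ k

/-- `x` lies in no `k`-th power of a prime ideal above `p`. For `R = 𝓞 K` this says that the class
of `x` modulo `p ^ k` belongs to the set `V_{K,k,p}` of the paper. -/
def IsKFreeAt {R : Type*} [CommRing R] (p k : ℕ) (x : R) : Prop :=
  ∀ P : Ideal R, P.IsPrime → (p : R) ∈ P → x ∉ P ^ k

section KFree

variable {R : Type*} [CommRing R]

lemma mem_pow_of_natCast_mul_mem_pow {P : Ideal R} {q M k : ℕ} (hM : M.Coprime q)
    (hq : (q : R) ∈ P) {z : R} (hz : (M : R) * z ∈ P ^ k) : z ∈ P ^ k := by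
  obtain ⟨u, v, huv⟩ := (hM.cast (R := R)).pow_right (n := k)
  have hz' : z = u * (M * z) + v * z * (q : R) ^ k := by linear_combination -z * huv
  rw [hz']
  exact Ideal.add_mem _ (Ideal.mul_mem_left _ _ hz)
    (Ideal.mul_mem_left _ _ (Ideal.pow_mem_pow hq k))

lemma exists_prime_natCast_mem [IsDomain R] [Algebra.IsIntegral ℤ R] {P : Ideal R}
    (hP : P.IsPrime) (hP0 : P ≠ ⊥) : ∃ p : ℕ, p.Prime ∧ (p : R) ∈ P := by
  obtain ⟨x, hx, hx0⟩ := Submodule.exists_mem_ne_zero_of_ne_bot hP0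
  have hcomap : P.comap (algebraMap ℤ R) ≠ ⊥ :=
    Ideal.comap_ne_bot_of_integral_mem hx0 hx (Algebra.IsIntegral.isIntegral x)
  set g := Submodule.IsPrincipal.generator (P.comap (algebraMap ℤ R))
  have hg : Prime g := Submodule.IsPrincipal.prime_generator_of_isPrime _ hcomap
  have hgP : algebraMap ℤ R g ∈ P := Submodule.IsPrincipal.generator_mem (P.comap (algebraMap ℤ R))
  refine ⟨g.natAbs, Int.prime_iff_natAbs_prime.1 hg, ?_⟩
  obtain ⟨n, hn | hn⟩ := g.eq_nat_or_neg <;> simpa [hn] using hgP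

lemma isMaximal_of_natCast_mem [Algebra.IsIntegral ℤ R] {P : Ideal R} (hP : P.IsPrime) {n : ℕ}
    (hn : n ≠ 0) (hnP : (n : R) ∈ P) : P.IsMaximal := by
  refine Ideal.isMaximal_of_isIntegral_of_isMaximal_comap (R := ℤ) P
    ((hP.comap (algebraMap ℤ R)).isMaximal fun hbot ↦ hn ?_)
  have hmem : (n : ℤ) ∈ P.comap (algebraMap ℤ R) := by simpa using hnP
  rw [hbot] at hmem
  simpa using hmem

lemma isKFree_iff_forall_isKFreeAt [IsDomain R] [CharZero R] [Algebra.IsIntegral ℤ R] {k : ℕ}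
    {x : R} : IsKFree k x ↔ ∀ p : ℕ, p.Prime → IsKFreeAt p k x := by
  constructor
  · rintro hx p hp P hP hpP
    refine hx P hP ?_
    rintro rfl
    exact hp.ne_zero (by simpa using hpP)
  · intro hx P hP hP0
    obtain ⟨p, hp, hpP⟩ := exists_prime_natCast_mem hP hP0
    exact hx p hp P hP hpP

lemma IsKFreeAt.mono {p k l : ℕ} {x : R} (hx : IsKFreeAt p k x) (hkl : k ≤ l) :
    IsKFreeAt p l x :=
  fun P hP hpP h ↦ hx P hP hpP (Ideal.pow_le_pow_right hkl h)

lemma IsKFreeAt.of_pow_dvd_sub {p k : ℕ} {x y : R} (hx : IsKFreeAt p k x)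
    (hxy : (p : R) ^ k ∣ y - x) : IsKFreeAt p k y := by
  intro P hP hpP hy
  have hsub : y - x ∈ P ^ k := (P ^ k).mem_of_dvd hxy (Ideal.pow_mem_pow hpP k)
  exact hx P hP hpP (by simpa using (P ^ k).sub_mem hy hsub)

lemma isKFreeAt_of_natCast_dvd_sub_one {p k : ℕ} {x : R} (hk : k ≠ 0)
    (hx : (p : R) ∣ x - 1) : IsKFreeAt p k x := by
  intro P hP hpP hxP
  refine hP.ne_top ((Ideal.eq_top_iff_one P).2 ?_)
  simpa using P.sub_mem (Ideal.pow_le_self hk hxP) (P.mem_of_dvd hx hpP)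

lemma IsKFreeAt.not_pow_dvd [CharZero R] [Algebra.IsIntegral ℤ R] {p k : ℕ} {x : R}
    (hp : p.Prime) (hx : IsKFreeAt p k x) : ¬ (p : R) ^ k ∣ x := by
  intro hdvd
  have hmax : (Ideal.span {(p : ℤ)}).IsMaximal :=
    PrincipalIdealRing.isMaximal_of_irreducible (Nat.prime_iff_prime_int.1 hp).irreducible
  obtain ⟨P, hP, hcomap⟩ := Ideal.exists_ideal_over_maximal_of_isIntegral (S := R)
    (Ideal.span {(p : ℤ)})
    ((RingHom.ker_eq_bot_iff_eq_zero (algebraMap ℤ R)).2 (by simp) ▸ bot_le)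
  have hpP : (p : R) ∈ P := by
    have : (p : ℤ) ∈ P.comap (algebraMap ℤ R) := hcomap ▸ Ideal.mem_span_singleton_self _
    simpa using this
  exact hx P hP.isPrime hpP ((P ^ k).mem_of_dvd hdvd (Ideal.pow_mem_pow hpP k))

end KFree

section Index

lemma prime_dvd_relIndex_of_forall_nsmul_mem {G : Type*} [AddCommGroup G] {H K : AddSubgroup G}
    {q : ℕ} (hq : q.Prime) (hqK : ∀ x ∈ K, q • x ∈ H) (hKH : ¬ K ≤ H) : q ∣ H.relIndex K := by
  obtain ⟨x, hxK, hxH⟩ := SetLike.not_le_iff_exists.1 hKH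
  have : Fact q.Prime := ⟨hq⟩
  let y : K ⧸ H.addSubgroupOf K := QuotientAddGroup.mk ⟨x, hxK⟩
  have hy : addOrderOf y = q := by
    refine addOrderOf_eq_prime ?_ ?_
    · exact (QuotientAddGroup.eq_zero_iff (N := H.addSubgroupOf K) (q • ⟨x, hxK⟩)).2 (hqK x hxK)
    · exact fun h ↦ hxH ((QuotientAddGroup.eq_zero_iff (N := H.addSubgroupOf K) ⟨x, hxK⟩).1 h)
  exact hy ▸ addOrderOf_dvd_natCard y

variable {R : Type*} [CommRing R]

lemma prime_dvd_index_of_natCast_mem {P : Ideal R} (hP : P ≠ ⊤) {q : ℕ} (hq : q.Prime)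
    (hqP : (q : R) ∈ P) : q ∣ P.toAddSubgroup.index := by
  rw [← AddSubgroup.relIndex_top_right]
  refine prime_dvd_relIndex_of_forall_nsmul_mem hq (fun x _ ↦ ?_) fun h ↦
    hP ((Ideal.eq_top_iff_one P).2 (h (AddSubgroup.mem_top 1)))
  simpa using P.mul_mem_right x hqP

/-- Both `R ⧸ P` and `P ⧸ P ^ 2` are nontrivial groups of exponent `q`. -/
lemma prime_sq_dvd_index_sq [IsDomain R] [CharZero R] [IsNoetherianRing R] {P : Ideal R}
    (hP : P ≠ ⊤) {q : ℕ} (hq : q.Prime) (hqP : (q : R) ∈ P) :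
    q ^ 2 ∣ (P ^ 2).toAddSubgroup.index := by
  have hP0 : P ≠ ⊥ := by
    rintro rfl
    exact hq.ne_zero (by simpa using hqP)
  have hlt : ¬ P ≤ P ^ 2 := by
    intro hle
    have hidem : IsIdempotentElem P := by
      rw [IsIdempotentElem, ← sq]
      exact (Ideal.pow_le_self two_ne_zero).antisymm hle
    exact ((Ideal.isIdempotentElem_iff_eq_bot_or_top P (IsNoetherian.noetherian P)).1 hidem).elim
      hP0 hP
  have hrel : q ∣ (P ^ 2).toAddSubgroup.relIndex P.toAddSubgroup := by
    refine prime_dvd_relIndex_of_forall_nsmul_mem hq (fun x hx ↦ ?_) hlt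
    have : (q : R) * x ∈ P ^ 2 := sq P ▸ Ideal.mul_mem_mul hqP hx
    simpa using this
  have hle : (P ^ 2).toAddSubgroup ≤ P.toAddSubgroup := Ideal.pow_le_self two_ne_zero
  rw [← AddSubgroup.relIndex_mul_index hle, sq]
  exact mul_dvd_mul hrel (prime_dvd_index_of_natCast_mem hP hq hqP)

lemma index_span_singleton_eq_natAbs_norm [IsDomain R] [Module.Free ℤ R] [Module.Finite ℤ R]
    {z : R} (hz : z ≠ 0) :
    (Ideal.span {z}).toAddSubgroup.index = (Algebra.norm ℤ z).natAbs := by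
  let e : R ≃ₗ[ℤ] LinearMap.range (LinearMap.mulLeft ℤ z) :=
    LinearEquiv.ofInjective (LinearMap.mulLeft ℤ z) (mul_right_injective₀ hz)
  have hspan : (Ideal.span {z}).toAddSubgroup =
      (LinearMap.range (LinearMap.mulLeft ℤ z)).toAddSubgroup := by
    ext x
    simp [Ideal.mem_span_singleton', mul_comm z]
  rw [hspan, Algebra.norm_apply]
  exact (Submodule.natAbs_det_equiv (LinearMap.range (LinearMap.mulLeft ℤ z)) e).symm

variable [IsDomain R] [CharZero R] [Module.Finite ℤ R]

lemma prime_sq_dvd_natAbs_norm {P : Ideal R} (hP : P ≠ ⊤) {q : ℕ} (hq : q.Prime)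
    (hqP : (q : R) ∈ P) {z : R} (hz : z ∈ P ^ 2) : q ^ 2 ∣ (Algebra.norm ℤ z).natAbs := by
  rcases eq_or_ne z 0 with rfl | hz0
  · simp
  have : IsNoetherianRing R := IsNoetherianRing.of_finite ℤ R
  rw [← index_span_singleton_eq_natAbs_norm hz0]
  exact (prime_sq_dvd_index_sq hP hq hqP).trans
    (AddSubgroup.index_dvd_of_le ((Ideal.span_singleton_le_iff_mem _).2 hz))

lemma card_le_finrank_of_forall_natCast_mem {q : ℕ} (hq : q.Prime) {F : Finset (Ideal R)}
    (hF : ∀ P ∈ F, P.IsPrime ∧ (q : R) ∈ P) : F.card ≤ finrank ℤ R := by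
  have hcop : Pairwise (Function.onFun IsCoprime fun P : F ↦ P.1) := fun P Q hPQ ↦ by
    have := isMaximal_of_natCast_mem (hF P P.2).1 hq.ne_zero (hF P P.2).2
    have := isMaximal_of_natCast_mem (hF Q Q.2).1 hq.ne_zero (hF Q Q.2).2
    exact Ideal.isCoprime_of_isMaximal (Subtype.coe_injective.ne hPQ)
  have hindex : (⨅ P : F, P.1).toAddSubgroup.index = ∏ P : F, P.1.toAddSubgroup.index :=
    (Nat.card_congr (Ideal.quotientInfRingEquivPiQuotient _ hcop).toEquiv).trans Nat.card_pi
  have hrange : (nsmulAddMonoidHom (α := R) q).range ≤ (⨅ P : F, P.1).toAddSubgroup := by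
    rintro _ ⟨x, rfl⟩
    refine Ideal.mem_iInf.2 fun P ↦ ?_
    simpa using P.1.mul_mem_right x (hF P P.2).2
  have hdvd : q ^ F.card ∣ q ^ finrank ℤ R :=
    calc q ^ F.card = ∏ _P : F, q := by simp
      _ ∣ ∏ P : F, P.1.toAddSubgroup.index := Finset.prod_dvd_prod_of_dvd _ _ fun P _ ↦
        prime_dvd_index_of_natCast_mem (hF P P.2).1.ne_top hq (hF P P.2).2
      _ = (⨅ P : F, P.1).toAddSubgroup.index := hindex.symm
      _ ∣ (nsmulAddMonoidHom (α := R) q).range.index := AddSubgroup.index_dvd_of_le hrange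
      _ = q ^ finrank ℤ R := AddSubgroup.index_range_nsmul R q
  exact (Nat.pow_dvd_pow_iff_le_right hq.one_lt).1 hdvd

end Index

section Sieve

variable {R : Type*} [CommRing R] [IsDomain R] {ι : Type*} [Fintype ι] (b : Basis ι ℤ R)

lemma exists_forall_natAbs_norm_le :
    ∃ C : ℕ, ∀ z : R, (Algebra.norm ℤ z).natAbs ≤ C * coordHeight b z ^ Fintype.card ι := by
  classical
  obtain ⟨C, hC⟩ :=
    Int.eq_ofNat_of_zero_le (ClassGroup.normBound_pos AbsoluteValue.abs b).le
  refine ⟨C, fun z ↦ ?_⟩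
  have hcoord : ∀ i, AbsoluteValue.abs (b.repr z i) ≤ (coordHeight b z : ℤ) := fun i ↦ by
    have := (coordHeight_le_iff b).1 (le_refl (coordHeight b z)) i
    rw [AbsoluteValue.abs_apply, Int.abs_eq_natAbs]
    exact_mod_cast this
  have hnorm := ClassGroup.norm_le AbsoluteValue.abs b z hcoord
  rw [hC, AbsoluteValue.abs_apply, Int.abs_eq_natAbs] at hnorm
  exact_mod_cast hnorm

variable [CharZero R] [Module.Finite ℤ R] {b} {C : ℕ}
  (hC : ∀ z : R, (Algebra.norm ℤ z).natAbs ≤ C * coordHeight b z ^ Fintype.card ι)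
include hC

lemma prime_sq_le_mul_coordHeight_pow {P : Ideal R} (hP : P ≠ ⊤) {q : ℕ} (hq : q.Prime)
    (hqP : (q : R) ∈ P) {z : R} (hz : z ∈ P ^ 2) (hz0 : z ≠ 0) :
    q ^ 2 ≤ C * coordHeight b z ^ Fintype.card ι :=
  (Nat.le_of_dvd (Int.natAbs_pos.2 (Algebra.norm_ne_zero_iff.2 hz0))
    (prime_sq_dvd_natAbs_norm hP hq hqP hz)).trans (hC z)

variable [DecidableEq ι]

open Classical in
lemma card_filter_mem_sq_mul_le {P : Ideal R} (hP : P ≠ ⊤) {q M : ℕ} (hq : q.Prime)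
    (hqP : (q : R) ∈ P) (hM : M.Coprime q) (y : R) (B : ℕ) :
    {c ∈ coordBox b B | y + M * c ∈ P ^ 2}.card * q ^ 2 ≤
      C * (2 * B) ^ Fintype.card ι + q ^ 2 := by
  refine card_mul_le_of_le_mul_coordHeight_sub_pow (Finset.filter_subset _ _)
    fun c hc d hd hcd ↦ prime_sq_le_mul_coordHeight_pow hC hP hq hqP
      (mem_pow_of_natCast_mul_mem_pow hM hqP ?_) (sub_ne_zero.2 hcd)
  have hsub := (P ^ 2).sub_mem (Finset.mem_filter.1 hc).2 (Finset.mem_filter.1 hd).2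
  rwa [add_sub_add_left_eq_sub, ← mul_sub] at hsub

open Classical in
lemma card_filter_not_isKFreeAt_mul_le {q M : ℕ} (hq : q.Prime) (hM : M.Coprime q) (y : R)
    (B : ℕ) :
    {c ∈ coordBox b B | ¬ IsKFreeAt q 2 (y + M * c)}.card * q ^ 2 ≤
      finrank ℤ R * (C * (2 * B) ^ Fintype.card ι + q ^ 2) := by
  set s := {c ∈ coordBox b B | ¬ IsKFreeAt q 2 (y + M * c)}
  have hwitness : ∀ c ∈ s, ∃ P : Ideal R, P.IsPrime ∧ (q : R) ∈ P ∧ y + M * c ∈ P ^ 2 := by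
    intro c hc
    simpa [IsKFreeAt] using (Finset.mem_filter.1 hc).2
  choose! f hf using hwitness
  have himage : ∀ P ∈ s.image f, P.IsPrime ∧ (q : R) ∈ P := by
    intro P hP
    obtain ⟨c, hc, rfl⟩ := Finset.mem_image.1 hP
    exact ⟨(hf c hc).1, (hf c hc).2.1⟩
  have hfiber : ∀ P ∈ s.image f,
      {c ∈ s | f c = P}.card * q ^ 2 ≤ C * (2 * B) ^ Fintype.card ι + q ^ 2 := by
    intro P hP
    have hsub : {c ∈ s | f c = P} ⊆ {c ∈ coordBox b B | y + M * c ∈ P ^ 2} := by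
      intro c hc
      obtain ⟨hcs, rfl⟩ := Finset.mem_filter.1 hc
      exact Finset.mem_filter.2 ⟨(Finset.mem_filter.1 hcs).1, (hf c hcs).2.2⟩
    exact (Nat.mul_le_mul_right _ (Finset.card_le_card hsub)).trans
      (card_filter_mem_sq_mul_le hC (himage P hP).1.ne_top hq (himage P hP).2 hM y B)
  calc s.card * q ^ 2 = ∑ P ∈ s.image f, {c ∈ s | f c = P}.card * q ^ 2 := by
        rw [Finset.card_eq_sum_card_image f s, Finset.sum_mul]
    _ ≤ (s.image f).card * (C * (2 * B) ^ Fintype.card ι + q ^ 2) :=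
      Finset.sum_le_card_nsmul _ _ _ hfiber
    _ ≤ finrank ℤ R * (C * (2 * B) ^ Fintype.card ι + q ^ 2) :=
      Nat.mul_le_mul_right _ (card_le_finrank_of_forall_natCast_mem hq himage)

lemma prime_sq_le_mul_card_coordBox {y : R} {M B : ℕ} (hy : ¬ (M : R) ∣ y) {c : R}
    (hc : c ∈ coordBox b B) (hB : 0 < B) {q : ℕ} (hq : q.Prime)
    (hqc : ¬ IsKFreeAt q 2 (y + M * c)) :
    q ^ 2 ≤ C * (coordHeight b y + M) ^ Fintype.card ι * (coordBox b B).card := by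
  obtain ⟨P, hP, hqP, hmem⟩ : ∃ P : Ideal R, P.IsPrime ∧ (q : R) ∈ P ∧ y + M * c ∈ P ^ 2 := by
    simpa [IsKFreeAt] using hqc
  have hne : y + M * c ≠ 0 := fun h ↦
    hy ⟨-c, by linear_combination h⟩
  have hheight : coordHeight b (y + M * c) ≤ (coordHeight b y + M) * B :=
    calc coordHeight b (y + M * c) ≤ coordHeight b y + M * coordHeight b c := by
          simpa using coordHeight_add_nsmul_le b y c M
      _ ≤ coordHeight b y * B + M * B :=
        add_le_add (Nat.le_mul_of_pos_right _ hB)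
          (Nat.mul_le_mul_left M (coordHeight_le_of_mem_coordBox hc))
      _ = (coordHeight b y + M) * B := (add_mul _ _ _).symm
  calc q ^ 2 ≤ C * coordHeight b (y + M * c) ^ Fintype.card ι :=
        prime_sq_le_mul_coordHeight_pow hC hP.ne_top hq hqP hmem hne
    _ ≤ C * ((coordHeight b y + M) * B) ^ Fintype.card ι := by gcongr
    _ = C * (coordHeight b y + M) ^ Fintype.card ι * (coordBox b B).card := by
      rw [card_coordBox, mul_pow, mul_assoc]

omit [DecidableEq ι] in
lemma exists_forall_isKFreeAt_two_of_lt {T : ℕ}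
    (hT : 2 * (finrank ℤ R * C * 2 ^ Fintype.card ι) < T) {y : R} {M : ℕ}
    (hy : ¬ (M : R) ∣ y) :
    ∃ c : R, ∀ q : ℕ, q.Prime → T < q → M.Coprime q → IsKFreeAt q 2 (y + M * c) := by
  classical
  by_contra! hbad
  obtain ⟨E, hE⟩ : ∃ E, E = C * (coordHeight b y + M) ^ Fintype.card ι := ⟨_, rfl⟩
  obtain ⟨B, hB⟩ : ∃ B, 4 * finrank ℤ R ^ 2 * E < B := exists_gt _
  let bad : ℕ → Finset R := fun q ↦
    {c ∈ coordBox b B | q.Prime ∧ M.Coprime q ∧ ¬ IsKFreeAt q 2 (y + M * c)}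
  have hcover : ∀ c ∈ coordBox b B, ∃ q, T < q ∧ q ^ 2 ≤ E * (coordBox b B).card ∧ c ∈ bad q := by
    intro c hc
    obtain ⟨q, hq, hTq, hMq, hqc⟩ := hbad c
    exact ⟨q, hTq, hE ▸ prime_sq_le_mul_card_coordBox hC hy hc hB.pos hq hqc,
      Finset.mem_filter.2 ⟨hc, hq, hMq, hqc⟩⟩
  have hbound : ∀ q, (bad q).card * q ^ 2 ≤
      finrank ℤ R * C * 2 ^ Fintype.card ι * (coordBox b B).card + finrank ℤ R * q ^ 2 := by
    intro q
    by_cases hq : q.Prime ∧ M.Coprime q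
    · have hsub : bad q ⊆ {c ∈ coordBox b B | ¬ IsKFreeAt q 2 (y + M * c)} :=
        Finset.monotone_filter_right _ fun c _ h ↦ h.2.2
      calc (bad q).card * q ^ 2 ≤ finrank ℤ R * (C * (2 * B) ^ Fintype.card ι + q ^ 2) :=
            (Nat.mul_le_mul_right _ (Finset.card_le_card hsub)).trans
              (card_filter_not_isKFreeAt_mul_le hC hq.1 hq.2 y B)
        _ = finrank ℤ R * C * 2 ^ Fintype.card ι * (coordBox b B).card + finrank ℤ R * q ^ 2 := by
          rw [card_coordBox, mul_pow]
          ring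
    · have : bad q = ∅ := Finset.filter_false_of_mem fun c _ h ↦ hq ⟨h.1, h.2.1⟩
      simp [this]
  have hle : (coordBox b B).card ≤ 4 * finrank ℤ R ^ 2 * E :=
    card_le_of_forall_exists_sq_le_mul_card hT hcover fun q _ ↦ hbound q
  have hBle : B ≤ (coordBox b B).card := by
    rw [card_coordBox, ← finrank_eq_card_basis b]
    exact Nat.le_self_pow finrank_pos.ne' B
  exact absurd hB (hBle.trans hle).not_gt

end Sieve

section Lifting

lemma exists_dvd_sub_and_dvd_sub_of_isCoprime {R : Type*} [CommRing R] {a b : R}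
    (hab : IsCoprime a b) (x y : R) : ∃ z : R, a ∣ z - x ∧ b ∣ z - y := by
  obtain ⟨u, v, huv⟩ := hab
  exact ⟨x * (v * b) + y * (u * a), ⟨u * (y - x), by linear_combination x * huv⟩,
    ⟨v * (x - y), by linear_combination y * huv⟩⟩

lemma exists_coprime_forall_prime_dvd_or_coprime {p : ℕ} (hp : p.Prime) (T : ℕ) :
    ∃ m : ℕ, p.Coprime m ∧ ∀ q : ℕ, q.Prime → q ≠ p → q ∣ m ∨ (T < q ∧ m.Coprime q) := by
  refine ⟨ordCompl[p] T.factorial, Nat.coprime_ordCompl hp T.factorial_ne_zero, fun q hq hqp ↦ ?_⟩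
  rcases le_or_gt q T with hqT | hTq
  · exact .inl (Nat.dvd_ordCompl_of_dvd_not_dvd (hq.dvd_factorial.2 hqT)
      fun h ↦ hqp ((Nat.prime_dvd_prime_iff_eq hp hq).1 h).symm)
  · exact .inr ⟨hTq, (hq.coprime_factorial_of_lt hTq).symm.coprime_dvd_left (Nat.ordCompl_dvd _ _)⟩

variable {R : Type*} [CommRing R] [IsDomain R] [CharZero R] [Module.Finite ℤ R]

variable (R) in
lemma exists_forall_exists_forall_isKFreeAt_two :
    ∃ T : ℕ, ∀ (y : R) (M : ℕ), ¬ (M : R) ∣ y →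
      ∃ c : R, ∀ q : ℕ, q.Prime → T < q → M.Coprime q → IsKFreeAt q 2 (y + M * c) := by
  obtain ⟨C, hC⟩ := exists_forall_natAbs_norm_le (finBasis ℤ R)
  obtain ⟨T, hT⟩ := exists_gt (2 * (finrank ℤ R * C * 2 ^ Fintype.card (Fin (finrank ℤ R))))
  exact ⟨T, fun y M hy ↦ exists_forall_isKFreeAt_two_of_lt hC hT hy⟩

lemma exists_isKFree_add_pow_mul {k N p : ℕ} (hk : 2 ≤ k) (hkN : k ≤ N) (hp : p.Prime) {x : R}
    (hx : IsKFreeAt p k x) : ∃ w : R, IsKFree k (x + (p : R) ^ N * w) := by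
  obtain ⟨T, hT⟩ := exists_forall_exists_forall_isKFreeAt_two R
  obtain ⟨m, hpm, hm⟩ := exists_coprime_forall_prime_dvd_or_coprime hp T
  obtain ⟨y, ⟨u, hu⟩, v, hv⟩ := exists_dvd_sub_and_dvd_sub_of_isCoprime
    ((hpm.cast (R := R)).pow_left (m := N)) x 1
  have hndvd : ¬ ((p ^ N * m : ℕ) : R) ∣ y := by
    rintro ⟨d, hd⟩
    push_cast at hd
    exact (hx.mono hkN).not_pow_dvd hp ⟨m * d - u, by linear_combination hd - hu⟩
  obtain ⟨c, hc⟩ := hT y (p ^ N * m) hndvd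
  have hmodp : x + (p : R) ^ N * (u + m * c) = y + (p ^ N * m : ℕ) * c := by
    push_cast
    linear_combination -hu
  have hmodm : (m : R) ∣ x + (p : R) ^ N * (u + m * c) - 1 :=
    ⟨v + p ^ N * c, by linear_combination hv - hu⟩
  refine ⟨u + m * c, isKFree_iff_forall_isKFreeAt.2 fun q hq ↦ ?_⟩
  rcases eq_or_ne q p with rfl | hqp
  · refine hx.of_pow_dvd_sub ?_
    rw [add_sub_cancel_left]
    exact (pow_dvd_pow _ hkN).mul_right _
  rcases hm q hq hqp with hqm | ⟨hTq, hmq⟩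
  · exact isKFreeAt_of_natCast_dvd_sub_one (by omega) ((Nat.cast_dvd_cast hqm).trans hmodm)
  · have hpq : (p ^ N).Coprime q := .pow_left N ((Nat.coprime_primes hp hq).2 hqp.symm)
    rw [hmodp]
    exact (hc q hq hTq (hpq.mul_left hmq)).mono hk

end Lifting

theorem kfree_local_global_general {R S : Type*} [CommRing R] [IsDomain R] [CharZero R]
    [Module.Finite ℤ R] [CommRing S] [IsDomain S] [CharZero S] [Algebra.IsIntegral ℤ S] {k : ℕ}
    (l : ℕ) (hk : 2 ≤ k) (A : R →ₗ[ℤ] S) :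
    (∀ x, IsKFree k x → IsKFree l (A x)) ↔
      ∀ p : ℕ, p.Prime → ∀ x, IsKFreeAt p k x → IsKFreeAt p l (A x) := by
  constructor
  · intro hglobal p hp x hx
    obtain ⟨w, hw⟩ := exists_isKFree_add_pow_mul hk (le_max_left k l) hp hx
    have hlift : IsKFreeAt p l (A (x + (p : R) ^ max k l * w)) :=
      isKFree_iff_forall_isKFreeAt.1 (hglobal _ hw) p hp
    have hA : A ((p : R) ^ max k l * w) = (p : S) ^ max k l * A w := by
      simpa using A.map_smul ((p : ℤ) ^ max k l) w
    refine hlift.of_pow_dvd_sub ?_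
    rw [map_add, sub_add_cancel_left, hA, dvd_neg]
    exact (pow_dvd_pow _ (le_max_right k l)).mul_right _
  · intro hlocal x hx
    exact isKFree_iff_forall_isKFreeAt.2 fun p hp ↦
      hlocal p hp x (isKFree_iff_forall_isKFreeAt.1 hx p hp)

/-- For a ℤ-linear map `A : 𝓞 K → 𝓞 L` and `k ≥ 2`, `l ≥ 1`, the global condition
`A(V_{K,k}) ⊆ V_{L,l}` is equivalent to the local condition `A(V_{K,k,p}) ⊆ V_{L,l,p}`
for all prime numbers `p`. -/
theorem kfree_local_global {K L : Type*} [Field K] [NumberField K]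
    [Field L] [NumberField L] (k l : ℕ) (hk : 2 ≤ k) (hl : 1 ≤ l)
    (A : 𝓞 K →ₗ[ℤ] 𝓞 L) :
    ⇑A '' kfreeSet K k ⊆ kfreeSet L l ↔
      ∀ p : ℕ, p.Prime → ∀ x : 𝓞 K,
        (∀ P : Ideal (𝓞 K), P.IsPrime → (p : 𝓞 K) ∈ P → x ∉ P ^ k) →
        ∀ Q : Ideal (𝓞 L), Q.IsPrime → (p : 𝓞 L) ∈ Q → A x ∉ Q ^ l := by
  rw [Set.image_subset_iff]
  exact kfree_local_global_general l hk A
end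

section
/- Let K be a number field of degree n over ℚ and let k ≥ 2 be an integer. Then there exists a constant C > 0 such that for all real numbers X, M ≥ 1: #{x ∈ 𝓞_K : ‖x‖ ≤ X and there exists a nonzero ideal 𝔞 of 𝓞_K with N(𝔞) > M and x ∈ 𝔞^k} ≤ C·(1 + X^n / M^{k−1}). -/
/-!
A nonzero `x ∈ I` satisfies `N(I) ≤ |N(x)| ≤ ‖x‖ⁿ`, so distinct elements of `I` have images at
distance at least `N(I)^(1/n)` in the mixed space, where the sup norm is the house. Packing disjoint
balls in this `n`-dimensional space bounds the number of nonzero `x ∈ I` with `‖x‖ ≤ X` by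
`3ⁿ Xⁿ / N(I)`, without an additive error: the point `0` is excluded, and for `N(I) > Xⁿ` there is
nothing left to count. Apply this to `I = 𝔞ᵏ` and sum over the ideals with `N(𝔞) > M`; as there are
`O(T)` ideals of norm at most `T`, partial summation gives `∑ N(𝔞)⁻ᵏ = O(1 / Mᵏ⁻¹)`.
-/

open NumberField

open Filter MeasureTheory Module Set Topology

section Packing

variable {E : Type*} [NormedAddCommGroup E] [NormedSpace ℝ E] [FiniteDimensional ℝ E]

lemma card_le_of_norm_le_of_pairwise_le_dist {ι : Type*} (s : Finset ι) {f : ι → E} {r R : ℝ}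
    (hr : 0 < r) (hR : 0 ≤ R) (hf : ∀ i ∈ s, ‖f i‖ ≤ R)
    (hsep : (s : Set ι).Pairwise fun i j ↦ r ≤ dist (f i) (f j)) :
    (s.card : ℝ) ≤ (1 + 2 * R / r) ^ finrank ℝ E := by
  borelize E
  let μ : Measure E := Measure.addHaar
  have hdisj : (s : Set ι).PairwiseDisjoint fun i ↦ Metric.ball (f i) (r / 2) :=
    fun i hi j hj hij ↦ Metric.ball_disjoint_ball (by linarith [hsep hi hj hij])
  have hsub : ⋃ i ∈ s, Metric.ball (f i) (r / 2) ⊆ Metric.ball 0 (R + r / 2) :=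
    iUnion₂_subset fun i hi ↦ Metric.ball_subset_ball' (by
      rw [dist_zero_right]
      linarith [hf i hi])
  have hvol (x : E) {ρ : ℝ} (hρ : 0 < ρ) :
      μ.real (Metric.ball x ρ) = ρ ^ finrank ℝ E * μ.real (Metric.ball 0 1) := by
    rw [measureReal_def, μ.addHaar_ball_of_pos x hρ, ENNReal.toReal_mul,
      ENNReal.toReal_ofReal (by positivity), measureReal_def]
  have hunit : 0 < μ.real (Metric.ball (0 : E) 1) :=
    ENNReal.toReal_pos (Metric.measure_ball_pos μ _ one_pos).ne' measure_ball_lt_top.ne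
  have hle := measureReal_mono (μ := μ) hsub measure_ball_lt_top.ne
  rw [measureReal_biUnion_finset hdisj fun _ _ ↦ measurableSet_ball,
    Finset.sum_congr rfl fun i _ ↦ hvol (f i) (half_pos hr),
    hvol 0 (by positivity : 0 < R + r / 2),
    Finset.sum_const, nsmul_eq_mul, ← mul_assoc, mul_le_mul_iff_left₀ hunit,
    ← le_div_iff₀ (by positivity), ← div_pow] at hle
  have hratio : (R + r / 2) / (r / 2) = 1 + 2 * R / r := by
    field_simp
    ring
  rwa [hratio] at hle

end Packing

lemma integral_Ioi_const_mul_rpow_neg_sub_one {c s : ℝ} (hc : 0 < c) (hs : 0 < s) :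
    ∫ t in Ioi c, s * t ^ (-s - 1) = c ^ (-s) := by
  rw [integral_const_mul, integral_Ioi_rpow_of_lt (by linarith) hc, sub_add_cancel]
  field_simp

lemma sum_indicator_Ioi_le_of_card_le {ι : Type*} (S : Finset ι) (v : ι → ℝ) {g : ℝ → ℝ} {t N : ℝ}
    (hg : 0 ≤ g t) (hcard : ((S.filter fun i ↦ v i ≤ t).card : ℝ) ≤ N) :
    ∑ i ∈ S, (Ioi (v i)).indicator g t ≤ N * g t := by
  calc ∑ i ∈ S, (Ioi (v i)).indicator g t ≤ ∑ i ∈ S, if v i ≤ t then g t else 0 := by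
        refine Finset.sum_le_sum fun i _ ↦ ?_
        rw [indicator_apply]
        split_ifs with hlt hle hle
        · rfl
        · exact absurd (le_of_lt hlt) hle
        · exact hg
        · rfl
    _ = (S.filter fun i ↦ v i ≤ t).card * g t := by
        rw [← Finset.sum_filter, Finset.sum_const, nsmul_eq_mul]
    _ ≤ N * g t := by gcongr

lemma sum_rpow_neg_le_of_card_le {ι : Type*} (S : Finset ι) {v : ι → ℝ} {A M s : ℝ} (hM : 0 < M)
    (hs : 1 < s) (hv : ∀ i ∈ S, M ≤ v i)
    (hcard : ∀ T, M < T → ((S.filter fun i ↦ v i ≤ T).card : ℝ) ≤ A * T) :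
    ∑ i ∈ S, v i ^ (-s) ≤ A * (s / (s - 1)) * M ^ (1 - s) := by
  let g : ℝ → ℝ := fun t ↦ s * t ^ (-s - 1)
  have hg : IntegrableOn g (Ioi M) :=
    (integrableOn_Ioi_rpow_of_lt (by linarith) hM).const_mul s
  calc ∑ i ∈ S, v i ^ (-s)
      = ∑ i ∈ S, ∫ t in Ioi M, (Ioi (v i)).indicator g t := by
        refine Finset.sum_congr rfl fun i hi ↦ ?_
        rw [setIntegral_indicator measurableSet_Ioi, inter_eq_right.2 (Ioi_subset_Ioi (hv i hi)),
          integral_Ioi_const_mul_rpow_neg_sub_one (hM.trans_le (hv i hi)) (by linarith)]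
    _ = ∫ t in Ioi M, ∑ i ∈ S, (Ioi (v i)).indicator g t :=
        (integral_finsetSum _ fun i _ ↦ hg.indicator measurableSet_Ioi).symm
    _ ≤ ∫ t in Ioi M, A * s * t ^ (-s) := by
        refine setIntegral_mono_on
          (integrable_finsetSum _ fun i _ ↦ hg.indicator measurableSet_Ioi)
          ((integrableOn_Ioi_rpow_of_lt (by linarith) hM).const_mul _) measurableSet_Ioi
          fun t ht ↦ ?_
        have ht₀ : 0 < t := hM.trans ht
        calc ∑ i ∈ S, (Ioi (v i)).indicator g t ≤ A * t * (s * t ^ (-s - 1)) :=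
              sum_indicator_Ioi_le_of_card_le S v (g := g) (by positivity) (hcard t ht)
          _ = A * s * t ^ (-s) := by
              rw [Real.rpow_sub_one ht₀.ne']
              field_simp
    _ = A * (s / (s - 1)) * M ^ (1 - s) := by
        rw [integral_const_mul, integral_Ioi_rpow_of_lt (by linarith) hM,
          show -s + 1 = -(s - 1) by ring, show 1 - s = -(s - 1) by ring, neg_div_neg_eq]
        ring

lemma exists_forall_le_mul_of_tendsto_div {f : ℝ → ℝ} (hf : Monotone f) {c a : ℝ} (ha : 0 < a)
    (h : Tendsto (fun T ↦ f T / T) atTop (𝓝 c)) : ∃ A, ∀ T, a ≤ T → f T ≤ A * T := by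
  obtain ⟨T₀, hT₀⟩ := eventually_atTop.1 (h.eventually_le_const (lt_add_one c))
  refine ⟨max (c + 1) (|f T₀| / a), fun T hT ↦ ?_⟩
  have hT_pos : 0 < T := ha.trans_le hT
  rcases le_total T₀ T with hle | hle
  · calc f T ≤ (c + 1) * T := (div_le_iff₀ hT_pos).1 (hT₀ T hle)
      _ ≤ _ := by gcongr; exact le_max_left _ _
  · calc f T ≤ |f T₀| := (hf hle).trans (le_abs_self _)
      _ = |f T₀| / a * a := (div_mul_cancel₀ _ ha.ne').symm
      _ ≤ _ := by gcongr; exact le_max_right _ _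

section NumberField

variable {K : Type*} [Field K] [NumberField K]

open scoped Classical in
lemma norm_mixedEmbedding_eq_house (x : K) : ‖mixedEmbedding K x‖ = house x := by
  refine eq_of_forall_ge_iff fun r ↦ ?_
  rw [mixedEmbedding.norm_eq_sup'_normAtPlace, Finset.sup'_le_iff, house,
    canonicalEmbedding.norm_le_iff, ← InfinitePlace.le_iff_le]
  simp only [Finset.mem_univ, forall_const, mixedEmbedding.normAtPlace_apply]

lemma finite_setOf_house_le (X : ℝ) : {x : 𝓞 K | house (x : K) ≤ X}.Finite :=
  ((Embeddings.finite_of_norm_le K ℂ X).preimage RingOfIntegers.coe_injective.injOn).subset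
    fun x hx ↦ ⟨x.isIntegral_coe, (canonicalEmbedding.norm_le_iff _ _).1 hx⟩

lemma abs_norm_le_house_pow (x : K) : |Algebra.norm ℚ x| ≤ house x ^ finrank ℚ K := by
  rw [← InfinitePlace.prod_eq_abs_norm, ← InfinitePlace.sum_mult_eq,
    ← Finset.prod_pow_eq_pow_sum]
  gcongr with w
  exact (InfinitePlace.le_iff_le x _).2 (norm_embedding_le_house x) w

lemma absNorm_le_house_pow {I : Ideal (𝓞 K)} {x : 𝓞 K} (hxI : x ∈ I) (hx : x ≠ 0) :
    (Ideal.absNorm I : ℝ) ≤ house (x : K) ^ finrank ℚ K := by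
  have hdvd : Ideal.absNorm I ∣ (Algebra.norm ℤ x).natAbs := by
    simpa only [Ideal.absNorm_span_singleton] using
      Ideal.absNorm_dvd_absNorm_of_le ((Ideal.span_singleton_le_iff_mem I).2 hxI)
  calc (Ideal.absNorm I : ℝ) ≤ (Algebra.norm ℤ x).natAbs := mod_cast
        Nat.le_of_dvd (Int.natAbs_pos.2 (Algebra.norm_ne_zero_iff.2 hx)) hdvd
    _ = |Algebra.norm ℚ (x : K)| := by rw [← Algebra.coe_norm_int]; simp
    _ ≤ _ := abs_norm_le_house_pow _

/-- The nonzero elements of `I` of house at most `X`. -/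
def nonzeroOfHouseLE (I : Ideal (𝓞 K)) (X : ℝ) : Set (𝓞 K) :=
  {x | x ∈ I ∧ x ≠ 0 ∧ house (x : K) ≤ X}

lemma finite_nonzeroOfHouseLE (I : Ideal (𝓞 K)) (X : ℝ) : (nonzeroOfHouseLE I X).Finite :=
  (finite_setOf_house_le X).subset fun _ hx ↦ hx.2.2

open scoped Classical in
lemma ncard_nonzeroOfHouseLE_le (I : Ideal (𝓞 K)) {X : ℝ} (hX : 0 ≤ X) :
    ((nonzeroOfHouseLE I X).ncard : ℝ) ≤ 3 ^ finrank ℚ K * (X ^ finrank ℚ K / Ideal.absNorm I) := by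
  rcases (nonzeroOfHouseLE I X).eq_empty_or_nonempty with hempty | ⟨x₀, hx₀I, hx₀, hx₀X⟩
  · rw [hempty, ncard_empty, Nat.cast_zero]
    positivity
  set n := finrank ℚ K with hn
  have hn₀ : n ≠ 0 := finrank_pos.ne'
  have hN : (0 : ℝ) < Ideal.absNorm I := by
    have hI : I ≠ ⊥ := fun h ↦ hx₀ (by rwa [h, Ideal.mem_bot] at hx₀I)
    exact mod_cast Nat.pos_of_ne_zero (Ideal.absNorm_eq_zero_iff.not.2 hI)
  obtain ⟨r, hr, hrN⟩ : ∃ r : ℝ, 0 < r ∧ r ^ n = Ideal.absNorm I :=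
    ⟨(Ideal.absNorm I : ℝ) ^ (n⁻¹ : ℝ), by positivity, Real.rpow_inv_natCast_pow hN.le hn₀⟩
  have hr_le {x : 𝓞 K} (hxI : x ∈ I) (hx : x ≠ 0) : r ≤ house (x : K) :=
    le_of_pow_le_pow_left₀ hn₀ (house_nonneg _) (hrN ▸ absNorm_le_house_pow hxI hx)
  have hrX : 1 ≤ X / r := (one_le_div hr).2 ((hr_le hx₀I hx₀).trans hx₀X)
  have hpack := card_le_of_norm_le_of_pairwise_le_dist (finite_nonzeroOfHouseLE I X).toFinset
    (f := fun x ↦ mixedEmbedding K x) hr hX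
    (fun x hx ↦ by
      rw [norm_mixedEmbedding_eq_house]
      exact ((Finite.mem_toFinset _).1 hx).2.2)
    (fun x hx y hy hxy ↦ by
      simp only [Finite.coe_toFinset] at hx hy
      rw [dist_eq_norm, ← map_sub, norm_mixedEmbedding_eq_house, ← map_sub]
      exact hr_le (I.sub_mem hx.1 hy.1) (sub_ne_zero.2 hxy))
  rw [← ncard_eq_toFinset_card _ (finite_nonzeroOfHouseLE I X), mixedEmbedding.finrank,
    ← hn] at hpack
  calc ((nonzeroOfHouseLE I X).ncard : ℝ) ≤ (1 + 2 * X / r) ^ n := hpack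
    _ ≤ (3 * (X / r)) ^ n := by
        gcongr
        rw [mul_div_assoc]
        linarith
    _ = 3 ^ n * (X ^ n / Ideal.absNorm I) := by rw [mul_pow, div_pow, hrN]

variable (K) in
lemma finite_setOf_absNorm_le (T : ℝ) : {I : Ideal (𝓞 K) | (Ideal.absNorm I : ℝ) ≤ T}.Finite :=
  (Ideal.finite_setOfPred_absNorm_le ⌊T⌋₊).subset fun _ hI ↦ Nat.le_floor hI

variable (K) in
lemma exists_ncard_absNorm_le_le_mul : ∃ A : ℝ, ∀ T : ℝ, 1 ≤ T →
    ({I : Ideal (𝓞 K) | (Ideal.absNorm I : ℝ) ≤ T}.ncard : ℝ) ≤ A * T :=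
  exists_forall_le_mul_of_tendsto_div
    (f := fun T ↦ Nat.card {I : Ideal (𝓞 K) // (Ideal.absNorm I : ℝ) ≤ T})
    (fun _ T hT ↦ Nat.cast_le.2 <|
      ncard_le_ncard (fun _ hI ↦ le_trans hI hT) (finite_setOf_absNorm_le K T))
    one_pos (NumberField.Ideal.tendsto_norm_le_div_atTop K)

variable (K) in
lemma exists_sum_inv_absNorm_pow_le {k : ℕ} (hk : 2 ≤ k) :
    ∃ B : ℝ, 0 ≤ B ∧ ∀ M : ℝ, 1 ≤ M → ∀ S : Finset (Ideal (𝓞 K)),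
      (∀ a ∈ S, M ≤ Ideal.absNorm a) →
        ∑ a ∈ S, ((Ideal.absNorm a : ℝ) ^ k)⁻¹ ≤ B / M ^ (k - 1) := by
  obtain ⟨A, hA⟩ := exists_ncard_absNorm_le_le_mul K
  have hA₀ : 0 ≤ A := by simpa using (Nat.cast_nonneg _).trans (hA 1 le_rfl)
  have hk₁ : (1 : ℝ) < k := mod_cast hk
  refine ⟨A * (k / (k - 1)), mul_nonneg hA₀ (div_nonneg (by linarith) (by linarith)),
    fun M hM S hS ↦ ?_⟩
  have hcard (T : ℝ) (hT : M < T) :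
      ((S.filter fun a ↦ (Ideal.absNorm a : ℝ) ≤ T).card : ℝ) ≤ A * T := by
    refine le_trans ?_ (hA T (hM.trans hT.le))
    rw [← ncard_coe_finset]
    exact mod_cast ncard_le_ncard (fun a ha ↦ (Finset.mem_filter.1 (Finset.mem_coe.1 ha)).2)
      (finite_setOf_absNorm_le K T)
  have hM₀ : 0 < M := one_pos.trans_le hM
  have hsum := sum_rpow_neg_le_of_card_le S hM₀ hk₁ hS hcard
  have hexp : (1 - k : ℝ) = -((k - 1 : ℕ) : ℝ) := by
    rw [Nat.cast_pred (by lia)]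
    ring
  simpa only [hexp, Real.rpow_neg (Nat.cast_nonneg _), Real.rpow_neg hM₀.le, Real.rpow_natCast,
    ← div_eq_mul_inv] using hsum

variable (K) in
/-- The ideals of `𝓞 K` with norm in `(M, Y]`, a finite set. -/
noncomputable def idealsOfNormIoc (M Y : ℝ) : Finset (Ideal (𝓞 K)) :=
  ((finite_setOf_absNorm_le K Y).inter_of_right {a | M < Ideal.absNorm a}).toFinset

lemma mem_idealsOfNormIoc {M Y : ℝ} {a : Ideal (𝓞 K)} :
    a ∈ idealsOfNormIoc K M Y ↔ M < Ideal.absNorm a ∧ (Ideal.absNorm a : ℝ) ≤ Y :=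
  Finite.mem_toFinset _

variable (K) in
/-- The integers of house at most `X` divisible by the `k`-th power of a nonzero ideal of norm
larger than `M`: the set counted in the tail estimate. -/
def divisibleByLargePow (k : ℕ) (X M : ℝ) : Set (𝓞 K) :=
  {x | house (x : K) ≤ X ∧ ∃ a : Ideal (𝓞 K), a ≠ ⊥ ∧ M < Ideal.absNorm a ∧ x ∈ a ^ k}

lemma divisibleByLargePow_subset {k : ℕ} (hk : k ≠ 0) (X M : ℝ) :
    divisibleByLargePow K k X M ⊆
      insert 0 (⋃ a ∈ idealsOfNormIoc K M (X ^ finrank ℚ K), nonzeroOfHouseLE (a ^ k) X) := by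
  rintro x ⟨hxX, a, -, haM, hxa⟩
  refine or_iff_not_imp_left.2 fun hx ↦ mem_iUnion₂.2 ⟨a, ?_, hxa, hx, hxX⟩
  refine mem_idealsOfNormIoc.2 ⟨haM, ?_⟩
  exact (absNorm_le_house_pow (Ideal.pow_le_self hk hxa) hx).trans
    (pow_le_pow_left₀ (house_nonneg _) hxX _)

lemma ncard_divisibleByLargePow_le {k : ℕ} (hk : k ≠ 0) (X M : ℝ) :
    (divisibleByLargePow K k X M).ncard ≤
      1 + ∑ a ∈ idealsOfNormIoc K M (X ^ finrank ℚ K), (nonzeroOfHouseLE (a ^ k) X).ncard := by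
  have hfin := (idealsOfNormIoc K M (X ^ finrank ℚ K)).finite_toSet.biUnion
    fun a _ ↦ finite_nonzeroOfHouseLE (a ^ k) X
  calc (divisibleByLargePow K k X M).ncard
      ≤ (insert 0 (⋃ a ∈ idealsOfNormIoc K M (X ^ finrank ℚ K),
          nonzeroOfHouseLE (a ^ k) X)).ncard :=
        ncard_le_ncard (divisibleByLargePow_subset hk X M) (hfin.insert 0)
    _ ≤ (⋃ a ∈ idealsOfNormIoc K M (X ^ finrank ℚ K), nonzeroOfHouseLE (a ^ k) X).ncard + 1 :=
        ncard_insert_le _ _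
    _ ≤ _ := by
        rw [add_comm]
        gcongr
        exact Finset.set_ncard_biUnion_le _ _

end NumberField

/-- Tail estimate: the number of integers of house norm at most `X` divisible by the
`k`-th power of some ideal of norm larger than `M` is `O(1 + Xⁿ/M^{k−1})`,
uniformly in `X, M ≥ 1`. -/
theorem tail_estimate {K : Type*} [Field K] [NumberField K] (n k : ℕ)
    (hn : Module.finrank ℚ K = n) (hk : 2 ≤ k) :
    ∃ C : ℝ, 0 < C ∧ ∀ X M : ℝ, 1 ≤ X → 1 ≤ M →
      (Nat.card {x : 𝓞 K // house (x : K) ≤ X ∧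
          ∃ a : Ideal (𝓞 K), a ≠ ⊥ ∧ M < (Ideal.absNorm a : ℝ) ∧ x ∈ a ^ k} : ℝ)
        ≤ C * (1 + X ^ n / M ^ (k - 1)) := by
  subst hn
  obtain ⟨B, hB, hsum⟩ := exists_sum_inv_absNorm_pow_le K hk
  set n := finrank ℚ K
  refine ⟨1 + 3 ^ n * B, by positivity, fun X M hX hM ↦ ?_⟩
  have hcount (a : Ideal (𝓞 K)) : ((nonzeroOfHouseLE (a ^ k) X).ncard : ℝ) ≤
      3 ^ n * X ^ n * ((Ideal.absNorm a : ℝ) ^ k)⁻¹ := by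
    simpa [div_eq_mul_inv, mul_assoc] using ncard_nonzeroOfHouseLE_le (a ^ k) (by linarith)
  calc ((divisibleByLargePow K k X M).ncard : ℝ)
      ≤ 1 + ∑ a ∈ idealsOfNormIoc K M (X ^ n), ((nonzeroOfHouseLE (a ^ k) X).ncard : ℝ) :=
        mod_cast ncard_divisibleByLargePow_le (by lia) X M
    _ ≤ 1 + ∑ a ∈ idealsOfNormIoc K M (X ^ n), 3 ^ n * X ^ n * ((Ideal.absNorm a : ℝ) ^ k)⁻¹ := by
        gcongr with a
        exact hcount a
    _ ≤ 1 + 3 ^ n * X ^ n * (B / M ^ (k - 1)) := by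
        rw [← Finset.mul_sum]
        gcongr
        exact hsum M hM _ fun a ha ↦ (mem_idealsOfNormIoc.1 ha).1.le
    _ = 1 + 3 ^ n * B * (X ^ n / M ^ (k - 1)) := by ring
    _ ≤ (1 + 3 ^ n * B) * (1 + X ^ n / M ^ (k - 1)) := by
        have : 0 ≤ X ^ n / M ^ (k - 1) := by positivity
        have : 0 ≤ 3 ^ n * B := by positivity
        linarith
end

section
/- Let K and L be number fields. Then the set of prime numbers p that split completely in both K and L is infinite. -/
open NumberField

/-- A prime number `p` splits completely in a number field `K` if every prime ideal of
`𝓞 K` lying above `p` has ramification index 1 and residue degree 1. -/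
def SplitsCompletely (K : Type*) [Field K] [NumberField K] (p : ℕ) : Prop :=
  ∀ P : Ideal (𝓞 K), P.IsPrime → (p : 𝓞 K) ∈ P →
    Ideal.ramificationIdx' (Ideal.span {(p : ℤ)}) P = 1 ∧
    Ideal.inertiaDeg' (Ideal.span {(p : ℤ)}) P = 1


/-!
Complete splitting passes to subfields, so it suffices to treat one Galois number field `M` that
contains copies of `K` and `L`. There the Galois group permutes the primes above `p` transitively,
so `p` splits completely as soon as a single prime above it has ramification index and residue
degree 1.

Let `θ` be an integral primitive element of `M`, with minimal polynomial `f` over `ℤ`. By Euclid's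
argument, infinitely many primes `p` divide some value `f(n)`. Discard those that divide the
discriminant or the exponent of `ℤ[θ]`; the latter is nonzero because the conductor times the
different is generated by `f'(θ) ≠ 0`. For every remaining `p`, the linear factor `X - n` of
`f mod p` corresponds by Kummer–Dedekind to a prime of residue degree 1, and it is unramified.
-/

open Polynomial IntermediateField

theorem finite_preimage_eval {R : Type*} [CommRing R] [IsDomain R] {f : R[X]}
    (hf : 0 < f.natDegree) {s : Set R} (hs : s.Finite) : ((f.eval ·) ⁻¹' s).Finite := by
  refine hs.preimage' fun a _ ↦ ?_
  have hfa : f ≠ C a := by rintro rfl; simp at hf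
  exact preimage_eval_singleton hfa ▸ rootSet_finite (f - C a) R

/- Euclid's argument: if `c = f(a) ≠ 0`, then `f(a + c B! x) = c (1 + B! y)` for some `y`, and no
prime `p ≤ B` divides the second factor. -/
theorem exists_prime_gt_dvd_eval {f : ℤ[X]} (hf : 0 < f.natDegree) (B : ℕ) :
    ∃ p : ℕ, p.Prime ∧ B < p ∧ ∃ n : ℤ, (p : ℤ) ∣ f.eval n := by
  obtain ⟨a, ha⟩ := (finite_preimage_eval hf (Set.finite_singleton 0)).exists_notMem
  set c := f.eval a with hc
  have progression_injective : Function.Injective fun x : ℤ ↦ a + c * B.factorial * x :=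
    (add_right_injective a).comp
      (mul_right_injective₀ (mul_ne_zero ha (mod_cast B.factorial_ne_zero)))
  obtain ⟨x, hx⟩ := ((finite_preimage_eval hf (Set.toFinite {c, -c})).preimage
    progression_injective.injOn).exists_notMem
  obtain ⟨k, hk⟩ := f.sub_dvd_eval_sub (a + c * B.factorial * x) a
  have eval_eq : f.eval (a + c * B.factorial * x) = c * (1 + B.factorial * (x * k)) := by
    rw [← hc] at hk
    linear_combination hk
  have factor_ne_unit : (1 + B.factorial * (x * k) : ℤ).natAbs ≠ 1 := by
    intro h
    rcases Int.natAbs_eq_iff.mp h with h | h <;> exact hx (by simp [eval_eq, h])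
  obtain ⟨p, hp, hpdvd⟩ := Nat.exists_prime_and_dvd factor_ne_unit
  rw [← Int.natCast_dvd] at hpdvd
  refine ⟨p, hp, not_le.mp fun hle ↦ ?_, _, eval_eq ▸ hpdvd.mul_left c⟩
  have hpB : (p : ℤ) ∣ B.factorial := mod_cast hp.dvd_factorial.mpr hle
  have hp1 : (p : ℤ) ∣ 1 := (dvd_add_left (hpB.mul_right (x * k))).mp hpdvd
  exact hp.one_lt.ne' (Nat.dvd_one.mp (mod_cast hp1))

section PrimitiveElement

variable (A K : Type*) {B : Type*} (L : Type*) [CommRing A] [IsDomain A] [Field K] [CommRing B]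
  [Field L] [Algebra A K] [IsFractionRing A K] [Algebra B L] [Algebra A L] [Algebra K L]
  [IsScalarTower A K L] [IsIntegralClosure B A L] [FiniteDimensional K L]
  [Algebra.IsSeparable K L]

variable (B) in
include A in
theorem exists_adjoin_algebraMap_eq_top :
    ∃ θ : B, Algebra.adjoin K {algebraMap B L θ} = ⊤ := by
  obtain ⟨α, hα⟩ := Field.exists_primitive_element K L
  have α_isAlgebraic : IsAlgebraic A α :=
    (IsFractionRing.isAlgebraic_iff A K L).mpr (Algebra.IsAlgebraic.isAlgebraic α)
  obtain ⟨a, ha, hint⟩ := α_isAlgebraic.exists_integral_multiple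
  obtain ⟨θ, hθ⟩ := IsIntegralClosure.isIntegral_iff (A := B).mp hint
  refine ⟨θ, top_le_iff.mp ?_⟩
  rw [← top_toSubalgebra, ← hα, adjoin_simple_toSubalgebra_of_isAlgebraic
    (Algebra.IsAlgebraic.isAlgebraic α), Algebra.adjoin_le_iff,
    Set.singleton_subset_iff, hθ]
  have ha' : algebraMap A K a ≠ 0 := by simpa using ha
  refine ((Algebra.adjoin K {a • α}).toSubmodule.smul_mem_iff ha').mp ?_
  rw [algebraMap_smul]
  exact Algebra.self_mem_adjoin_singleton K (a • α)

theorem conductor_ne_bot [IsIntegrallyClosed A] [IsDedekindDomain B] [Algebra A B]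
    [IsScalarTower A B L] [Module.IsTorsionFree A B] {θ : B}
    (hθ : Algebra.adjoin K {algebraMap B L θ} = ⊤) : conductor A θ ≠ ⊥ := by
  intro h
  have aeval_eq_zero : aeval θ (derivative (minpoly A θ)) = 0 := by
    simpa [h, eq_comm (a := (⊥ : Ideal B))] using conductor_mul_differentIdeal A K L θ hθ
  have hsep := Algebra.IsSeparable.isSeparable K (algebraMap B L θ)
  refine hsep.aeval_derivative_ne_zero (minpoly.aeval K (algebraMap B L θ)) ?_
  have θ_isIntegral : IsIntegral A (algebraMap B L θ) :=
    (IsIntegralClosure.isIntegral A L θ).algebraMap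
  rw [minpoly.isIntegrallyClosed_eq_field_fractions' K θ_isIntegral, derivative_map,
    aeval_map_algebraMap, minpoly.algebraMap_eq (IsIntegralClosure.algebraMap_injective B A L),
    aeval_algebraMap_apply, aeval_eq_zero, map_zero]

end PrimitiveElement

section NumberField

variable {K : Type*} [Field K] [NumberField K]

theorem exponent_ne_zero {θ : 𝓞 K} (hθ : Algebra.adjoin ℚ {algebraMap (𝓞 K) K θ} = ⊤) :
    RingOfIntegers.exponent θ ≠ 0 := by
  rw [RingOfIntegers.exponent, Ne, Ideal.absNorm_eq_zero_iff]
  exact fun h ↦ conductor_ne_bot ℤ ℚ K hθ (Ideal.eq_bot_of_comap_eq_bot h)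

theorem exists_mem_primesOver_inertiaDeg_eq_one {θ : 𝓞 K} {p : ℕ} [Fact p.Prime]
    (hp : ¬ p ∣ RingOfIntegers.exponent θ) {n : ℤ} (hn : (p : ℤ) ∣ (minpoly ℤ θ).eval n) :
    ∃ P ∈ (Ideal.span {(p : ℤ)}).primesOver (𝓞 K), P.inertiaDeg ℤ = 1 := by
  have linear_factor : X - C (n : ZMod p) ∈ RingOfIntegers.monicFactorsMod θ p := by
    rw [Multiset.mem_toFinset, Polynomial.mem_normalizedFactors_iff
      (map_monic_ne_zero (minpoly.monic θ.isIntegral))]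
    refine ⟨irreducible_X_sub_C _, monic_X_sub_C _, ?_⟩
    rwa [dvd_iff_isRoot, IsRoot.def, ← eq_intCast (Int.castRingHom (ZMod p)) n,
      eval_map_apply, eq_intCast, ZMod.intCast_zmod_eq_zero_iff_dvd]
  refine ⟨_, ((NumberField.Ideal.primesOverSpanEquivMonicFactorsMod hp).symm
    ⟨_, linear_factor⟩).2, ?_⟩
  rw [NumberField.Ideal.inertiaDeg_primesOverSpanEquivMonicFactorsMod_symm_apply',
    natDegree_X_sub_C]

variable (K) in
theorem exists_prime_gt_primesOver_ramificationIdx_inertiaDeg_eq_one (N : ℕ) :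
    ∃ p : ℕ, p.Prime ∧ N < p ∧ ∃ P ∈ (Ideal.span {(p : ℤ)}).primesOver (𝓞 K),
      P.ramificationIdx ℤ = 1 ∧ P.inertiaDeg ℤ = 1 := by
  obtain ⟨θ, hθ⟩ := exists_adjoin_algebraMap_eq_top ℤ ℚ (𝓞 K) K
  obtain ⟨p, hp, hlt, n, hn⟩ := exists_prime_gt_dvd_eval (minpoly.natDegree_pos θ.isIntegral)
    (N + RingOfIntegers.exponent θ + (discr K).natAbs)
  have := Fact.mk hp
  have not_dvd_exponent : ¬ p ∣ RingOfIntegers.exponent θ :=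
    Nat.not_dvd_of_pos_of_lt (Nat.pos_of_ne_zero (exponent_ne_zero hθ)) (by lia)
  have not_dvd_discr : ¬ (p : ℤ) ∣ discr K := by
    rw [Int.natCast_dvd]
    exact Nat.not_dvd_of_pos_of_lt (Int.natAbs_pos.mpr (discr_ne_zero K)) (by lia)
  obtain ⟨P, ⟨hP, hPp⟩, hf⟩ := exists_mem_primesOver_inertiaDeg_eq_one not_dvd_exponent hn
  have unramified := (not_dvd_discr_iff_isUnramifiedIn K (𝓞 K)
    (Nat.prime_iff_prime_int.mp hp)).mp not_dvd_discr
  exact ⟨p, hp, by lia, P, ⟨hP, hPp⟩, unramified.ramificationIdx_eq_one hPp, hf⟩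

end NumberField

section SplitsCompletely

variable {K M : Type*} [Field K] [NumberField K] [Field M] [NumberField M] {p : ℕ}

theorem splitsCompletely_iff_forall_mem_primesOver (hp : p.Prime) :
    SplitsCompletely K p ↔ ∀ P ∈ (Ideal.span {(p : ℤ)}).primesOver (𝓞 K),
      P.ramificationIdx ℤ = 1 ∧ P.inertiaDeg ℤ = 1 := by
  have span_ne_bot : Ideal.span {(p : ℤ)} ≠ ⊥ := by simp [hp.ne_zero]
  have := Fact.mk hp
  have := Int.ideal_span_isMaximal_of_prime p
  have mem_iff (P : Ideal (𝓞 K)) (hP : P.IsPrime) :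
      (p : 𝓞 K) ∈ P ↔ P.LiesOver (Ideal.span {(p : ℤ)}) := by
    simpa using (Ideal.liesOver_span_iff hP.ne_top (Nat.prime_iff_prime_int.mp hp)).symm
  simp_rw [SplitsCompletely, Ideal.primesOver, Set.mem_ofPred, and_imp]
  refine forall₂_congr fun P hP ↦ ?_
  rw [mem_iff P hP]
  refine forall_congr' fun hPp ↦ ?_
  have := hP.isMaximal (Ideal.ne_bot_of_liesOver_of_ne_bot span_ne_bot P)
  rw [Ideal.ramificationIdx'_eq_ramificationIdx _ _ span_ne_bot, Ideal.inertiaDeg'_eq_inertiaDeg]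

theorem SplitsCompletely.of_ringHom (hp : p.Prime) (φ : K →+* M) (hM : SplitsCompletely M p) :
    SplitsCompletely K p := by
  rw [splitsCompletely_iff_forall_mem_primesOver hp] at hM ⊢
  rintro P ⟨hP, hPp⟩
  algebraize [φ]
  obtain ⟨Q, hQ, hQP⟩ := (inferInstance : Nonempty (P.primesOver (𝓞 M)))
  obtain ⟨he, hf⟩ := hM Q ⟨hQ, Ideal.LiesOver.trans Q P _⟩
  exact ⟨Nat.dvd_one.mp (he ▸ Ideal.ramificationIdx_below_dvd (R := ℤ) P Q),
    Nat.dvd_one.mp (hf ▸ Ideal.inertiaDeg_below_dvd (R := ℤ) P Q)⟩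

theorem SplitsCompletely.of_isGalois [IsGalois ℚ M] (hp : p.Prime) {P : Ideal (𝓞 M)}
    (hP : P ∈ (Ideal.span {(p : ℤ)}).primesOver (𝓞 M)) (he : P.ramificationIdx ℤ = 1)
    (hf : P.inertiaDeg ℤ = 1) : SplitsCompletely M p := by
  rw [splitsCompletely_iff_forall_mem_primesOver hp]
  rintro Q ⟨_, _⟩
  obtain ⟨_, _⟩ := hP
  have := Fact.mk hp
  have := Int.ideal_span_isMaximal_of_prime p
  exact ⟨Ideal.ramificationIdx_eq_of_isGaloisGroup (Ideal.span {(p : ℤ)}) Q P Gal(M/ℚ) ▸ he,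
    Ideal.inertiaDeg_eq_of_isGaloisGroup (Ideal.span {(p : ℤ)}) Q P Gal(M/ℚ) ▸ hf⟩

variable (M) in
theorem infinite_setOf_prime_splitsCompletely_of_isGalois [IsGalois ℚ M] :
    {p : ℕ | p.Prime ∧ SplitsCompletely M p}.Infinite := by
  refine Set.infinite_of_forall_exists_gt fun N ↦ ?_
  obtain ⟨p, hp, hN, P, hP, he, hf⟩ :=
    exists_prime_gt_primesOver_ramificationIdx_inertiaDeg_eq_one M N
  exact ⟨p, ⟨hp, .of_isGalois hp hP he hf⟩, hN⟩

end SplitsCompletely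

theorem exists_isGalois_algHom_algHom (F K L Ω : Type*) [Field F] [PerfectField F]
    [Field K] [Field L] [Field Ω] [Algebra F K] [Algebra F L] [Algebra F Ω] [FiniteDimensional F K]
    [FiniteDimensional F L] [IsAlgClosed Ω] :
    ∃ M : IntermediateField F Ω, FiniteDimensional F M ∧ IsGalois F M ∧
      Nonempty (K →ₐ[F] M) ∧ Nonempty (L →ₐ[F] M) := by
  let φ : K →ₐ[F] Ω := IsAlgClosed.lift
  let ψ : L →ₐ[F] Ω := IsAlgClosed.lift
  have : Normal F (normalClosure F K Ω) :=
    (Algebra.IsAlgebraic.isNormalClosure_normalClosure fun _ ↦ IsAlgClosed.splits _).normal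
  have : Normal F (normalClosure F L Ω) :=
    (Algebra.IsAlgebraic.isNormalClosure_normalClosure fun _ ↦ IsAlgClosed.splits _).normal
  exact ⟨normalClosure F K Ω ⊔ normalClosure F L Ω, inferInstance, ⟨⟩,
    ⟨(inclusion (φ.fieldRange_le_normalClosure.trans le_sup_left)).comp φ.rangeRestrict⟩,
    ⟨(inclusion (ψ.fieldRange_le_normalClosure.trans le_sup_right)).comp ψ.rangeRestrict⟩⟩

/-- For any two number fields `K` and `L`, infinitely many prime numbers split
completely in both. -/
theorem infinitely_many_split_primes (K L : Type*) [Field K] [NumberField K]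
    [Field L] [NumberField L] :
    {p : ℕ | p.Prime ∧ SplitsCompletely K p ∧ SplitsCompletely L p}.Infinite := by
  obtain ⟨M, _, hM, ⟨φ⟩, ⟨ψ⟩⟩ := exists_isGalois_algHom_algHom ℚ K L ℂ
  have : NumberField M := ⟨⟩
  have : IsGalois ℚ M := hM
  refine (infinite_setOf_prime_splitsCompletely_of_isGalois M).mono ?_
  rintro p ⟨hp, hpM⟩
  exact ⟨hp, hpM.of_ringHom hp (φ : K →+* M), hpM.of_ringHom hp (ψ : L →+* M)⟩
end

section
/- Let n, m ≥ 0 be integers, let F be a field with at least 3 elements, and let A : F^n → F^m be an F-linear bijection. Then the following are equivalent: (a) for every x ∈ F^n all of whose coordinates are nonzero, all coordinates of A(x) are nonzero; (b) there exist an F-algebra homomorphism τ : F^n → F^m (where F^n and F^m carry the coordinatewise product F-algebra structure) and an element ε ∈ F^m with all coordinates nonzero such that A(x) = ε · τ(x) (coordinatewise product) for all x ∈ F^n. -/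
/-!
Each coordinate of `A` is a linear functional `f` on `ι → F` that vanishes at no nowhere-zero
vector. The kernel of such an `f` is an ideal. Indeed, let `f y = 0`, let `z` have the same support
as `y`, and let `w` be the indicator of the complement. Then `y + w` is nowhere zero, so `f w ≠ 0`,
and if `f z` were nonzero, then `z - (f z / f w) • w` would be a nowhere-zero vector in the kernel.
Hence the kernel is stable under multiplication by nowhere-zero vectors, and when `F` has at least
three elements every vector is a sum of two of these. A functional whose kernel is an ideal is
multiplicative once divided by its value at `1`.
-/

theorem exists_add_eq_forall_ne_zero {ι G : Type*} [AddGroup G] (hG : 3 ≤ Cardinal.mk G)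
    (x : ι → G) :
    ∃ u v : ι → G, (∀ i, u i ≠ 0) ∧ (∀ i, v i ≠ 0) ∧ u + v = x := by
  choose v hv₀ hvx using fun i ↦ Cardinal.exists_ne_ne_of_three_le hG 0 (x i)
  exact ⟨x - v, v, fun i ↦ sub_ne_zero.2 (hvx i).symm, hv₀, sub_add_cancel x v⟩

section LinearFunctional

open Function

variable {ι K : Type*} [DivisionRing K] {f : (ι → K) →ₗ[K] K}

theorem map_eq_zero_of_support_eq (hf : ∀ x : ι → K, (∀ i, x i ≠ 0) → f x ≠ 0) {y z : ι → K}
    (hy : f y = 0) (hzy : support z = support y) : f z = 0 := by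
  classical
  set w : ι → K := (support y)ᶜ.indicator 1 with hw
  have add_smul_ne_zero {x : ι → K} (hx : support x = support y) {c : K} (hc : c ≠ 0) (i : ι) :
      (x + c • w) i ≠ 0 := by
    by_cases hi : i ∈ support y
    · have hxi : x i ≠ 0 := by rwa [← mem_support, hx]
      simpa [hw, hi] using hxi
    · have hxi : x i = 0 := by rwa [← notMem_support, hx]
      simpa [hw, hi, hxi] using hc
  have hfw : f w ≠ 0 := by
    simpa [hy] using hf _ (add_smul_ne_zero rfl one_ne_zero)
  by_contra hfz
  have hc : -(f z / f w) ≠ 0 := neg_ne_zero.2 (div_ne_zero hfz hfw)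
  refine hf _ (add_smul_ne_zero hzy hc) ?_
  rw [map_add, map_smul, smul_eq_mul, neg_mul, div_mul_cancel₀ _ hfw, add_neg_cancel]

theorem map_mul_eq_zero_of_map_eq_zero (hK : 3 ≤ Cardinal.mk K)
    (hf : ∀ x : ι → K, (∀ i, x i ≠ 0) → f x ≠ 0) {x : ι → K} (hx : f x = 0) (y : ι → K) :
    f (x * y) = 0 := by
  obtain ⟨u, v, hu, hv, rfl⟩ := exists_add_eq_forall_ne_zero hK y
  have map_mul_eq_zero {c : ι → K} (hc : ∀ i, c i ≠ 0) : f (x * c) = 0 :=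
    map_eq_zero_of_support_eq hf hx (by ext i; simp [hc i])
  rw [mul_add, map_add, map_mul_eq_zero hu, map_mul_eq_zero hv, add_zero]

theorem map_mul_eq_mul_inv_map_one_mul (hK : 3 ≤ Cardinal.mk K)
    (hf : ∀ x : ι → K, (∀ i, x i ≠ 0) → f x ≠ 0) (x y : ι → K) :
    f (x * y) = f x * (f 1)⁻¹ * f y := by
  set c := f x * (f 1)⁻¹ with hc
  have h_one : f 1 ≠ 0 := hf 1 fun _ ↦ one_ne_zero
  have h_ker : f (x - c • 1) = 0 := by
    rw [map_sub, map_smul, smul_eq_mul, hc, inv_mul_cancel_right₀ h_one, sub_self]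
  have h_mul := map_mul_eq_zero_of_map_eq_zero hK hf h_ker y
  rwa [sub_mul, smul_one_mul, map_sub, map_smul, smul_eq_mul, sub_eq_zero] at h_mul

end LinearFunctional

section Field

variable {ι κ F : Type*} [Field F]

theorem exists_algHom_eq_map_one_mul (hF : 3 ≤ Cardinal.mk F) (A : (ι → F) →ₗ[F] (κ → F))
    (hA : ∀ x : ι → F, (∀ i, x i ≠ 0) → ∀ j, A x j ≠ 0) :
    ∃ τ : (ι → F) →ₐ[F] (κ → F), ∀ x, A x = A 1 * τ x := by
  have h_one (j : κ) : A 1 j ≠ 0 := hA 1 (fun _ ↦ one_ne_zero) j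
  have h_mul (x y : ι → F) (j : κ) : A (x * y) j = A x j * (A 1 j)⁻¹ * A y j :=
    map_mul_eq_mul_inv_map_one_mul (f := LinearMap.proj j ∘ₗ A) hF (fun x hx ↦ hA x hx j) x y
  let τ : (ι → F) →ₐ[F] (κ → F) :=
    AlgHom.ofLinearMap (LinearMap.mulLeft F (A 1)⁻¹ ∘ₗ A)
      (funext fun j ↦ inv_mul_cancel₀ (h_one j))
      (fun x y ↦ funext fun j ↦ by
        simp only [LinearMap.comp_apply, LinearMap.mulLeft_apply, Pi.mul_apply, Pi.inv_apply, h_mul]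
        ring)
  exact ⟨τ, fun x ↦ funext fun j ↦ (mul_inv_cancel_left₀ (h_one j) (A x j)).symm⟩

theorem geometric_lemma_general (hF : 3 ≤ Cardinal.mk F) (A : (ι → F) →ₗ[F] (κ → F)) :
    (∀ x : ι → F, (∀ i, x i ≠ 0) → ∀ j, A x j ≠ 0) ↔
      ∃ (τ : (ι → F) →ₐ[F] (κ → F)) (ε : κ → F),
        (∀ j, ε j ≠ 0) ∧ ∀ x : ι → F, A x = ε * τ x := by
  constructor
  · intro hA
    obtain ⟨τ, hτ⟩ := exists_algHom_eq_map_one_mul hF A hA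
    exact ⟨τ, A 1, hA 1 fun _ ↦ one_ne_zero, hτ⟩
  · rintro ⟨τ, ε, hε, hA⟩ x hx j
    have h_unit : IsUnit (τ x) := (Pi.isUnit_iff.2 fun i ↦ (hx i).isUnit).map τ
    rw [hA]
    exact mul_ne_zero (hε j) (Pi.isUnit_iff.1 h_unit j).ne_zero

end Field

/-- Geometric lemma: over a field `F` with at least 3 elements, an `F`-linear bijection
`A : Fⁿ → Fᵐ` maps vectors with all coordinates nonzero to vectors with all
coordinates nonzero if and only if it is the composition of an `F`-algebra homomorphism
`Fⁿ → Fᵐ` with coordinatewise multiplication by a vector with nonzero coordinates. -/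
theorem geometric_lemma (n m : ℕ) (F : Type*) [Field F] (hF : 3 ≤ Cardinal.mk F)
    (A : (Fin n → F) ≃ₗ[F] (Fin m → F)) :
    (∀ x : Fin n → F, (∀ i, x i ≠ 0) → ∀ j, A x j ≠ 0) ↔
      ∃ (τ : (Fin n → F) →ₐ[F] (Fin m → F)) (ε : Fin m → F),
        (∀ j, ε j ≠ 0) ∧ ∀ x : Fin n → F, A x = ε * τ x :=
  geometric_lemma_general hF A.toLinearMap
end

section
/- Let K and L be finite-dimensional commutative ℚ-algebras, let F be a field of characteristic 0, and suppose there are F-algebra isomorphisms K ⊗_ℚ F ≅ F^n and L ⊗_ℚ F ≅ F^m (coordinatewise product algebras). Let A : K → L be a ℚ-linear map, and let A_F = A ⊗ id_F : K ⊗_ℚ F → L ⊗_ℚ F be its F-linear extension. If A_F maps every invertible element of K ⊗_ℚ F to an invertible element of L ⊗_ℚ F, then there exist a ℚ-algebra homomorphism τ : K → L and an invertible element ε ∈ L^× such that A(x) = ε·τ(x) for all x ∈ K. -/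
open scoped TensorProduct

/-!
Compose the base change of `A` with the projections of `F ⊗ L` to `F`: each composite is a linear
functional on a von Neumann regular `F`-algebra that vanishes at no unit. The kernel of such a
functional `φ` is an ideal. Indeed, if `e` is idempotent and `φ e ≠ 0`, then `φ` kills `u * (1 - e)`
for every unit `u`, since otherwise some unit `c • e + u * (1 - e)` with `c ∈ Fˣ` lies in the
kernel; as soon as `F` has a unit other than `1`, every element is a sum of two units, so `φ` kills
the ideal generated by `1 - e`. Write an element of the kernel as `u * e` with `u` a unit and
`e` idempotent. If `φ e ≠ 0`, then `φ u = φ (u * e) + φ (u * (1 - e)) = 0`, which is impossible. So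
`φ e = 0`, hence `φ (1 - e) = φ 1 ≠ 0`, and `φ` kills the ideal generated by `e`.

A functional whose kernel is an ideal satisfies `φ 1 * φ (a * b) = φ a * φ b`. This identity
descends to `A`, and so does the invertibility of `A 1`, because `L → F ⊗ L` is faithfully flat;
therefore `(A 1)⁻¹ * A` is multiplicative.
-/

theorem isUnit_mul_add_mul_one_sub {R : Type*} [CommRing R] {e u v : R} (he : IsIdempotentElem e)
    (hu : IsUnit u) (hv : IsUnit v) : IsUnit (u * e + v * (1 - e)) := by
  obtain ⟨u', hu'⟩ := hu.exists_right_inv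
  obtain ⟨v', hv'⟩ := hv.exists_right_inv
  refine IsUnit.of_mul_eq_one (u' * e + v' * (1 - e)) ?_
  linear_combination e * e * hu' + (1 - e) * (1 - e) * hv' +
    (2 - u * v' - v * u') * he.eq

/-- A multiplicative structure is von Neumann regular if every element `a` has a quasi-inverse,
that is, some `b` with `a * b * a = a`. It is the property of the split algebra `F ⊗ K ≅ Fⁿ` that
makes its elements units times idempotents. -/
def IsVonNeumannRegular (R : Type*) [Mul R] : Prop :=
  ∀ a : R, ∃ b : R, a * b * a = a

namespace IsVonNeumannRegular

theorem of_groupWithZero (G₀ : Type*) [GroupWithZero G₀] : IsVonNeumannRegular G₀ :=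
  fun a => ⟨a⁻¹, mul_inv_mul_cancel a⟩

theorem pi {ι : Type*} {R : ι → Type*} [∀ i, Mul (R i)] (h : ∀ i, IsVonNeumannRegular (R i)) :
    IsVonNeumannRegular (∀ i, R i) := fun a => by
  choose b hb using fun i => h i (a i)
  exact ⟨b, funext hb⟩

theorem of_surjective {R S G : Type*} [Mul R] [Mul S] [FunLike G R S] [MulHomClass G R S]
    (hR : IsVonNeumannRegular R) (g : G) (hg : Function.Surjective g) :
    IsVonNeumannRegular S := fun s => by
  obtain ⟨a, rfl⟩ := hg s
  obtain ⟨b, hb⟩ := hR a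
  exact ⟨g b, by rw [← map_mul, ← map_mul, hb]⟩

section CommRing

variable {R : Type*} [CommRing R]

theorem exists_isUnit_mul_isIdempotentElem (hR : IsVonNeumannRegular R) (a : R) :
    ∃ u e : R, IsUnit u ∧ IsIdempotentElem e ∧ a = u * e := by
  obtain ⟨b, hb⟩ := hR a
  refine ⟨a + (1 - a * b), a * b, ?_, ?_, ?_⟩
  · refine IsUnit.of_mul_eq_one (a * b * b + (1 - a * b)) ?_
    linear_combination (2 * b - b * b - 1) * hb
  · change a * b * (a * b) = a * b
    linear_combination b * hb
  · linear_combination (b - 1) * hb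

theorem exists_isUnit_add_isUnit (F : Type*) [Field F] [Nontrivial Fˣ] [Algebra F R]
    (hR : IsVonNeumannRegular R) (a : R) : ∃ u v : R, IsUnit u ∧ IsUnit v ∧ a = u + v := by
  obtain ⟨c, hc⟩ := exists_ne (1 : Fˣ)
  obtain ⟨w, e, hw, he, rfl⟩ := hR.exists_isUnit_mul_isIdempotentElem a
  have isUnit_scalar {x : F} (hx : x ≠ 0) : IsUnit (algebraMap F R x) := hx.isUnit.map _
  have one_sub_ne_zero : 1 - (c : F) ≠ 0 := sub_ne_zero.mpr fun h => hc (Units.ext h.symm)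
  refine ⟨w * (algebraMap F R (1 - c) * e + algebraMap F R (-c) * (1 - e)), w * algebraMap F R c,
    hw.mul (isUnit_mul_add_mul_one_sub he (isUnit_scalar one_sub_ne_zero)
      (isUnit_scalar (neg_ne_zero.mpr c.ne_zero))),
    hw.mul (isUnit_scalar c.ne_zero), ?_⟩
  rw [map_sub, map_neg, map_one]
  ring

end CommRing

end IsVonNeumannRegular

section Functional

theorem map_one_mul_map_mul_of_ker_mul_mem {k R : Type*} [CommRing k] [Ring R] [Algebra k R]
    {φ : R →ₗ[k] k} (hφ : ∀ a b : R, φ a = 0 → φ (a * b) = 0) (a b : R) :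
    φ 1 * φ (a * b) = φ a * φ b := by
  have mem_ker : φ (φ 1 • a - φ a • 1) = 0 := by
    simp only [map_sub, map_smul, smul_eq_mul, mul_comm (φ 1), sub_self]
  simpa only [sub_mul, smul_mul_assoc, one_mul, map_sub, map_smul, smul_eq_mul, sub_eq_zero]
    using hφ _ b mem_ker

variable {F R : Type*} [Field F] [CommRing R] [Algebra F R] {φ : R →ₗ[F] F}

theorem map_mul_one_sub_eq_zero_of_isUnit (hφ : ∀ a : R, IsUnit a → IsUnit (φ a)) {e u : R}
    (he : IsIdempotentElem e) (hφe : φ e ≠ 0) (hu : IsUnit u) : φ (u * (1 - e)) = 0 := by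
  by_contra hne
  let c : F := -φ (u * (1 - e)) / φ e
  have hc : c ≠ 0 := div_ne_zero (neg_ne_zero.mpr hne) hφe
  have isUnit_combination : IsUnit (algebraMap F R c * e + u * (1 - e)) :=
    isUnit_mul_add_mul_one_sub he (hc.isUnit.map _) hu
  refine (hφ _ isUnit_combination).ne_zero ?_
  rw [← Algebra.smul_def, map_add, map_smul, smul_eq_mul, div_mul_cancel₀ _ hφe, neg_add_cancel]

variable [Nontrivial Fˣ]

theorem map_mul_one_sub_eq_zero (hR : IsVonNeumannRegular R)
    (hφ : ∀ a : R, IsUnit a → IsUnit (φ a)) {e : R} (he : IsIdempotentElem e) (hφe : φ e ≠ 0)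
    (a : R) : φ (a * (1 - e)) = 0 := by
  obtain ⟨u, v, hu, hv, rfl⟩ := hR.exists_isUnit_add_isUnit F a
  rw [add_mul, map_add, map_mul_one_sub_eq_zero_of_isUnit hφ he hφe hu,
    map_mul_one_sub_eq_zero_of_isUnit hφ he hφe hv, add_zero]

theorem map_mul_eq_zero_of_map_eq_zero_s9 (hR : IsVonNeumannRegular R)
    (hφ : ∀ a : R, IsUnit a → IsUnit (φ a)) (a b : R) (ha : φ a = 0) : φ (a * b) = 0 := by
  obtain ⟨u, e, hu, he, rfl⟩ := hR.exists_isUnit_mul_isIdempotentElem a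
  have map_e : φ e = 0 := by
    by_contra hφe
    refine (hφ u hu).ne_zero ?_
    calc φ u = φ (u * e) + φ (u * (1 - e)) := by rw [← map_add, ← mul_add, add_sub_cancel, mul_one]
      _ = 0 := by rw [ha, map_mul_one_sub_eq_zero_of_isUnit hφ he hφe hu, add_zero]
  have map_one_sub_e : φ (1 - e) ≠ 0 := by
    rw [map_sub, map_e, sub_zero]
    exact (hφ 1 isUnit_one).ne_zero
  calc φ (u * e * b) = φ (u * b * (1 - (1 - e))) := by rw [sub_sub_cancel, mul_right_comm]
    _ = 0 := map_mul_one_sub_eq_zero hR hφ he.one_sub map_one_sub_e (u * b)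

theorem map_one_mul_map_mul_of_isUnit_map {S κ : Type*} [Semiring S] [Algebra F S]
    (hR : IsVonNeumannRegular R) {f : S →ₐ[F] (κ → F)} (hf : Function.Injective f)
    {B : R →ₗ[F] S} (hB : ∀ a : R, IsUnit a → IsUnit (B a)) (a b : R) :
    B 1 * B (a * b) = B a * B b := by
  apply hf
  funext j
  let φ : R →ₗ[F] F := LinearMap.proj j ∘ₗ f.toLinearMap ∘ₗ B
  have hφ (r : R) (hr : IsUnit r) : IsUnit (φ r) := Pi.isUnit_iff.mp ((hB r hr).map f) j
  rw [map_mul f, map_mul f]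
  exact map_one_mul_map_mul_of_ker_mul_mem (map_mul_eq_zero_of_map_eq_zero_s9 hR hφ) a b

end Functional

theorem isUnit_one_tmul_iff {k F L : Type*} [CommRing k] [CommRing F] [Algebra k F]
    [Module.FaithfullyFlat k F] [CommRing L] [Algebra k L] {y : L} :
    IsUnit ((1 : F) ⊗ₜ[k] y) ↔ IsUnit y := by
  rw [← isUnit_map_iff (algebraMap L (L ⊗[k] F)) y,
    ← isUnit_map_iff (Algebra.TensorProduct.comm k L F)]
  rfl

theorem exists_algHom_eq_unit_mul {k K L : Type*} [CommSemiring k] [Semiring K] [Algebra k K]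
    [CommSemiring L] [Algebra k L] {A : K →ₗ[k] L} (hone : IsUnit (A 1))
    (hmul : ∀ x y : K, A 1 * A (x * y) = A x * A y) :
    ∃ (τ : K →ₐ[k] L) (ε : Lˣ), ∀ x : K, A x = (ε : L) * τ x := by
  obtain ⟨ε, hε⟩ := hone
  let τ : K →ₐ[k] L := AlgHom.ofLinearMap (LinearMap.mulLeft k (↑ε⁻¹ : L) ∘ₗ A)
    (by simp [← hε])
    fun x y => by
      have map_mul_eq : A (x * y) = ↑ε⁻¹ * (A x * A y) := by
        rw [← hmul, ← hε, Units.inv_mul_cancel_left]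
      simp only [LinearMap.comp_apply, LinearMap.mulLeft_apply, map_mul_eq]
      ring
  exact ⟨τ, ε, fun x => (Units.mul_inv_cancel_left ε (A x)).symm⟩

theorem norm_implies_mult_general {k K L F κ : Type*} [Field k] [CommRing K] [Algebra k K]
    [CommRing L] [Algebra k L] [Field F] [Algebra k F] [Nontrivial Fˣ]
    (hK : IsVonNeumannRegular (F ⊗[k] K))
    {f : (F ⊗[k] L) →ₐ[F] (κ → F)} (hf : Function.Injective f) (A : K →ₗ[k] L)
    (hA : ∀ z : F ⊗[k] K, IsUnit z → IsUnit (A.baseChange F z)) :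
    ∃ (τ : K →ₐ[k] L) (ε : Lˣ), ∀ x : K, A x = (ε : L) * τ x := by
  refine exists_algHom_eq_unit_mul (isUnit_one_tmul_iff (F := F).mp (hA 1 isUnit_one)) fun x y => ?_
  apply Algebra.TensorProduct.includeRight_injective (A := F) (algebraMap k F).injective
  simpa [Algebra.TensorProduct.one_def] using
    map_one_mul_map_mul_of_isUnit_map hK hf hA (1 ⊗ₜ x) (1 ⊗ₜ y)

/-- If `K`, `L` are finite-dimensional commutative ℚ-algebras that split completely
over a field `F` of characteristic 0 (i.e. `F ⊗[ℚ] K ≅ Fⁿ` and `F ⊗[ℚ] L ≅ Fᵐ` as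
`F`-algebras), and the `F`-linear extension of a ℚ-linear map `A : K → L` maps
invertible elements to invertible elements, then `A(x) = ε·τ(x)` for a ℚ-algebra
homomorphism `τ : K → L` and a unit `ε ∈ L^×`. -/
theorem norm_implies_mult {K L F : Type*}
    [CommRing K] [Algebra ℚ K] [FiniteDimensional ℚ K]
    [CommRing L] [Algebra ℚ L] [FiniteDimensional ℚ L]
    [Field F] [CharZero F] (n m : ℕ)
    (e₁ : (F ⊗[ℚ] K) ≃ₐ[F] (Fin n → F))
    (e₂ : (F ⊗[ℚ] L) ≃ₐ[F] (Fin m → F))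
    (A : K →ₗ[ℚ] L)
    (hA : ∀ z : F ⊗[ℚ] K, IsUnit z → IsUnit (A.baseChange F z)) :
    ∃ (τ : K →ₐ[ℚ] L) (ε : Lˣ), ∀ x : K, A x = (ε : L) * τ x := by
  have : Nontrivial Fˣ := ⟨1, -1, fun h =>
    one_ne_zero (self_eq_neg.mp (congrArg Units.val h))⟩
  have hK : IsVonNeumannRegular (F ⊗[ℚ] K) :=
    (IsVonNeumannRegular.pi fun _ => .of_groupWithZero F).of_surjective e₁.symm e₁.symm.surjective
  exact norm_implies_mult_general hK (f := e₂.toAlgHom) e₂.injective A hA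
end

section
/- Let p be a prime number, let n ≥ 1, let μ be the Haar probability measure on ℤ_p (normalized so that μ(ℤ_p) = 1), let M be a ℤ_p-submodule of ℤ_p^n, and let R_1, …, R_n ⊆ ℤ_p be compact open subsets with ∑_{i=1}^n μ(R_i) < 1. If M contains an element all of whose coordinates lie in ℤ_p^×, then for every a ∈ ℤ_p^n there exists y ∈ a + M such that for every i, the i-th coordinate of y does not lie in R_i. -/
open MeasureTheory

/-! If all coordinates of `u ∈ M` are units, each coordinate `t ↦ aᵢ + t uᵢ` of the line `a + ℤ_p u`
is an isometry of `ℤ_p`. The preimage of a residue class under an isometry lies in a single residue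
class of the same modulus, so pulling back an open set, which is exhausted by finite unions of such
classes, does not increase its measure. Hence the sets of bad parameters `t` have total measure less
than `1`, and some `t` is good for every coordinate. -/

lemma isometry_const_add_mul_right {A : Type*} [NonUnitalSeminormedRing A] [NormMulClass A]
    (a : A) {u : A} (hu : ‖u‖ = 1) : Isometry fun t : A ↦ a + t * u :=
  Isometry.of_dist_eq fun s t ↦ by
    rw [dist_add_left, dist_eq_norm, ← sub_mul, norm_mul, hu, mul_one, dist_eq_norm]

section ResidueClasses

variable {p : ℕ} [Fact p.Prime]

lemma toZModPow_eq_iff_dist_le {k : ℕ} {x y : ℤ_[p]} :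
    PadicInt.toZModPow k x = PadicInt.toZModPow k y ↔ dist x y ≤ (p : ℝ) ^ (-k : ℤ) := by
  rw [dist_eq_norm, PadicInt.norm_le_pow_iff_mem_span_pow, ← PadicInt.ker_toZModPow,
    RingHom.mem_ker, map_sub, sub_eq_zero]

/-- The residues modulo `p ^ k` whose whole residue class lies in `U`; their classes exhaust an
open set `U` from inside as `k` grows. -/
def innerResidues (U : Set ℤ_[p]) (k : ℕ) : Set (ZMod (p ^ k)) :=
  {c | PadicInt.toZModPow k ⁻¹' {c} ⊆ U}

lemma mem_innerResidues_iff {U : Set ℤ_[p]} {k : ℕ} {x : ℤ_[p]} :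
    PadicInt.toZModPow k x ∈ innerResidues U k ↔
      Metric.closedBall x ((p : ℝ) ^ (-k : ℤ)) ⊆ U := by
  have class_eq_ball : PadicInt.toZModPow k ⁻¹' {PadicInt.toZModPow k x} =
      Metric.closedBall x ((p : ℝ) ^ (-k : ℤ)) :=
    Set.ext fun _ ↦ toZModPow_eq_iff_dist_le
  rw [innerResidues, Set.mem_ofPred_eq, class_eq_ball]

lemma monotone_preimage_innerResidues (U : Set ℤ_[p]) :
    Monotone fun k : ℕ ↦ PadicInt.toZModPow k ⁻¹' innerResidues U k := by
  intro k l hkl x hx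
  have hp : (1 : ℝ) ≤ p := mod_cast (Fact.out : p.Prime).one_le
  refine mem_innerResidues_iff.mpr (.trans ?_ (mem_innerResidues_iff.mp hx))
  gcongr

lemma iUnion_preimage_innerResidues {U : Set ℤ_[p]} (hU : IsOpen U) :
    ⋃ k : ℕ, PadicInt.toZModPow k ⁻¹' innerResidues U k = U := by
  refine Set.Subset.antisymm (Set.iUnion_subset fun k x hx ↦ hx rfl) fun x hx ↦ ?_
  obtain ⟨ε, hε, ball_subset⟩ := Metric.isOpen_iff.mp hU x hx
  obtain ⟨k, hk⟩ := PadicInt.exists_pow_neg_lt p hε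
  exact Set.mem_iUnion.mpr ⟨k, mem_innerResidues_iff.mpr
    ((Metric.closedBall_subset_ball hk).trans ball_subset)⟩

end ResidueClasses

/-- `μ` gives every residue class modulo `p ^ k` mass `p ^ (-k)`, which characterises the Haar
probability measure on Borel sets. The σ-algebra is arbitrary: open sets need not be measurable,
and `μ` is then evaluated on them as an outer measure. -/
def IsResidueEquidistributed {p : ℕ} [Fact p.Prime] [MeasurableSpace ℤ_[p]]
    (μ : Measure ℤ_[p]) : Prop :=
  ∀ (k : ℕ) (a : ℤ_[p]),
    μ {x : ℤ_[p] | x - a ∈ Ideal.span {(p : ℤ_[p])} ^ k} = ((p : ENNReal) ^ k)⁻¹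

namespace IsResidueEquidistributed

variable {p : ℕ} [Fact p.Prime] [MeasurableSpace ℤ_[p]] {μ : Measure ℤ_[p]}

lemma measure_univ (hμ : IsResidueEquidistributed μ) : μ Set.univ = 1 := by
  simpa using hμ 0 0

lemma measure_closedBall (hμ : IsResidueEquidistributed μ) (a : ℤ_[p]) (k : ℕ) :
    μ (Metric.closedBall a ((p : ℝ) ^ (-k : ℤ))) = ((p : ENNReal) ^ k)⁻¹ := by
  rw [← hμ k a]
  congr 1 with x
  rw [Metric.mem_closedBall, dist_eq_norm, PadicInt.norm_le_pow_iff_mem_span_pow,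
    Ideal.span_singleton_pow, Set.mem_ofPred_eq]

lemma measure_preimage_finset_le (hμ : IsResidueEquidistributed μ) {f : ℤ_[p] → ℤ_[p]}
    (hf : Isometry f) {k : ℕ} (T : Finset (ZMod (p ^ k))) :
    μ {x | PadicInt.toZModPow k (f x) ∈ T} ≤ T.card * ((p : ENNReal) ^ k)⁻¹ := by
  have fiber_le (c : ZMod (p ^ k)) :
      μ {x | PadicInt.toZModPow k (f x) = c} ≤ ((p : ENNReal) ^ k)⁻¹ := by
    obtain hempty | ⟨a, rfl⟩ := Set.eq_empty_or_nonempty {x | PadicInt.toZModPow k (f x) = c}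
    · simp [hempty]
    · rw [← hμ.measure_closedBall a k]
      refine measure_mono fun x hx ↦ ?_
      rw [Metric.mem_closedBall, ← hf.dist_eq]
      exact toZModPow_eq_iff_dist_le.mp hx
  calc μ {x | PadicInt.toZModPow k (f x) ∈ T}
      = μ (⋃ c ∈ T, {x | PadicInt.toZModPow k (f x) = c}) := by congr 1; ext x; simp
    _ ≤ ∑ c ∈ T, μ {x | PadicInt.toZModPow k (f x) = c} := measure_biUnion_finset_le _ _
    _ ≤ T.card • ((p : ENNReal) ^ k)⁻¹ := Finset.sum_le_card_nsmul _ _ _ fun c _ ↦ fiber_le c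
    _ = T.card * ((p : ENNReal) ^ k)⁻¹ := nsmul_eq_mul _ _

-- Subadditivity only bounds measures from above; the lower bound comes from the complement of `T`.
lemma le_measure_preimage_finset (hμ : IsResidueEquidistributed μ) {k : ℕ}
    (T : Finset (ZMod (p ^ k))) :
    T.card * ((p : ENNReal) ^ k)⁻¹ ≤ μ {x | PadicInt.toZModPow k x ∈ T} := by
  have hp : (p : ENNReal) ^ k ≠ 0 := pow_ne_zero _ (mod_cast (Fact.out : p.Prime).ne_zero)
  have compl_ne_top : (Tᶜ.card : ENNReal) * ((p : ENNReal) ^ k)⁻¹ ≠ ⊤ :=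
    ENNReal.mul_ne_top (ENNReal.natCast_ne_top _) (ENNReal.inv_ne_top.mpr hp)
  refine (ENNReal.add_le_add_iff_right compl_ne_top).mp ?_
  calc (T.card : ENNReal) * ((p : ENNReal) ^ k)⁻¹ + Tᶜ.card * ((p : ENNReal) ^ k)⁻¹
      = 1 := by
        rw [← add_mul, ← Nat.cast_add, Finset.card_add_card_compl, ZMod.card, Nat.cast_pow,
          ENNReal.mul_inv_cancel hp (ENNReal.pow_ne_top (ENNReal.natCast_ne_top p))]
    _ = μ ({x | PadicInt.toZModPow k x ∈ T} ∪ {x | PadicInt.toZModPow k x ∈ Tᶜ}) := by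
        rw [← hμ.measure_univ]
        congr 1
        ext x
        simp [em]
    _ ≤ μ {x | PadicInt.toZModPow k x ∈ T} + μ {x | PadicInt.toZModPow k x ∈ Tᶜ} :=
        measure_union_le _ _
    _ ≤ μ {x | PadicInt.toZModPow k x ∈ T} + Tᶜ.card * ((p : ENNReal) ^ k)⁻¹ := by
        gcongr
        exact hμ.measure_preimage_finset_le isometry_id Tᶜ

lemma measure_preimage_le_of_isometry (hμ : IsResidueEquidistributed μ) {f : ℤ_[p] → ℤ_[p]}
    (hf : Isometry f) {U : Set ℤ_[p]} (hU : IsOpen U) : μ (f ⁻¹' U) ≤ μ U := by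
  classical
  have level_le (k : ℕ) (S : Set (ZMod (p ^ k))) :
      μ (f ⁻¹' (PadicInt.toZModPow k ⁻¹' S)) ≤ μ (PadicInt.toZModPow k ⁻¹' S) := by
    lift S to Finset (ZMod (p ^ k)) using S.toFinite
    exact (hμ.measure_preimage_finset_le hf S).trans (hμ.le_measure_preimage_finset S)
  have mono := monotone_preimage_innerResidues U
  have mono_preimage : Monotone fun k : ℕ ↦ f ⁻¹' (PadicInt.toZModPow k ⁻¹' innerResidues U k) :=
    fun _ _ hkl ↦ Set.preimage_mono (mono hkl)
  rw [← iUnion_preimage_innerResidues hU, Set.preimage_iUnion, mono_preimage.measure_iUnion,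
    mono.measure_iUnion]
  exact iSup_mono fun k ↦ level_le k _

end IsResidueEquidistributed

theorem coset_avoids_sieve_general {p : ℕ} [Fact p.Prime] {ι : Type*} [Countable ι]
    [MeasurableSpace ℤ_[p]] {μ : Measure ℤ_[p]} (hμ : IsResidueEquidistributed μ)
    (M : Submodule ℤ_[p] (ι → ℤ_[p])) {R : ι → Set ℤ_[p]} (hRo : ∀ i, IsOpen (R i))
    (hsum : ∑' i, μ (R i) < 1) (hM : ∃ x ∈ M, ∀ i, IsUnit (x i)) (a : ι → ℤ_[p]) :
    ∃ y : ι → ℤ_[p], y - a ∈ M ∧ ∀ i, y i ∉ R i := by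
  obtain ⟨u, huM, hu⟩ := hM
  let bad (i : ι) : Set ℤ_[p] := (fun t ↦ a i + t * u i) ⁻¹' R i
  have bad_lt : μ (⋃ i, bad i) < μ Set.univ := calc
    μ (⋃ i, bad i) ≤ ∑' i, μ (bad i) := measure_iUnion_le bad
    _ ≤ ∑' i, μ (R i) := ENNReal.tsum_le_tsum fun i ↦ hμ.measure_preimage_le_of_isometry
        (isometry_const_add_mul_right (a i) (PadicInt.isUnit_iff.mp (hu i))) (hRo i)
    _ < μ Set.univ := hμ.measure_univ.symm ▸ hsum
  obtain ⟨t, ht⟩ := (Set.ne_univ_iff_exists_notMem _).mp fun h ↦ (h ▸ bad_lt).false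
  refine ⟨a + t • u, ?_, fun i hi ↦ ht (Set.mem_iUnion.mpr ⟨i, hi⟩)⟩
  rw [add_sub_cancel_left]
  exact M.smul_mem t huM

/-- Local covering lemma: let `μ` be the Haar probability measure on `ℤ_p` (it assigns
measure `p^{-k}` to every residue class modulo `p^k`), let `M` be a `ℤ_p`-submodule of
`ℤ_pⁿ`, and let `R₁, …, Rₙ ⊆ ℤ_p` be compact open sets with `∑ μ(Rᵢ) < 1`. If `M`
contains a vector all of whose coordinates are units, then every coset `a + M` contains
a point `y` with `yᵢ ∉ Rᵢ` for all `i`. -/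
theorem coset_avoids_sieve (p : ℕ) [Fact p.Prime] (n : ℕ) (hn : 1 ≤ n)
    [MeasurableSpace ℤ_[p]] (μ : Measure ℤ_[p])
    (hμ : ∀ (k : ℕ) (a : ℤ_[p]),
      μ {x : ℤ_[p] | x - a ∈ Ideal.span {(p : ℤ_[p])} ^ k} = ((p : ENNReal) ^ k)⁻¹)
    (M : Submodule ℤ_[p] (Fin n → ℤ_[p]))
    (R : Fin n → Set ℤ_[p])
    (hRc : ∀ i, IsCompact (R i)) (hRo : ∀ i, IsOpen (R i))
    (hsum : ∑ i, μ (R i) < 1)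
    (hM : ∃ x ∈ M, ∀ i, IsUnit (x i)) :
    ∀ a : Fin n → ℤ_[p], ∃ y : Fin n → ℤ_[p], y - a ∈ M ∧ ∀ i, y i ∉ R i :=
  coset_avoids_sieve_general hμ M hRo (by rwa [tsum_fintype]) hM
end

section
/- Let G and H be groups (written additively), let 𝕏 ⊆ 𝒫(G) and 𝕐 ⊆ 𝒫(H) be shift spaces over G and H respectively, let A : G → H be a group homomorphism and f : 𝕏 → 𝕐 a continuous map satisfying f(g + X) = A(g) + f(X) for all g ∈ G and X ∈ 𝕏. Then there exist a finite subset M ⊆ G and a family 𝒯 of subsets of M such that for all x ∈ G and X ∈ 𝕏: A(x) ∈ f(X) if and only if X ∩ (x + M) = x + T for some T ∈ 𝒯. -/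
/-- The product (Cantor) topology on the power set `𝒫(G) ≅ {0,1}^G`, induced by the
characteristic-function embedding into `G → Bool` (with `Bool` discrete and the product
topology). -/
noncomputable instance powerSetTopology (G : Type*) : TopologicalSpace (Set G) :=
  TopologicalSpace.induced
    (fun (S : Set G) (g : G) => @decide (g ∈ S) (Classical.propDecidable _))
    inferInstance

/-!
The condition `0 ∈ f X` cuts out a clopen subset of the compact space `𝕏`. A compact set inside an
open set stays inside it when its points are altered outside a suitable finite window, so a clopen
set is decided by the trace of `X` on such a window. Translating by `-x` turns the criterion for
`0 ∈ f (-x + X)` into one for `A x ∈ f X`.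
-/

open Set Topology

section PowerSet

variable {α : Type*}

/-- The identification of `𝒫(α)` with the Cantor space `α → Bool` by characteristic functions,
through which facts about products of discrete spaces are transferred to `Set α`. -/
noncomputable def powerSetHomeomorph (α : Type*) : Set α ≃ₜ (α → Bool) :=
  Equiv.toHomeomorphOfIsInducing
    { toFun := fun S a => @decide (a ∈ S) (Classical.propDecidable _)
      invFun := fun b => {a | b a = true}
      left_inv := fun S => by simp
      right_inv := fun b => by simp }
    ⟨rfl⟩

theorem powerSetHomeomorph_apply_eq_true_iff {S : Set α} {a : α} :
    powerSetHomeomorph α S a = true ↔ a ∈ S :=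
  @decide_eq_true_iff _ (Classical.propDecidable _)

instance compactSpace_powerSet : CompactSpace (Set α) :=
  (powerSetHomeomorph α).symm.compactSpace

theorem isClopen_setOf_mem (a : α) : IsClopen {S : Set α | a ∈ S} := by
  simp only [← powerSetHomeomorph_apply_eq_true_iff]
  exact (isClopen_discrete {true}).preimage
    ((continuous_apply a).comp (powerSetHomeomorph α).continuous)

theorem inter_eq_inter_iff_forall_mem {S T M : Set α} :
    S ∩ M = T ∩ M ↔ ∀ a ∈ M, (a ∈ S ↔ a ∈ T) := by
  simp only [Set.ext_iff, mem_inter_iff, and_congr_left_iff]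

theorem inter_eq_inter_of_subset {S T M N : Set α} (h : S ∩ N = T ∩ N) (hMN : M ⊆ N) :
    S ∩ M = T ∩ M := by
  rw [inter_eq_inter_iff_forall_mem] at h ⊢
  exact fun a ha => h a (hMN ha)

theorem powerSetHomeomorph_eqOn_iff {S T M : Set α} :
    EqOn (powerSetHomeomorph α S) (powerSetHomeomorph α T) M ↔ S ∩ M = T ∩ M := by
  rw [inter_eq_inter_iff_forall_mem]
  refine forall₂_congr fun a _ => ?_
  rw [Bool.eq_iff_iff, powerSetHomeomorph_apply_eq_true_iff, powerSetHomeomorph_apply_eq_true_iff]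

theorem hasBasis_nhds_inter_eq (X : Set α) :
    (𝓝 X).HasBasis Set.Finite (fun M => {Y | Y ∩ M = X ∩ M}) := by
  simp only [(powerSetHomeomorph α).nhds_eq_comap, nhds_pi, nhds_discrete,
    ← powerSetHomeomorph_eqOn_iff]
  exact (Filter.hasBasis_pi_pure (powerSetHomeomorph α X)).comap (powerSetHomeomorph α)

theorem exists_finite_forall_inter_eq_imp_mem {K U : Set (Set α)} (hK : IsCompact K)
    (hU : IsOpen U) (hKU : K ⊆ U) :
    ∃ M : Set α, M.Finite ∧ ∀ X ∈ K, ∀ Y : Set α, Y ∩ M = X ∩ M → Y ∈ U := by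
  refine hK.induction_on ⟨∅, finite_empty, fun _ => False.elim⟩ ?mono ?union ?nhds
  case mono =>
    rintro s t hst ⟨M, hMfin, hM⟩
    exact ⟨M, hMfin, fun X hX => hM X (hst hX)⟩
  case union =>
    rintro s t ⟨M, hMfin, hM⟩ ⟨N, hNfin, hN⟩
    refine ⟨M ∪ N, hMfin.union hNfin, ?_⟩
    rintro X (hXs | hXt) Y hYX
    · exact hM X hXs Y (inter_eq_inter_of_subset hYX subset_union_left)
    · exact hN X hXt Y (inter_eq_inter_of_subset hYX subset_union_right)
  case nhds =>
    intro X hX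
    obtain ⟨M, hMfin, hM⟩ := (hasBasis_nhds_inter_eq X).mem_iff.1 (hU.mem_nhds (hKU hX))
    have hnhds : {Y | Y ∩ M = X ∩ M} ∈ 𝓝 X := (hasBasis_nhds_inter_eq X).mem_of_mem hMfin
    exact ⟨_, mem_nhdsWithin_of_mem_nhds hnhds, M, hMfin, fun Z hZ Y hYZ => hM (hYZ.trans hZ)⟩

theorem exists_window_of_isClopen {𝕏 : Set (Set α)} (h𝕏 : IsClosed 𝕏) {C : Set 𝕏}
    (hC : IsClopen C) :
    ∃ (M : Finset α) (𝒯 : Set (Set α)), (∀ T ∈ 𝒯, T ⊆ M) ∧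
      ∀ X : 𝕏, X ∈ C ↔ (X : Set α) ∩ M ∈ 𝒯 := by
  have : CompactSpace 𝕏 := isCompact_iff_compactSpace.1 h𝕏.isCompact
  obtain ⟨U, hU, rfl⟩ := isOpen_induced_iff.1 hC.isOpen
  obtain ⟨M, hMfin, hM⟩ := exists_finite_forall_inter_eq_imp_mem
    (hC.isClosed.isCompact.image continuous_subtype_val) hU (image_preimage_subset _ _)
  lift M to Finset α using hMfin
  refine ⟨M, (fun X : 𝕏 => (X : Set α) ∩ M) '' (Subtype.val ⁻¹' U), ?_, fun X => ⟨?_, ?_⟩⟩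
  · rintro _ ⟨X, -, rfl⟩
    exact inter_subset_right
  · exact mem_image_of_mem _
  · rintro ⟨Z, hZ, hZX⟩
    exact hM Z (mem_image_of_mem _ hZ) X hZX.symm

end PowerSet

theorem inter_image_add_left_eq_iff {G : Type*} [AddGroup G] {x : G} {X M T : Set G} :
    X ∩ (x + ·) '' M = (x + ·) '' T ↔ (-x + ·) '' X ∩ M = T := by
  have hX : X = (x + ·) '' ((-x + ·) '' X) := by simp [← preimage_comp, Function.comp_def]
  conv_lhs => rw [hX, ← image_inter (add_right_injective x)]
  exact (add_right_injective x).image_injective.eq_iff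

theorem zero_mem_image_map_neg_add_iff {G H : Type*} [AddGroup G] [AddMonoid H] (A : G →+ H)
    (x : G) (S : Set H) : 0 ∈ (A (-x) + ·) '' S ↔ A x ∈ S := by
  have neg_add : A (-x) + A x = 0 := by rw [← map_add, neg_add_cancel, map_zero]
  have add_neg : A x + A (-x) = 0 := by rw [← map_add, add_neg_cancel, map_zero]
  constructor
  · rintro ⟨s, hs, h0⟩
    rwa [left_neg_eq_right_neg add_neg h0]
  · exact fun h => ⟨A x, h, neg_add⟩

theorem curtis_hedlund_lyndon_general {G H : Type*} [AddGroup G] [AddMonoid H]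
    (𝕏 : Set (Set G)) (h𝕏c : IsClosed 𝕏) (h𝕏i : ∀ g : G, ∀ X ∈ 𝕏, (g + ·) '' X ∈ 𝕏)
    (A : G →+ H) (f : 𝕏 → Set H) (hf : Continuous f)
    (hint : ∀ (g : G) (X Y : 𝕏), (Y : Set G) = (g + ·) '' (X : Set G) →
      f Y = (A g + ·) '' f X) :
    ∃ (M : Finset G) (𝒯 : Set (Set G)), (∀ T ∈ 𝒯, T ⊆ ↑M) ∧
      ∀ (x : G) (X : 𝕏),
        A x ∈ f X ↔ ∃ T ∈ 𝒯, (X : Set G) ∩ ((x + ·) '' ↑M) = (x + ·) '' T := by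
  obtain ⟨M, 𝒯, h𝒯, hM⟩ := exists_window_of_isClopen h𝕏c ((isClopen_setOf_mem 0).preimage hf)
  refine ⟨M, 𝒯, h𝒯, fun x X => ?_⟩
  let Y : 𝕏 := ⟨(-x + ·) '' (X : Set G), h𝕏i (-x) X X.2⟩
  calc A x ∈ f X ↔ 0 ∈ f Y := by
        rw [hint (-x) X Y rfl, zero_mem_image_map_neg_add_iff]
    _ ↔ (Y : Set G) ∩ M ∈ 𝒯 := hM Y
    _ ↔ ∃ T ∈ 𝒯, (X : Set G) ∩ ((x + ·) '' ↑M) = (x + ·) '' T := by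
        simp only [inter_image_add_left_eq_iff, exists_eq_right', Y]

/-- Curtis–Hedlund–Lyndon theorem for morphisms of shift spaces: any morphism
`(A, f) : (G, 𝕏) → (H, 𝕐)` of shift spaces is given by a block code: there are a
finite window `M ⊆ G` and a family `𝒯` of patterns `T ⊆ M` such that
`A x ∈ f X ↔ X ∩ (x + M) = x + T` for some `T ∈ 𝒯`. -/
theorem curtis_hedlund_lyndon {G H : Type*} [AddGroup G] [AddGroup H]
    (𝕏 : Set (Set G)) (𝕐 : Set (Set H))
    (h𝕏c : IsClosed 𝕏) (h𝕏i : ∀ g : G, ∀ X ∈ 𝕏, (g + ·) '' X ∈ 𝕏)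
    (h𝕐c : IsClosed 𝕐) (h𝕐i : ∀ h : H, ∀ Y ∈ 𝕐, (h + ·) '' Y ∈ 𝕐)
    (A : G →+ H) (f : 𝕏 → 𝕐) (hf : Continuous f)
    (hint : ∀ (g : G) (X Y : 𝕏), (Y : Set G) = (g + ·) '' (X : Set G) →
      ((f Y : Set H)) = (A g + ·) '' ((f X : Set H))) :
    ∃ (M : Finset G) (𝒯 : Set (Set G)), (∀ T ∈ 𝒯, T ⊆ ↑M) ∧
      ∀ (x : G) (X : 𝕏),
        A x ∈ (f X : Set H) ↔
          ∃ T ∈ 𝒯, (X : Set G) ∩ ((x + ·) '' ↑M) = (x + ·) '' T :=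
  curtis_hedlund_lyndon_general 𝕏 h𝕏c h𝕏i A (fun X => f X) (continuous_subtype_val.comp hf) hint
end

section
/- Let K be a number field and k ≥ 1 an integer. Every homeomorphism f : 𝕏_{K,k} → 𝕏_{K,k} satisfying f(t + X) = t + f(X) for all t ∈ 𝓞_K and X ∈ 𝕏_{K,k} is a translation: there exists s ∈ 𝓞_K such that f(X) = s + X for all X ∈ 𝕏_{K,k}. -/
/-!
Let `a ∈ f {0}`. The heart of the proof is the inclusion `f X ⊆ a + X`, first for finite `X`.
Suppose `y ∈ f X` but `c = y - a ∉ X`. By continuity, whether a point lies in `f X'` depends only on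
`X'` inside a finite window. Enlarge `X` by a set `Z` so sparse that `y` stays in `f (X ∪ Z)` and
that, near each `z ∈ Z`, the set `X ∪ Z` looks like `{z}`; by equivariance `z + a ∈ f (X ∪ Z)`.
Hence `{c} ∪ Z ⊆ f (X ∪ Z) - a`. But for a prime `𝔭` containing no `x - c` with `x ∈ X`, the Chinese
remainder theorem provides such a `Z` meeting every residue class modulo `𝔭 ^ k` except that of `c`,
so `{c} ∪ Z` is not admissible, a contradiction. Continuity extends the inclusion to infinite `X`.

Applied to `f⁻¹` and `b ∈ f⁻¹ {0}`, the same argument gives `X ⊆ b + f X ⊆ b + a + X`. Taking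
`X = {0}` shows `b = -a`, so `f X = a + X`.
-/

open NumberField

/-- The shift space `𝕏_{K,k}` of admissible sets: subsets of `𝓞 K` missing at least
one residue class modulo `𝔭^k` for every nonzero prime ideal `𝔭`. -/
def admissibleSets (K : Type*) [Field K] [NumberField K] (k : ℕ) : Set (Set (𝓞 K)) :=
  {X | ∀ P : Ideal (𝓞 K), P.IsPrime → P ≠ ⊥ → ∃ c : 𝓞 K, ∀ y ∈ X, y - c ∉ P ^ k}

open Set Topology
open scoped Pointwise

section PowerSetTopology

variable {α β : Type*}

theorem hasBasis_nhds_powerSet (S : Set α) :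
    (𝓝 S).HasBasis Set.Finite fun W ↦ {T | ∀ v ∈ W, v ∈ T ↔ v ∈ S} := by
  classical
  have hpure (b : Bool) : (𝓝 b).HasBasis (fun _ : Unit ↦ True) fun _ ↦ {b} := by
    simpa only [nhds_discrete] using Filter.hasBasis_pure b
  rw [nhds_induced, nhds_pi]
  refine ((Filter.hasBasis_pi fun v ↦ hpure _).comap _).to_hasBasis ?_ ?_
  · rintro ⟨W, i⟩ ⟨hW, -⟩
    exact ⟨W, hW, fun T hT v hv ↦ decide_eq_decide.mpr (hT v hv)⟩
  · exact fun W hW ↦ ⟨(W, fun _ ↦ ()), ⟨hW, fun _ _ ↦ trivial⟩,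
      fun T hT v hv ↦ decide_eq_decide.mp (hT v hv)⟩

theorem exists_finite_mem_iff_of_continuous {p : Set α → Prop} {g : Subtype p → Set β}
    (hg : Continuous g) (X : Subtype p) (w : β) :
    ∃ W : Set α, W.Finite ∧
      ∀ Y : Subtype p, (∀ v ∈ W, v ∈ Y.1 ↔ v ∈ X.1) → (w ∈ g Y ↔ w ∈ g X) := by
  have hnhds : {T | ∀ v ∈ ({w} : Set β), v ∈ T ↔ v ∈ g X} ∈ 𝓝 (g X) :=
    (hasBasis_nhds_powerSet (g X)).mem_of_mem (finite_singleton w)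
  have hbasis := (hasBasis_nhds_powerSet X.1).comap (Subtype.val : Subtype p → Set α)
  rw [← nhds_subtype_eq_comap (h := X.2)] at hbasis
  obtain ⟨W, hW, hWsub⟩ := hbasis.mem_iff.mp (hg.continuousAt hnhds)
  exact ⟨W, hW, fun Y hY ↦ hWsub hY w rfl⟩

end PowerSetTopology

section HereditaryShift

variable {G : Type*} [AddCommGroup G]

/-- A family `𝒳` of subsets of `G` has *sparse obstructions* if every point `c` outside a finite
member `X` can be forbidden by enlarging `X`: there is `X ∪ Z ∈ 𝒳` such that no member of `𝒳`
contains both `c` and `Z`. The obstruction `Z` and its nonzero differences can be chosen outside any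
prescribed finite set `V`. -/
def HasSparseObstructions (𝒳 : Set (Set G)) : Prop :=
  ∀ ⦃X⦄, X ∈ 𝒳 → X.Finite → ∀ c ∉ X, ∀ V : Set G, V.Finite →
    ∃ Z : Set G, X ∪ Z ∈ 𝒳 ∧ insert c Z ∉ 𝒳 ∧ Disjoint Z V ∧ Z.Pairwise fun z z' ↦ z' - z ∉ V

theorem eq_empty_or_eq_univ_of_forall_vadd_eq {S : Set G} (hS : ∀ t : G, t +ᵥ S = S) :
    S = ∅ ∨ S = univ := by
  refine S.eq_empty_or_nonempty.imp_right fun ⟨x, hx⟩ ↦ eq_univ_of_forall fun y ↦ ?_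
  rw [← hS (y - x)]
  exact ⟨x, hx, sub_add_cancel y x⟩

theorem mem_neg_vadd_union_iff {X Z W : Set G} {z v : G} (hz : z ∈ Z) (hZ : Disjoint Z (X - W))
    (hsep : Z.Pairwise fun z z' ↦ z' - z ∉ W) (hv : v ∈ W) :
    v ∈ -z +ᵥ (X ∪ Z) ↔ v ∈ ({0} : Set G) := by
  rw [mem_vadd_set_iff_neg_vadd_mem, neg_neg, vadd_eq_add, mem_singleton_iff]
  refine ⟨?_, by rintro rfl; simpa using Or.inr hz⟩
  rintro (hX | hZ')
  · exact (disjoint_left.mp hZ hz ⟨z + v, hX, v, hv, add_sub_cancel_right z v⟩).elim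
  · by_contra hv0
    exact hsep hz hZ' (by simpa using hv0) (by simpa using hv)

variable {𝒳 : SubAddAction G (Set G)} {f : 𝒳 → 𝒳}

theorem nonempty_apply_of_equivariant (hempty : ∅ ∈ 𝒳) (huniv : univ ∉ 𝒳)
    (hinj : Function.Injective f) (hf : ∀ (t : G) (X : 𝒳), f (t +ᵥ X) = t +ᵥ f X)
    {X : 𝒳} (hX : (X : Set G).Nonempty) : (f X : Set G).Nonempty := by
  let E : 𝒳 := ⟨∅, hempty⟩
  have hinv (t : G) : t +ᵥ (f E : Set G) = f E := by
    rw [← SubAddAction.val_vadd, ← hf, show t +ᵥ E = E from Subtype.ext vadd_set_empty]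
  have hE : (f E : Set G) = ∅ :=
    (eq_empty_or_eq_univ_of_forall_vadd_eq hinv).resolve_right fun h ↦ huniv (h ▸ (f E).2)
  by_contra! h
  have hXE : X = E := hinj (Subtype.ext (h.trans hE.symm))
  exact hX.ne_empty (congrArg Subtype.val hXE)

theorem apply_subset_vadd_of_finite (hlower : IsLowerSet (𝒳 : Set (Set G)))
    (hobs : HasSparseObstructions (𝒳 : Set (Set G))) (hcont : Continuous f)
    (hf : ∀ (t : G) (X : 𝒳), f (t +ᵥ X) = t +ᵥ f X) (hzero : {0} ∈ 𝒳)
    {a : G} (ha : a ∈ (f ⟨{0}, hzero⟩ : Set G)) {X : 𝒳} (hX : (X : Set G).Finite) :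
    (f X : Set G) ⊆ a +ᵥ (X : Set G) := by
  intro y hy
  rw [mem_vadd_set_iff_neg_vadd_mem]
  by_contra hyX
  obtain ⟨V, hV, hfV⟩ := exists_finite_mem_iff_of_continuous
    (continuous_subtype_val.comp hcont) X y
  obtain ⟨W, hW, hfW⟩ := exists_finite_mem_iff_of_continuous
    (continuous_subtype_val.comp hcont) ⟨{0}, hzero⟩ a
  obtain ⟨Z, hXZ, hcZ, hdisj, hsep⟩ := hobs X.2 hX _ hyX (V ∪ ((X : Set G) - W) ∪ W)
    ((hV.union (hX.sub hW)).union hW)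
  simp only [disjoint_union_right] at hdisj
  obtain ⟨⟨hZV, hZXW⟩, -⟩ := hdisj
  let X' : 𝒳 := ⟨X ∪ Z, hXZ⟩
  have hyX' : y ∈ (f X' : Set G) := by
    refine (hfV X' fun v hv ↦ ?_).mpr hy
    exact or_iff_left (disjoint_right.mp hZV hv)
  have hzX' : ∀ z ∈ Z, z + a ∈ (f X' : Set G) := by
    intro z hz
    have haz : a ∈ (f (-z +ᵥ X') : Set G) := (hfW _ fun v hv ↦
      mem_neg_vadd_union_iff hz hZXW (hsep.mono' fun _ _ h hW ↦ h (Or.inr hW)) hv).mpr ha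
    rwa [hf, SubAddAction.val_vadd, mem_vadd_set_iff_neg_vadd_mem, neg_neg] at haz
  refine hcZ (hlower ?_ (𝒳.vadd_mem (-a) (f X').2))
  rw [subset_vadd_set_iff, neg_neg]
  rintro _ ⟨x, rfl | hx, rfl⟩
  · simpa using hyX'
  · simpa [add_comm] using hzX' x hx

theorem apply_subset_vadd (hlower : IsLowerSet (𝒳 : Set (Set G)))
    (hobs : HasSparseObstructions (𝒳 : Set (Set G))) (hcont : Continuous f)
    (hf : ∀ (t : G) (X : 𝒳), f (t +ᵥ X) = t +ᵥ f X) (hzero : {0} ∈ 𝒳)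
    {a : G} (ha : a ∈ (f ⟨{0}, hzero⟩ : Set G)) (X : 𝒳) :
    (f X : Set G) ⊆ a +ᵥ (X : Set G) := by
  intro y hy
  obtain ⟨W, hW, hfW⟩ := exists_finite_mem_iff_of_continuous
    (continuous_subtype_val.comp hcont) X y
  let Y : 𝒳 := ⟨X ∩ W, hlower inter_subset_left X.2⟩
  have hyY : y ∈ (f Y : Set G) := (hfW Y fun v hv ↦ and_iff_left hv).mpr hy
  exact vadd_set_mono inter_subset_left <|
    apply_subset_vadd_of_finite hlower hobs hcont hf hzero ha (hW.inter_of_right _) hyY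

theorem exists_forall_eq_vadd_of_hasSparseObstructions (hlower : IsLowerSet (𝒳 : Set (Set G)))
    (hobs : HasSparseObstructions (𝒳 : Set (Set G))) (hzero : {0} ∈ 𝒳) (f : 𝒳 ≃ₜ 𝒳)
    (hf : ∀ (t : G) (X : 𝒳), f (t +ᵥ X) = t +ᵥ f X) :
    ∃ s : G, ∀ X : 𝒳, f X = s +ᵥ X := by
  let O : 𝒳 := ⟨{0}, hzero⟩
  have hempty : ∅ ∈ 𝒳 := hlower (empty_subset _) hzero
  have huniv : univ ∉ 𝒳 := by
    obtain ⟨Z, -, hZ, -⟩ := hobs hempty finite_empty 0 (notMem_empty 0) ∅ finite_empty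
    exact fun h ↦ hZ (hlower (subset_univ _) h)
  have hf_symm (t : G) (X : 𝒳) : f.symm (t +ᵥ X) = t +ᵥ f.symm X := by
    rw [f.symm_apply_eq, hf, f.apply_symm_apply]
  obtain ⟨a, ha⟩ : (f O : Set G).Nonempty :=
    nonempty_apply_of_equivariant hempty huniv f.injective hf (singleton_nonempty 0)
  obtain ⟨b, hb⟩ : (f.symm O : Set G).Nonempty :=
    nonempty_apply_of_equivariant hempty huniv f.symm.injective hf_symm (singleton_nonempty 0)
  have hfa := apply_subset_vadd hlower hobs f.continuous hf hzero ha
  have hfb (X : 𝒳) : (X : Set G) ⊆ b +ᵥ (f X : Set G) := by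
    simpa using apply_subset_vadd hlower hobs f.symm.continuous hf_symm hzero hb (f X)
  have hba : b + a = 0 := by
    obtain ⟨_, ⟨_, rfl, rfl⟩, h⟩ := vadd_set_mono (hfa O) (hfb O rfl)
    simpa using h
  refine ⟨a, fun X ↦ Subtype.ext ((hfa X).antisymm ?_)⟩
  change a +ᵥ (X : Set G) ⊆ f X
  rw [vadd_set_subset_iff_subset_neg_vadd_set, neg_eq_of_add_eq_zero_left hba]
  exact hfb X

end HereditaryShift

section DomainWithFiniteQuotients

open IsDedekindDomain

theorem exists_forall_sub_notMem_of_ncard_lt_cardQuot {R : Type*} [CommRing R] {I : Ideal R}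
    {Y : Set R} (hY : Y.Finite) (h : Y.ncard < I.cardQuot) : ∃ c, ∀ y ∈ Y, y - c ∉ I := by
  have hne : Ideal.Quotient.mk I '' Y ≠ univ := by
    intro huniv
    rw [Submodule.cardQuot_apply, ← ncard_univ, ← huniv] at h
    exact (ncard_image_le hY).not_gt h
  obtain ⟨r, hr⟩ := (ne_univ_iff_exists_notMem _).mp hne
  obtain ⟨c, rfl⟩ := Ideal.Quotient.mk_surjective r
  exact ⟨c, fun y hy hyc ↦ hr ⟨y, hy, Ideal.Quotient.eq.mpr hyc⟩⟩

theorem exists_finite_representatives_sub_notMem {R : Type*} [CommRing R]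
    [Ring.HasFiniteQuotients R] {I : Ideal R} (hI : I ≠ ⊥) (c : R) :
    ∃ T : Set R, T.Finite ∧ (∀ t ∈ T, t - c ∉ I) ∧ ∀ d, d - c ∉ I → ∃ t ∈ T, t - d ∈ I := by
  have := Ring.HasFiniteQuotients.finiteQuotient hI
  refine ⟨Quotient.out '' {Ideal.Quotient.mk I c}ᶜ, toFinite _, ?_, fun d hd ↦ ?_⟩
  · rintro _ ⟨r, hr, rfl⟩
    rwa [← Ideal.Quotient.eq, Ideal.Quotient.mk_out]
  · refine ⟨_, mem_image_of_mem _ fun h ↦ hd (Ideal.Quotient.eq.mp h), ?_⟩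
    rw [← Ideal.Quotient.eq, Ideal.Quotient.mk_out]

theorem infinite_of_infinite_heightOneSpectrum (R : Type*) [CommRing R]
    [Infinite (HeightOneSpectrum R)] : Infinite R := by
  by_contra h
  have := not_infinite_iff_finite.mp h
  have : Finite (HeightOneSpectrum R) := .of_injective _ HeightOneSpectrum.asIdeal_injective
  exact not_finite (HeightOneSpectrum R)

theorem exists_heightOneSpectrum_forall_notMem {R : Type*} [CommRing R]
    [Ring.HasFiniteQuotients R] [Infinite (HeightOneSpectrum R)] {D : Set R} (hD : D.Finite)
    (h0 : 0 ∉ D) : ∃ v : HeightOneSpectrum R, ∀ d ∈ D, d ∉ v.asIdeal := by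
  have hfin : (⋃ d ∈ D, {v : HeightOneSpectrum R | d ∈ v.asIdeal}).Finite :=
    hD.biUnion fun d hd ↦ (Ring.HasFiniteQuotients.finite_setOfPred_mem d
      (ne_of_mem_of_not_mem hd h0)).preimage HeightOneSpectrum.asIdeal_injective.injOn
  obtain ⟨v, hv⟩ := hfin.exists_notMem
  exact ⟨v, by simpa using hv⟩

theorem infinite_heightOneSpectrum_of_isIntegral (A B : Type*) [CommRing A] [CommRing B]
    [Algebra A B] [Algebra.IsIntegral A B] [FaithfulSMul A B] [Infinite (HeightOneSpectrum A)] :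
    Infinite (HeightOneSpectrum B) := by
  have hover (v : HeightOneSpectrum A) : ∃ w : HeightOneSpectrum B, w.asIdeal.under A = v.asIdeal :=
    let ⟨P, _, _⟩ := (v.asIdeal.nonempty_primesOver (S := B)).some
    ⟨⟨P, ‹_›, Ideal.ne_bot_of_liesOver_of_ne_bot v.ne_bot P⟩, (P.over_def v.asIdeal).symm⟩
  choose w hw using hover
  exact Infinite.of_injective w fun v v' h ↦ HeightOneSpectrum.ext (by rw [← hw v, h, hw v'])

theorem infinite_heightOneSpectrum_ringOfIntegers (K : Type*) [Field K] [NumberField K] :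
    Infinite (HeightOneSpectrum (𝓞 K)) :=
  have := (Rat.HeightOneSpectrum.primesEquiv (R := ℤ)).infinite_iff.mpr Nat.Primes.infinite
  infinite_heightOneSpectrum_of_isIntegral ℤ (𝓞 K)

variable (R : Type*) [CommRing R]

/-- The analogue over an arbitrary ring of `admissibleSets`, as a translation-invariant family. The
condition on primes is spelled out as there, so that both families agree definitionally. -/
def residueAvoidingSets (k : ℕ) : SubAddAction R (Set R) where
  carrier := {X | ∀ P : Ideal R, P.IsPrime → P ≠ ⊥ → ∃ c : R, ∀ y ∈ X, y - c ∉ P ^ k}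
  vadd_mem' t X hX P hP hP0 := by
    obtain ⟨c, hc⟩ := hX P hP hP0
    refine ⟨t + c, ?_⟩
    rintro _ ⟨y, hy, rfl⟩
    simpa using hc y hy

variable {R} {k : ℕ} {X Y V : Set R} {c t : R} {v : HeightOneSpectrum R}

theorem mem_residueAvoidingSets_iff : X ∈ residueAvoidingSets R k ↔
    ∀ v : HeightOneSpectrum R, ∃ c, ∀ y ∈ X, y - c ∉ v.asIdeal ^ k :=
  ⟨fun hX v ↦ hX v.asIdeal v.isPrime v.ne_bot, fun hX P hP hP0 ↦ hX ⟨P, hP, hP0⟩⟩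

theorem isLowerSet_residueAvoidingSets :
    IsLowerSet (residueAvoidingSets R k : Set (Set R)) :=
  fun _ _ hYX hX P hP hP0 ↦ (hX P hP hP0).imp fun _ hc y hy ↦ hc y (hYX hy)

theorem one_notMem_heightOneSpectrum_pow (hk : k ≠ 0) (v : HeightOneSpectrum R) :
    (1 : R) ∉ v.asIdeal ^ k :=
  fun h ↦ v.isPrime.one_notMem (Ideal.pow_le_self hk h)

theorem singleton_mem_residueAvoidingSets (hk : k ≠ 0) (x : R) : {x} ∈ residueAvoidingSets R k := by
  refine mem_residueAvoidingSets_iff.mpr fun v ↦ ⟨x - 1, ?_⟩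
  rintro _ rfl
  simpa using one_notMem_heightOneSpectrum_pow hk v

variable [IsDomain R]

theorem infinite_of_ne_bot [Infinite R] {I : Ideal R} (hI : I ≠ ⊥) : (I : Set R).Infinite := by
  obtain ⟨d, hd, hd0⟩ := Submodule.exists_mem_ne_zero_of_ne_bot hI
  exact infinite_of_injective_forall_mem (mul_left_injective₀ hd0) fun r ↦ I.mul_mem_left r hd

variable [Ring.HasFiniteQuotients R]

theorem infinite_setOf_forall_sub_mem_pow [Infinite R] (k : ℕ) {B : Set (HeightOneSpectrum R)}
    (hB : B.Finite) (x : HeightOneSpectrum R → R) :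
    {z | ∀ w ∈ B, z - x w ∈ w.asIdeal ^ k}.Infinite := by
  have := hB.fintype
  have hcoprime : Pairwise (Function.onFun IsCoprime fun w : B ↦ w.1.asIdeal ^ k) := by
    intro w w' hww'
    have := Ring.HasFiniteQuotients.maximalOfPrime w.1.ne_bot
    have := Ring.HasFiniteQuotients.maximalOfPrime w'.1.ne_bot
    exact (Ideal.isCoprime_of_isMaximal fun h ↦
      hww' (Subtype.ext (HeightOneSpectrum.ext h))).pow
  obtain ⟨z, hz⟩ := Ideal.exists_forall_sub_mem_ideal hcoprime fun w ↦ x w.1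
  have hprod : ∏ w : B, w.1.asIdeal ^ k ≠ ⊥ :=
    Finset.prod_ne_zero_iff.mpr fun w _ ↦ pow_ne_zero k w.1.ne_bot
  refine ((infinite_of_ne_bot hprod).image (add_right_injective z).injOn).mono ?_
  rintro _ ⟨d, hd, rfl⟩ w hw
  rw [add_sub_right_comm]
  exact add_mem (hz ⟨w, hw⟩) (Ideal.le_of_dvd
    (Finset.dvd_prod_of_mem _ (Finset.mem_univ ⟨w, hw⟩)) hd)

theorem exists_insert_mem_residueAvoidingSets [Infinite R] (hk : k ≠ 0)
    (hY : Y ∈ residueAvoidingSets R k) (hYfin : Y.Finite) (hYc : ∀ y ∈ Y, y - c ∉ v.asIdeal ^ k)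
    (ht : t - c ∉ v.asIdeal ^ k) (hV : V.Finite) :
    ∃ z ∉ V, z - t ∈ v.asIdeal ^ k ∧ insert z Y ∈ residueAvoidingSets R k := by
  have hclass (w : HeightOneSpectrum R) : ∃ c' t' : R, (w = v → t' = t) ∧
      (∀ y ∈ Y, y - c' ∉ w.asIdeal ^ k) ∧ t' - c' ∉ w.asIdeal ^ k := by
    by_cases hwv : w = v
    · exact ⟨c, t, fun _ ↦ rfl, hwv ▸ hYc, hwv ▸ ht⟩
    · obtain ⟨c', hc'⟩ := mem_residueAvoidingSets_iff.mp hY w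
      exact ⟨c', c' + 1, fun h ↦ (hwv h).elim, hc',
        by simpa using one_notMem_heightOneSpectrum_pow hk w⟩
  choose c' t' ht' hYc' htc' using hclass
  have hB : (insert v {w : HeightOneSpectrum R | w.asIdeal.cardQuot ≤ Y.ncard + 1}).Finite :=
    (Ring.HasFiniteQuotients.finite_cardQuot_heightOneSpectrum_le _).insert v
  obtain ⟨z, hz, hzV⟩ := (infinite_setOf_forall_sub_mem_pow k hB t').exists_notMem_finite hV
  refine ⟨z, hzV, ht' v rfl ▸ hz v (mem_insert v _), mem_residueAvoidingSets_iff.mpr fun w ↦ ?_⟩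
  -- A prime of index greater than `#Y + 1` always misses a class, so only finitely many primes need
  -- control by the Chinese remainder theorem.
  by_cases hw : w.asIdeal.cardQuot ≤ Y.ncard + 1
  · refine ⟨c' w, forall_mem_insert.mpr ⟨fun hzc ↦ htc' w ?_, hYc' w⟩⟩
    simpa using sub_mem hzc (hz w (mem_insert_of_mem v hw))
  · obtain ⟨d, hd⟩ := exists_forall_sub_notMem_of_ncard_lt_cardQuot (hYfin.insert z)
      ((ncard_insert_le z Y).trans_lt (not_le.mp hw))
    exact ⟨d, fun y hy hyd ↦ hd y hy (Ideal.pow_le_self hk hyd)⟩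

theorem exists_sparse_union_mem_residueAvoidingSets [Infinite R] (hk : k ≠ 0)
    (hX : X ∈ residueAvoidingSets R k) (hXfin : X.Finite) (hXc : ∀ x ∈ X, x - c ∉ v.asIdeal ^ k)
    (hV : V.Finite) {T : Set R} (hT : T.Finite) (hTc : ∀ t ∈ T, t - c ∉ v.asIdeal ^ k) :
    ∃ Z : Set R, Z.Finite ∧ X ∪ Z ∈ residueAvoidingSets R k ∧ (∀ z ∈ Z, z - c ∉ v.asIdeal ^ k) ∧
      (∀ t ∈ T, ∃ z ∈ Z, z - t ∈ v.asIdeal ^ k) ∧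
      Disjoint Z V ∧ Z.Pairwise fun z z' ↦ z' - z ∉ V := by
  induction T, hT using Set.Finite.induction_on with
  | empty => exact ⟨∅, by simpa using hX⟩
  | @insert t T _ _ ih =>
    obtain ⟨htc, hTc⟩ := forall_mem_insert.mp hTc
    obtain ⟨Z, hZfin, hXZ, hZc, hTZ, hZV, hsep⟩ := ih hTc
    obtain ⟨z, hz, hzt, hzXZ⟩ := exists_insert_mem_residueAvoidingSets hk hXZ (hXfin.union hZfin)
      (by simpa only [mem_union, or_imp, forall_and] using ⟨hXc, hZc⟩) htc
      ((hV.union (hZfin.sub hV)).union (hZfin.add hV))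
    simp only [mem_union, not_or] at hz
    obtain ⟨⟨hzV, hzsub⟩, hzadd⟩ := hz
    refine ⟨insert z Z, hZfin.insert z, by rwa [union_insert], forall_mem_insert.mpr ⟨?_, hZc⟩,
      forall_mem_insert.mpr ⟨⟨z, mem_insert z Z, hzt⟩, fun s hs ↦ ?_⟩,
      disjoint_insert_left.mpr ⟨hzV, hZV⟩, hsep.insert fun y hy _ ↦ ⟨?_, ?_⟩⟩
    · exact fun hzc ↦ htc (by simpa using sub_mem hzc hzt)
    · obtain ⟨y, hy, hys⟩ := hTZ s hs
      exact ⟨y, mem_insert_of_mem z hy, hys⟩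
    · exact fun h ↦ hzsub ⟨y, hy, y - z, h, sub_sub_cancel y z⟩
    · exact fun h ↦ hzadd ⟨y, hy, z - y, h, add_sub_cancel y z⟩

variable [Infinite (HeightOneSpectrum R)]

theorem hasSparseObstructions_residueAvoidingSets (hk : k ≠ 0) :
    HasSparseObstructions (residueAvoidingSets R k : Set (Set R)) := by
  intro X hX hXfin c hc V hV
  have := infinite_of_infinite_heightOneSpectrum R
  obtain ⟨v, hv⟩ := exists_heightOneSpectrum_forall_notMem (hXfin.image (· - c))
    (by simpa [sub_eq_zero] using hc)
  have hXc : ∀ x ∈ X, x - c ∉ v.asIdeal ^ k :=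
    fun x hx h ↦ hv _ (mem_image_of_mem _ hx) (Ideal.pow_le_self hk h)
  obtain ⟨T, hT, hTc, hTrep⟩ :=
    exists_finite_representatives_sub_notMem (pow_ne_zero k v.ne_bot) c
  obtain ⟨Z, -, hXZ, -, hTZ, hZV, hsep⟩ :=
    exists_sparse_union_mem_residueAvoidingSets hk hX hXfin hXc hV hT hTc
  refine ⟨Z, hXZ, fun hcZ ↦ ?_, hZV, hsep⟩
  obtain ⟨d, hd⟩ := mem_residueAvoidingSets_iff.mp hcZ v
  obtain ⟨t, ht, htd⟩ := hTrep d fun hdc ↦ hd c (mem_insert c Z) (by simpa using neg_mem hdc)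
  obtain ⟨z, hz, hzt⟩ := hTZ t ht
  exact hd z (mem_insert_of_mem c hz) (by simpa using add_mem hzt htd)

theorem symmetries_are_translations_general (hk : k ≠ 0)
    (f : residueAvoidingSets R k ≃ₜ residueAvoidingSets R k)
    (hf : ∀ (t : R) (X : residueAvoidingSets R k), f (t +ᵥ X) = t +ᵥ f X) :
    ∃ s : R, ∀ X : residueAvoidingSets R k, f X = s +ᵥ X :=
  exists_forall_eq_vadd_of_hasSparseObstructions isLowerSet_residueAvoidingSets
    (hasSparseObstructions_residueAvoidingSets hk) (singleton_mem_residueAvoidingSets hk 0) f hf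

end DomainWithFiniteQuotients

/-- Every symmetry of the shift space `𝔻_{K,k}` (a self-homeomorphism of `𝕏_{K,k}`
commuting with the translation action of `𝓞 K`) is itself a translation. -/
theorem symmetries_are_translations {K : Type*} [Field K] [NumberField K]
    (k : ℕ) (hk : 1 ≤ k)
    (f : ↥(admissibleSets K k) ≃ₜ ↥(admissibleSets K k))
    (hf : ∀ (t : 𝓞 K) (X Y : ↥(admissibleSets K k)),
      (Y : Set (𝓞 K)) = (t + ·) '' (X : Set (𝓞 K)) →
      ((f Y : Set (𝓞 K))) = (t + ·) '' ((f X : Set (𝓞 K)))) :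
    ∃ s : 𝓞 K, ∀ X : ↥(admissibleSets K k),
      ((f X : Set (𝓞 K))) = (s + ·) '' (X : Set (𝓞 K)) := by
  have := infinite_heightOneSpectrum_ringOfIntegers K
  obtain ⟨s, hs⟩ := symmetries_are_translations_general (R := 𝓞 K) (Nat.one_le_iff_ne_zero.mp hk) f
    fun t X ↦ Subtype.ext (hf t X _ rfl)
  exact ⟨s, fun X ↦ congrArg Subtype.val (hs X)⟩
end
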